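/- arXiv:2401.00982 — 3 statements merged into one kernel-verified Lean document; each statement's English description precedes it below -/
import Mathlib

section
/- For ℓ ∈ {5, 7, 11} and every nonnegative integer n, the partition number p(ℓn + δ_ℓ) is divisible by ℓ, where δ_ℓ is the unique integer with 0 < δ_ℓ < ℓ and 24·δ_ℓ ≡ 1 (mod ℓ). Concretely: p(5n+4) ≡ 0 (mod 5), p(7n+5) ≡ 0 (mod 7), p(11n+6) ≡ 0 (mod 11). -/
/-- The partition function: the number of partitions of `n`. -/
def partitionFn (n : ℕ) : ℕ := Fintype.card (Nat.Partition n)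

open PowerSeries Finset

/-- The Gaussian binomial coefficient. -/
def qBinom {R : Type*} [CommRing R] (q : R) : ℕ → ℕ → R
  | _, 0 => 1
  | 0, _ + 1 => 0
  | n + 1, k + 1 => qBinom q n k + q ^ (k + 1) * qBinom q n (k + 1)

section qBinom
variable {R : Type*} [CommRing R]

/-- The finite `q`-Pochhammer product `(1 - q) (1 - q ^ 2) ⋯ (1 - q ^ n)`. -/
def qPoch (q : R) (n : ℕ) : R := ∏ i ∈ range n, (1 - q ^ (i + 1))

lemma qPoch_succ (q : R) (n : ℕ) : qPoch q (n + 1) = qPoch q n * (1 - q ^ (n + 1)) :=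
  prod_range_succ _ _

@[simp] lemma qBinom_zero_right (q : R) (n : ℕ) : qBinom q n 0 = 1 := by
  cases n <;> rfl

lemma qBinom_succ_succ (q : R) (n k : ℕ) :
    qBinom q (n + 1) (k + 1) = qBinom q n k + q ^ (k + 1) * qBinom q n (k + 1) := rfl

lemma qBinom_eq_zero_of_lt (q : R) {n k : ℕ} (h : n < k) : qBinom q n k = 0 := by
  induction n generalizing k with
  | zero => obtain ⟨k, rfl⟩ := Nat.exists_eq_succ_of_ne_zero h.ne'; rfl
  | succ n ih =>
    obtain ⟨k, rfl⟩ := Nat.exists_eq_succ_of_ne_zero (Nat.ne_zero_of_lt h)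
    rw [Nat.succ_eq_add_one, qBinom_succ_succ, ih (by omega), ih (by omega)]
    simp

lemma map_qBinom {S : Type*} [CommRing S] (f : R →+* S) (q : R) (n k : ℕ) :
    f (qBinom q n k) = qBinom (f q) n k := by
  induction n generalizing k with
  | zero => cases k <;> simp [qBinom]
  | succ n ih => cases k <;> simp [qBinom, ih]

/-- The `q`-analogue of `Nat.add_choose_mul_factorial_mul_factorial`. -/
lemma qBinom_add_mul_qPoch_mul_qPoch (q : R) (k l : ℕ) :
    qBinom q (k + l) k * qPoch q k * qPoch q l = qPoch q (k + l) := by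
  induction h : k + l generalizing k l with
  | zero =>
    obtain ⟨rfl, rfl⟩ : k = 0 ∧ l = 0 := by omega
    simp [qPoch]
  | succ n ih =>
    rcases k with _ | k
    · obtain rfl : l = n + 1 := by omega
      simp [qPoch]
    rw [qBinom_succ_succ, qPoch_succ q n]
    have h₁ := ih k l (by omega)
    rcases l with _ | l
    · obtain rfl : k = n := by omega
      rw [qBinom_eq_zero_of_lt q (Nat.lt_succ_self k), qPoch_succ]
      linear_combination (1 - q ^ (k + 1)) * h₁
    · have h₂ := ih (k + 1) l (by omega)
      obtain rfl : n = k + l + 1 := by omega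
      rw [qPoch_succ q k, qPoch_succ q l] at *
      linear_combination (1 - q ^ (k + 1)) * h₁ + q ^ (k + 1) * (1 - q ^ (l + 1)) * h₂

/-- The `q`-binomial theorem. -/
lemma prod_add_mul_pow_eq_sum_qBinom (q x y : R) (n : ℕ) :
    ∏ k ∈ range n, (y + x * q ^ k) =
      ∑ k ∈ range (n + 1), q ^ k.choose 2 * qBinom q n k * x ^ k * y ^ (n - k) := by
  induction n generalizing x with
  | zero => simp
  | succ n ih =>
    have h := ih (x * q)
    rw [prod_range_succ']
    simp only [pow_succ' q, ← mul_assoc, h]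
    rw [sum_range_succ' _ (n + 1), pow_zero, mul_one, mul_add, sum_mul, sum_mul]
    simp only [qBinom_succ_succ, qBinom_zero_right]
    have e₁ : ∑ k ∈ range (n + 1), q ^ k.choose 2 * qBinom q n k * (x * q) ^ k * y ^ (n - k) * y =
        ∑ k ∈ range (n + 1), q ^ (k + 1).choose 2 * (q ^ (k + 1) * qBinom q n (k + 1)) * x ^ (k + 1)
          * y ^ (n - k) + y ^ (n + 1) := by
      rw [sum_range_succ', sum_range_succ, qBinom_eq_zero_of_lt q (Nat.lt_succ_self n)]
      simp only [mul_zero, zero_mul, add_zero]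
      congr 1
      · refine sum_congr rfl fun k hk ↦ ?_
        obtain ⟨l, rfl⟩ := Nat.exists_eq_add_of_lt (mem_range.mp hk)
        rw [show k + l + 1 - (k + 1) = l by omega, show k + l + 1 - k = l + 1 by omega]
        ring
      · simp [pow_succ]
    rw [e₁]
    have e₂ : ∀ k ∈ range (n + 1), q ^ k.choose 2 * qBinom q n k * (x * q) ^ k * y ^ (n - k) * x =
        q ^ (k + 1).choose 2 * qBinom q n k * x ^ (k + 1) * y ^ (n - k) := fun k _ ↦ by
      rw [Nat.choose_succ_succ' k 1, Nat.choose_one_right]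
      ring
    rw [sum_congr rfl e₂]
    simp only [mul_add, add_mul, sum_add_distrib, Nat.add_sub_add_right]
    simp
    ring

/-- Differentiating the `q`-binomial theorem at the zero `x = -q ^ n`, `y = q ^ n`. -/
lemma sum_neg_one_pow_mul_qBinom (q : R) (n : ℕ) :
    ∑ k ∈ range (2 * n + 2), (-1) ^ k * k * q ^ (k.choose 2 + n * (2 * n + 1 - k)) *
      qBinom q (2 * n + 1) k = (-1) ^ (n + 1) * q ^ (n + n.choose 2 + n ^ 2) * qPoch q n ^ 2 := by
  have h := prod_add_mul_pow_eq_sum_qBinom (Polynomial.C q) (-Polynomial.X) (Polynomial.C q ^ n)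
    (2 * n + 1)
  rw [show 2 * n + 1 = n + (n + 1) by ring, prod_range_add, prod_range_succ',
    show n + (n + 1) = 2 * n + 1 by ring, add_zero, ← mul_assoc] at h
  replace h := congrArg (fun p ↦ (Polynomial.derivative p).eval 1) h
  have hl (A : Polynomial R) : (Polynomial.derivative (A * (Polynomial.C q ^ n +
      -Polynomial.X * Polynomial.C q ^ n))).eval 1 = -(A.eval 1 * q ^ n) := by
    rw [← Polynomial.C_pow]
    simp
  have hr (a b : R) (k : ℕ) : (Polynomial.derivative (Polynomial.C a * (-Polynomial.X) ^ k *
      Polynomial.C b)).eval 1 = (-1) ^ k * k * a * b := by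
    rw [show (-Polynomial.X : Polynomial R) ^ k = Polynomial.C ((-1) ^ k) * Polynomial.X ^ k by
      simp [neg_pow (Polynomial.X : Polynomial R)]]
    simp only [Polynomial.derivative_mul, Polynomial.derivative_C, Polynomial.derivative_X_pow,
      Polynomial.eval_mul, Polynomial.eval_add, Polynomial.eval_C, Polynomial.eval_pow,
      Polynomial.eval_X, Polynomial.eval_zero]
    ring
  have h₁ : ∏ k ∈ range n, (q ^ n + -q ^ k) = (-1) ^ n * q ^ n.choose 2 * qPoch q n := by
    have e : ∏ _k ∈ range n, (-1 : R) = (-1) ^ n := by rw [prod_const, card_range]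
    rw [qPoch, ← prod_range_reflect (fun i ↦ 1 - q ^ (i + 1)), ← e, Nat.choose_two_right,
      ← sum_range_id, ← prod_pow_eq_pow_sum, ← prod_mul_distrib, ← prod_mul_distrib]
    refine prod_congr rfl fun k hk ↦ ?_
    obtain ⟨l, rfl⟩ := Nat.exists_eq_add_of_lt (mem_range.mp hk)
    rw [show k + l + 1 - 1 - k + 1 = l + 1 by omega]
    ring
  have h₂ : ∏ k ∈ range n, (q ^ n + -q ^ (n + (k + 1))) = q ^ n ^ 2 * qPoch q n := by
    have e : ∏ _k ∈ range n, q ^ n = q ^ n ^ 2 := by rw [prod_const, card_range, ← pow_mul, sq]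
    rw [qPoch, ← e, ← prod_mul_distrib]
    exact prod_congr rfl fun k hk ↦ by ring
  simp only [← map_qBinom, ← map_pow, Polynomial.derivative_sum, Polynomial.eval_finsetSum] at h
  simp only [← map_mul, hr] at h
  simp only [map_pow, hl] at h
  simp [Polynomial.eval_prod, h₁, h₂] at h
  calc _ = ∑ k ∈ range (2 * n + 1 + 1), (-1) ^ k * k *
        (q ^ k.choose 2 * qBinom q (2 * n + 1) k) * (q ^ n) ^ (2 * n + 1 - k) :=
        sum_congr rfl fun k _ ↦ by rw [pow_add, pow_mul]; ring
    _ = _ := by rw [← h]; ring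

lemma two_mul_succ_choose_two (k : ℕ) : 2 * (k + 1).choose 2 = (k + 1) * k := by
  rw [mul_comm, Nat.choose_two_right, Nat.div_mul_cancel (Nat.even_mul_pred_self _).two_dvd,
    Nat.add_sub_cancel]

lemma qBinom_symm_of_isUnit {q : R} (hq : ∀ n, IsUnit (qPoch q n)) (k l : ℕ) :
    qBinom q (k + l) k = qBinom q (k + l) l := by
  have h₁ := qBinom_add_mul_qPoch_mul_qPoch q k l
  have h₂ := qBinom_add_mul_qPoch_mul_qPoch q l k
  rw [add_comm l k] at h₂
  refine ((hq k).mul (hq l)).mul_left_injective ?_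
  dsimp only
  linear_combination h₁ - h₂

/-- A finite form of Jacobi's identity for the cube of the Euler function. -/
lemma qPoch_sq_eq_sum {q : R} (hq : IsLeftRegular q) (hq' : ∀ n, IsUnit (qPoch q n)) (n : ℕ) :
    qPoch q n ^ 2 = ∑ j ∈ range (n + 1), (-1) ^ j * (2 * j + 1) * q ^ (j + 1).choose 2 *
      qBinom q (2 * n + 1) (n - j) := by
  have h := sum_neg_one_pow_mul_qBinom q n
  rw [show 2 * n + 2 = (n + 1) + (n + 1) by ring, sum_range_add, ← sum_range_reflect,
    ← sum_add_distrib] at h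
  have e : n + n.choose 2 = (n + 1).choose 2 := by
    rw [Nat.choose_succ_succ' n 1, Nat.choose_one_right]
  refine hq.pow (n + n.choose 2 + n ^ 2) ?_
  dsimp only
  rw [← sub_eq_zero, ← ((isUnit_one (M := R)).neg.pow (n + 1)).mul_right_eq_zero, mul_sub,
    ← mul_assoc, ← h, mul_sum, mul_sum, ← sum_sub_distrib]
  refine sum_eq_zero fun j hj ↦ ?_
  obtain ⟨l, rfl⟩ := Nat.exists_eq_add_of_le (Nat.lt_succ_iff.mp (mem_range.mp hj))
  rw [show j + l + 1 - 1 - j = l by omega, show j + l - j = l by omega,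
    show 2 * (j + l) + 1 - l = j + l + 1 + j by omega,
    show 2 * (j + l) + 1 - (j + l + 1 + j) = l by omega,
    show 2 * (j + l) + 1 = l + (j + l + 1 + j) by omega, ← qBinom_symm_of_isUnit hq']
  have c₁ := two_mul_succ_choose_two j
  have c₂ := two_mul_succ_choose_two (j + l)
  have c₃ := two_mul_succ_choose_two (j + l + j)
  have c₄ := two_mul_succ_choose_two l
  have c₅ : (l + 1).choose 2 = l + l.choose 2 := by
    rw [Nat.choose_succ_succ' l 1, Nat.choose_one_right]
  rw [show j + l + j + 1 = j + l + 1 + j by ring] at c₃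
  have e₁ : l.choose 2 + (j + l) * (j + l + 1 + j) =
      j + l + (j + l).choose 2 + (j + l) ^ 2 + (j + 1).choose 2 := by
    rw [e]
    linarith
  have e₂ : (j + l + 1 + j).choose 2 + (j + l) * l =
      j + l + (j + l).choose 2 + (j + l) ^ 2 + (j + 1).choose 2 := by
    rw [e]
    linarith
  rw [e₁, e₂]
  push_cast
  rcases neg_one_pow_eq_or R j with s | s <;> simp only [pow_add, s] <;> ring
end qBinom

namespace PowerSeries
variable (R : Type*) [CommRing R]

/-- The generating series of the partition numbers. -/
noncomputable def partitionSeries : R⟦X⟧ := mk fun n ↦ (partitionFn n : R)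

open WithPiTopology in
lemma partitionSeries_mul_pentagonalSeries :
    partitionSeries R * pentagonalSeries R = 1 := by
  nontriviality R
  let _ : TopologicalSpace R := ⊥
  have : DiscreteTopology R := ⟨rfl⟩
  have h := (Nat.Partition.hasProd_powerSeriesMk_card_restricted R (fun _ ↦ True)).mul
    (hasProd_one_sub_X_pow R)
  have e : (mk fun n ↦ ((Nat.Partition.restricted n (fun _ ↦ True)).card : R)) =
      partitionSeries R := by
    simp [partitionSeries, partitionFn, Nat.Partition.restricted]
  simp only [e, if_true, pow_mul] at h
  conv at h in fun b ↦ _ =>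
    ext b
    rw [tsum_pow_mul_one_sub_of_constantCoeff_eq_zero (by simp)]
  exact h.unique hasProd_one

lemma X_pow_dvd_pentagonalSeries_sub_qPoch (n : ℕ) :
    X ^ (n + 1) ∣ pentagonalSeries R - qPoch X n := by
  rw [X_pow_dvd_iff]
  intro m hm
  obtain ⟨s, hs⟩ := Filter.eventually_atTop.mp (coeff_prod_one_sub_X_pow_eventually_eq R m)
  have h : X ^ (n + 1) ∣ ∏ i ∈ s \ range n, (1 - X ^ (i + 1) : R⟦X⟧) - 1 := by
    refine prod_induction _ (fun f : R⟦X⟧ ↦ X ^ (n + 1) ∣ f - 1) (fun f g hf hg ↦ ?_) (by simp)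
      fun i hi ↦ ?_
    · rw [show f * g - 1 = (f - 1) * g + (g - 1) by ring]
      exact (hf.mul_right g).add hg
    · have : n ≤ i := by simpa using (mem_sdiff.mp hi).2
      simpa using pow_dvd_pow (X : R⟦X⟧) (by omega : n + 1 ≤ i + 1)
  have h' := X_pow_dvd_iff.mp (h.mul_right (qPoch X n)) m hm
  rw [sub_mul, one_mul, qPoch, ← prod_union sdiff_disjoint, sdiff_union_self_eq_union] at h'
  rw [map_sub, ← hs (s ∪ range n) subset_union_left]
  simpa [qPoch] using h'

lemma isUnit_qPoch_X (n : ℕ) : IsUnit (qPoch (X : R⟦X⟧) n) := by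
  rw [isUnit_iff_constantCoeff]
  simp [qPoch, map_prod]

lemma X_pow_dvd_pentagonalSeries_mul_qBinom_sub_one {k l n : ℕ} (hkl : k ≤ l)
    (h : k + l = n) : X ^ (k + 1) ∣ pentagonalSeries R * qBinom X n k - 1 := by
  subst h
  have hd (m : ℕ) (hm : k ≤ m) := (pow_dvd_pow X (by omega : k + 1 ≤ m + 1)).trans
    (X_pow_dvd_pentagonalSeries_sub_qPoch R m)
  obtain ⟨a, ha⟩ := hd k le_rfl
  obtain ⟨b, hb⟩ := hd l hkl
  obtain ⟨c, hc⟩ := hd (k + l) (by omega)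
  have hP := partitionSeries_mul_pentagonalSeries R
  have hB := qBinom_add_mul_qPoch_mul_qPoch (X : R⟦X⟧) k l
  set E := pentagonalSeries R
  set P := partitionSeries R
  rw [← sub_sub_cancel E (qPoch X k), ← sub_sub_cancel E (qPoch X l),
    ← sub_sub_cancel E (qPoch X (k + l)), ha, hb, hc] at hB
  set B := qBinom (X : R⟦X⟧) (k + l) k
  set x := (X : R⟦X⟧) ^ (k + 1)
  refine ⟨P * (B * E * b + B * a * (E - x * b) - c), ?_⟩
  linear_combination P * hB + (1 - B * E) * hP

/-- **Jacobi's identity** for the cube of the Euler function, coefficientwise. -/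
lemma coeff_pentagonalSeries_pow_three (n : ℕ) :
    coeff n (pentagonalSeries R ^ 3) =
      ∑ j ∈ range (n + 1), if (j + 1).choose 2 = n then (-1) ^ j * (2 * (j : R) + 1) else 0 := by
  set E := pentagonalSeries R
  have hX : IsLeftRegular (X : R⟦X⟧) := X_mul_injective
  have hsq := qPoch_sq_eq_sum hX (isUnit_qPoch_X R) n
  have h : X ^ (n + 1) ∣ E ^ 3 -
      ∑ j ∈ range (n + 1), (-1) ^ j * (2 * j + 1) * (X : R⟦X⟧) ^ (j + 1).choose 2 := by
    have e : E ^ 3 - ∑ j ∈ range (n + 1), (-1) ^ j * (2 * j + 1) * (X : R⟦X⟧) ^ (j + 1).choose 2 =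
        (E - qPoch X n) * (E * (E + qPoch X n)) +
          ∑ j ∈ range (n + 1), (-1) ^ j * (2 * (j : R⟦X⟧) + 1) *
            (X ^ (j + 1).choose 2 * (E * qBinom X (2 * n + 1) (n - j) - 1)) := by
      simp only [mul_sub, mul_one, sum_sub_distrib]
      rw [show ∑ j ∈ range (n + 1), (-1) ^ j * (2 * (j : R⟦X⟧) + 1) * (X ^ (j + 1).choose 2 *
        (E * qBinom X (2 * n + 1) (n - j))) = E * qPoch X n ^ 2 by
          rw [hsq, mul_sum]; exact sum_congr rfl fun j _ ↦ by ring]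
      simp only [mul_assoc]
      ring
    rw [e]
    refine ((X_pow_dvd_pentagonalSeries_sub_qPoch R n).mul_right _).add
      (dvd_sum fun j hj ↦ Dvd.dvd.mul_left ?_ _)
    have hj := mem_range.mp hj
    have := mul_dvd_mul (dvd_refl (X ^ (j + 1).choose 2))
      (X_pow_dvd_pentagonalSeries_mul_qBinom_sub_one R (k := n - j) (l := n + 1 + j)
        (n := 2 * n + 1) (by omega) (by omega))
    rw [← pow_add] at this
    have hc : (j + 1).choose 2 = j + j.choose 2 := by
      rw [Nat.choose_succ_succ' j 1, Nat.choose_one_right]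
    exact (pow_dvd_pow X (by omega)).trans this
  have h' := X_pow_dvd_iff.mp h n n.lt_succ_self
  rw [map_sub, sub_eq_zero] at h'
  rw [h', map_sum]
  refine sum_congr rfl fun j _ ↦ ?_
  have hc : (-1) ^ j * (2 * (j : R⟦X⟧) + 1) = C ((-1) ^ j * (2 * (j : R) + 1)) := by
    simp [show (C 2 : R⟦X⟧) = 2 from map_ofNat C 2]
  rw [hc, coeff_C_mul, coeff_X_pow]
  simp [eq_comm]

section residuePart
variable {R} {m : ℕ}

/-- The part of a power series supported on the exponents in a residue class modulo `m`. -/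
noncomputable def residuePart (r : ZMod m) (f : R⟦X⟧) : R⟦X⟧ :=
  mk fun n ↦ if (n : ZMod m) = r then coeff n f else 0

lemma coeff_residuePart (r : ZMod m) (f : R⟦X⟧) (n : ℕ) :
    coeff n (residuePart r f) = if (n : ZMod m) = r then coeff n f else 0 :=
  coeff_mk _ _

lemma residuePart_eq_zero_iff {r : ZMod m} {f : R⟦X⟧} :
    residuePart r f = 0 ↔ ∀ n : ℕ, (n : ZMod m) = r → coeff n f = 0 := by
  simp [PowerSeries.ext_iff, coeff_residuePart]

lemma residuePart_mul [NeZero m] (r : ZMod m) (f g : R⟦X⟧) :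
    residuePart r (f * g) = ∑ s, residuePart s f * residuePart (r - s) g := by
  ext n
  simp only [coeff_residuePart, map_sum, coeff_mul]
  rw [sum_comm]
  simp only [ite_mul, zero_mul, sum_ite_eq, mem_univ, if_true]
  rw [ite_sum_zero]
  refine sum_congr rfl fun x hx ↦ ?_
  rw [← mem_antidiagonal.mp hx, Nat.cast_add, mul_ite, mul_zero]
  exact if_congr eq_sub_iff_add_eq'.symm rfl rfl

lemma residuePart_mul_pow {p : ℕ} [Fact p.Prime] (r : ZMod p) (f g : (ZMod p)⟦X⟧) :
    residuePart r (f * g ^ p) = residuePart r f * g ^ p := by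
  have hp : p ≠ 0 := (Fact.out : p.Prime).ne_zero
  have hg : expand p hp g = g ^ p := by
    have := MvPowerSeries.map_frobenius_expand p hp (f := (g : MvPowerSeries Unit (ZMod p)))
    rw [ZMod.frobenius_zmod, MvPowerSeries.map_id] at this
    exact this
  have hs (s : ZMod p) : residuePart s (g ^ p) = if s = 0 then g ^ p else 0 := by
    ext n
    rw [coeff_residuePart, ← hg, coeff_expand]
    simp only [← ZMod.natCast_eq_zero_iff]
    by_cases hn : (n : ZMod p) = 0 <;> by_cases h0 : s = 0 <;>
      simp_all [coeff_expand, ← ZMod.natCast_eq_zero_iff, eq_comm]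
  simp [residuePart_mul, hs, sub_eq_zero]

end residuePart

variable {p : ℕ} [Fact p.Prime]

lemma residuePart_pentagonalSeries_pow_three {r : ZMod p}
    (hr : ∀ j : ZMod p, (j + 1) * j = 2 * r → 2 * j + 1 = 0) :
    residuePart r (pentagonalSeries (ZMod p) ^ 3) = 0 := by
  refine residuePart_eq_zero_iff.mpr fun n hn ↦ ?_
  rw [coeff_pentagonalSeries_pow_three]
  refine sum_eq_zero fun j _ ↦ ite_eq_right_iff.mpr fun hj ↦ ?_
  have e := congrArg (Nat.cast (R := ZMod p)) (two_mul_succ_choose_two j)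
  rw [hj] at e
  push_cast at e
  rw [hr j (by rw [← hn, e]), mul_zero]

lemma residuePart_pentagonalSeries {r : ZMod p} (hr : ∀ k : ZMod p, k * (3 * k - 1) ≠ 2 * r) :
    residuePart r (pentagonalSeries (ZMod p)) = 0 := by
  refine residuePart_eq_zero_iff.mpr fun n hn ↦ coeff_pentagonalSeries_eq_zero _ ?_
  rintro ⟨k, rfl⟩
  refine hr k ?_
  rw [← hn]
  have := congrArg (Int.cast : ℤ → ZMod p) (two_mul_natCast_pentagonal k)
  push_cast at this
  exact this.symm

lemma residuePart_partitionSeries {r : ZMod p} {a b : ℕ} (hab : a + 1 = p * b)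
    (h : residuePart r (pentagonalSeries (ZMod p) ^ a) = 0) :
    residuePart r (partitionSeries (ZMod p)) = 0 := by
  have e : partitionSeries (ZMod p) =
      pentagonalSeries (ZMod p) ^ a * (partitionSeries (ZMod p) ^ b) ^ p := by
    rw [← pow_mul, mul_comm b, ← hab, pow_succ, ← mul_assoc, ← mul_pow,
      mul_comm (pentagonalSeries _), partitionSeries_mul_pentagonalSeries, one_pow, one_mul]
  rw [e, residuePart_mul_pow, h, zero_mul]

lemma partitionFn_mod_eq_zero {r : ℕ} (h : residuePart (r : ZMod p) (partitionSeries (ZMod p)) = 0)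
    (n : ℕ) : partitionFn (p * n + r) % p = 0 := by
  have := residuePart_eq_zero_iff.mp h (p * n + r) (by simp)
  rw [partitionSeries, coeff_mk, ZMod.natCast_eq_zero_iff] at this
  exact Nat.mod_eq_zero_of_dvd this

instance : Fact (Nat.Prime 5) := ⟨by norm_num⟩
instance : Fact (Nat.Prime 7) := ⟨by norm_num⟩
instance : Fact (Nat.Prime 11) := ⟨by norm_num⟩

lemma residuePart_partitionSeries_five :
    residuePart (4 : ZMod 5) (partitionSeries (ZMod 5)) = 0 := by
  refine residuePart_partitionSeries (a := 9) (b := 2) rfl ?_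
  have h := @residuePart_pentagonalSeries_pow_three 5 _
  rw [show pentagonalSeries (ZMod 5) ^ 9 = pentagonalSeries (ZMod 5) ^ 3 *
    (pentagonalSeries (ZMod 5) ^ 3 * pentagonalSeries (ZMod 5) ^ 3) by ring]
  simp only [residuePart_mul, mul_sum]
  refine sum_eq_zero fun s _ ↦ sum_eq_zero fun t _ ↦ ?_
  have key : ∀ s t : ZMod 5, (∀ j : ZMod 5, (j + 1) * j = 2 * s → 2 * j + 1 = 0) ∨
      (∀ j : ZMod 5, (j + 1) * j = 2 * t → 2 * j + 1 = 0) ∨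
      (∀ j : ZMod 5, (j + 1) * j = 2 * (4 - s - t) → 2 * j + 1 = 0) := by decide
  rcases key s t with hs | hs | hs <;> simp [h hs]

lemma residuePart_partitionSeries_seven :
    residuePart (5 : ZMod 7) (partitionSeries (ZMod 7)) = 0 := by
  refine residuePart_partitionSeries (a := 6) (b := 1) rfl ?_
  have h := @residuePart_pentagonalSeries_pow_three 7 _
  rw [show pentagonalSeries (ZMod 7) ^ 6 = pentagonalSeries (ZMod 7) ^ 3 *
    pentagonalSeries (ZMod 7) ^ 3 by ring, residuePart_mul]
  refine sum_eq_zero fun s _ ↦ ?_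
  have key : ∀ s : ZMod 7, (∀ j : ZMod 7, (j + 1) * j = 2 * s → 2 * j + 1 = 0) ∨
      (∀ j : ZMod 7, (j + 1) * j = 2 * (5 - s) → 2 * j + 1 = 0) := by decide
  rcases key s with hs | hs <;> simp [h hs]

lemma sum_univ_fin_eleven {M : Type*} [AddCommMonoid M] (f : Fin 11 → M) :
    ∑ i, f i = f 0 + f 1 + f 2 + f 3 + f 4 + f 5 + f 6 + f 7 + f 8 + f 9 + f 10 := by
  rw [Fin.sum_univ_castSucc, Fin.sum_univ_castSucc, Fin.sum_univ_castSucc, Fin.sum_univ_eight]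
  rfl

lemma residuePart_mul_eleven (r : ZMod 11) (f g : (ZMod 11)⟦X⟧) :
    residuePart r (f * g) =
      residuePart (0 : ZMod 11) f * residuePart r g +
      residuePart (1 : ZMod 11) f * residuePart (r - 1) g +
      residuePart (2 : ZMod 11) f * residuePart (r - 2) g +
      residuePart (3 : ZMod 11) f * residuePart (r - 3) g +
      residuePart (4 : ZMod 11) f * residuePart (r - 4) g +
      residuePart (5 : ZMod 11) f * residuePart (r - 5) g +
      residuePart (6 : ZMod 11) f * residuePart (r - 6) g +
      residuePart (7 : ZMod 11) f * residuePart (r - 7) g +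
      residuePart (8 : ZMod 11) f * residuePart (r - 8) g +
      residuePart (9 : ZMod 11) f * residuePart (r - 9) g +
      residuePart (10 : ZMod 11) f * residuePart (r - 10) g := by
  rw [residuePart_mul]
  refine (sum_univ_fin_eleven _).trans ?_
  congr
  exact sub_zero r

lemma residuePart_partitionSeries_eleven :
    residuePart (6 : ZMod 11) (partitionSeries (ZMod 11)) = 0 := by
  refine residuePart_partitionSeries (a := 21) (b := 2) rfl ?_
  have h (r : ZMod 11) (hr : ∀ j : ZMod 11, (j + 1) * j = 2 * r → 2 * j + 1 = 0) :=
    residuePart_pentagonalSeries_pow_three hr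
  have h₂ := h 2 (by decide)
  have h₄ := h 4 (by decide)
  have h₅ := h 5 (by decide)
  have h₇ := h 7 (by decide)
  have h₈ := h 8 (by decide)
  have h₉ := h 9 (by decide)
  have w (r : ZMod 11) (hr : ∀ k : ZMod 11, k * (3 * k - 1) ≠ 2 * r) :
      residuePart r ((pentagonalSeries (ZMod 11) ^ 3 * pentagonalSeries (ZMod 11) ^ 3) *
        (pentagonalSeries (ZMod 11) ^ 3 * pentagonalSeries (ZMod 11) ^ 3)) = 0 := by
    rw [show ∀ f : (ZMod 11)⟦X⟧, (f ^ 3 * f ^ 3) * (f ^ 3 * f ^ 3) = f * f ^ 11 by intro f; ring,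
      residuePart_mul_pow, residuePart_pentagonalSeries hr, zero_mul]
  have w₃ := w 3 (by decide)
  have w₆ := w 6 (by decide)
  have w₈ := w 8 (by decide)
  have w₉ := w 9 (by decide)
  have w₁₀ := w 10 (by decide)
  rw [show pentagonalSeries (ZMod 11) ^ 21 =
    ((pentagonalSeries (ZMod 11) ^ 3 * pentagonalSeries (ZMod 11) ^ 3) *
      (pentagonalSeries (ZMod 11) ^ 3 * pentagonalSeries (ZMod 11) ^ 3)) *
      (pentagonalSeries (ZMod 11) ^ 3 *
        (pentagonalSeries (ZMod 11) ^ 3 * pentagonalSeries (ZMod 11) ^ 3)) by ring]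
  generalize pentagonalSeries (ZMod 11) ^ 3 = J at *
  clear w h
  simp only [residuePart_mul_eleven] at *
  reduce_mod_char at *
  simp only [h₂, h₄, h₅, h₇, h₈, h₉, mul_zero, zero_mul, add_zero, zero_add] at w₃ w₆ w₈ w₉ w₁₀ ⊢
  generalize residuePart (0 : ZMod 11) J = a at *
  generalize residuePart (1 : ZMod 11) J = b at *
  generalize residuePart (3 : ZMod 11) J = c at *
  generalize residuePart (6 : ZMod 11) J = d at *
  generalize residuePart (10 : ZMod 11) J = e at *
  have : CharP (ZMod 11)⟦X⟧ 11 := charP_of_injective_ringHom C_injective 11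
  linear_combination (norm := (ring_nf; reduce_mod_char!))
    (-b * c * e - b ^ 3 + 4 * a ^ 2 * c) * w₃ + (4 * d ^ 2 * e - a * b * e - a ^ 3) * w₆ +
    (-c ^ 3 + 4 * a * e ^ 2 - a * c * d) * w₈ + (-e ^ 3 - c * d * e + 4 * b ^ 2 * d) * w₉ +
    (-d ^ 3 + 4 * b * c ^ 2 - a * b * d) * w₁₀

end PowerSeries

/-- Ramanujan's congruences: for ℓ ∈ {5,7,11} and the unique 0 < δ < ℓ with
24δ ≡ 1 (mod ℓ), we have p(ℓn + δ) ≡ 0 (mod ℓ). -/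
theorem ramanujan_congruences :
    (∀ ℓ ∈ ({5, 7, 11} : Finset ℕ), ∀ δ : ℕ, 0 < δ → δ < ℓ → 24 * δ % ℓ = 1 →
      ∀ n : ℕ, partitionFn (ℓ * n + δ) % ℓ = 0) ∧
    (∀ n : ℕ, partitionFn (5 * n + 4) % 5 = 0 ∧
      partitionFn (7 * n + 5) % 7 = 0 ∧
      partitionFn (11 * n + 6) % 11 = 0) := by
  have h₅ := partitionFn_mod_eq_zero (p := 5) (r := 4) residuePart_partitionSeries_five
  have h₇ := partitionFn_mod_eq_zero (p := 7) (r := 5) residuePart_partitionSeries_seven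
  have h₁₁ := partitionFn_mod_eq_zero (p := 11) (r := 6) residuePart_partitionSeries_eleven
  refine ⟨fun ℓ hℓ δ h₀ hδ h n ↦ ?_, fun n ↦ ⟨h₅ n, h₇ n, h₁₁ n⟩⟩
  simp only [mem_insert, mem_singleton] at hℓ
  rcases hℓ with rfl | rfl | rfl
  · obtain rfl : δ = 4 := by omega
    exact h₅ n
  · obtain rfl : δ = 5 := by omega
    exact h₇ n
  · obtain rfl : δ = 6 := by omega
    exact h₁₁ n
end

section
/- For every prime ℓ ≥ 5, there exists an integer m with 0 ≤ m < (ℓ² − 1)/24 such that the partition number p(ℓm + δ_ℓ) is odd, where 0 < δ_ℓ < ℓ and 24·δ_ℓ ≡ 1 (mod ℓ). -/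
section

open PowerSeries

theorem HasSum.of_forall_eq {α : Type*} [AddCommMonoid α] [TopologicalSpace α] {f g : ℕ → α}
    {s : α} (h : HasSum f s) (hfg : ∀ n, g n = f n) :
    HasSum g s := by
  rwa [funext hfg]

/-- The power series `a` converges to `F` on the open unit disc. -/
def DiscSum (a : ℂ⟦X⟧) (F : ℂ → ℂ) : Prop :=
  ∀ q : ℂ, ‖q‖ < 1 → HasSum (fun n ↦ coeff n a * q ^ n) (F q)

namespace DiscSum

variable {a b : ℂ⟦X⟧} {F G : ℂ → ℂ}

theorem add (ha : DiscSum a F) (hb : DiscSum b G) : DiscSum (a + b) (fun q ↦ F q + G q) :=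
  fun q hq ↦ by simpa [add_mul] using (ha q hq).add (hb q hq)

theorem sub (ha : DiscSum a F) (hb : DiscSum b G) : DiscSum (a - b) (fun q ↦ F q - G q) :=
  fun q hq ↦ by simpa [sub_mul] using (ha q hq).sub (hb q hq)

theorem mul (ha : DiscSum a F) (hb : DiscSum b G) : DiscSum (a * b) (fun q ↦ F q * G q) := by
  intro q hq
  have h1 := (ha q hq).summable.norm
  have h2 := (hb q hq).summable.norm
  have hs := (summable_norm_sum_mul_antidiagonal_of_summable_norm h1 h2).of_norm
  have he := tsum_mul_tsum_eq_tsum_sum_antidiagonal_of_summable_norm h1 h2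
  rw [(ha q hq).tsum_eq, (hb q hq).tsum_eq] at he
  have hh := hs.hasSum
  rw [← he] at hh
  refine hh.of_forall_eq fun n ↦ ?_
  rw [coeff_mul, Finset.sum_mul]
  refine Finset.sum_congr rfl fun x hx ↦ ?_
  rw [← Finset.HasAntidiagonal.mem_antidiagonal.1 hx, pow_add]
  ring

theorem monomial (n : ℕ) (c : ℂ) :
    DiscSum (PowerSeries.monomial n c) (fun q ↦ c * q ^ n) := fun q _ ↦ by
  convert hasSum_single n ?_ using 1
  · simp
  · intro m hm
    simp [coeff_monomial, hm]

theorem const (c : ℂ) : DiscSum (C c) (fun _ ↦ c) := by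
  simpa using! monomial 0 c

theorem X : DiscSum X (fun q ↦ q) := by
  simpa [X_eq] using! monomial 1 1

theorem one : DiscSum 1 (fun _ ↦ 1) := by
  simpa using! const 1

theorem pow (ha : DiscSum a F) (n : ℕ) : DiscSum (a ^ n) (fun q ↦ F q ^ n) := by
  induction n with
  | zero => simpa using! one
  | succ n ih => simpa [pow_succ] using! ih.mul ha

theorem prod {ι : Type*} (s : Finset ι) {a : ι → ℂ⟦X⟧} {F : ι → ℂ → ℂ}
    (h : ∀ i ∈ s, DiscSum (a i) (F i)) : DiscSum (∏ i ∈ s, a i) (fun q ↦ ∏ i ∈ s, F i q) := by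
  classical
  induction s using Finset.induction_on with
  | empty => simpa using! one
  | insert i s hi ih =>
    simp_rw [Finset.prod_insert hi]
    exact (h i (by simp)).mul (ih fun j hj ↦ h j (by simp [hj]))

theorem apply_zero (ha : DiscSum a F) : F 0 = coeff 0 a := by
  refine (ha 0 (by simp)).unique ?_
  convert hasSum_single 0 ?_ using 1
  · simp
  · intro m hm
    simp [hm]

theorem hasFPowerSeriesOnBall (ha : DiscSum a F) :
    HasFPowerSeriesOnBall F (.ofScalars ℂ fun n ↦ coeff n a) 0 1 := by
  constructor
  · refine le_of_forall_lt_imp_le_of_dense fun r hr ↦ ?_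
    lift r to NNReal using hr.ne_top
    apply FormalMultilinearSeries.le_radius_of_summable
    simpa [smul_eq_mul, norm_mul, mul_comm, mul_left_comm, mul_assoc] using
      (ha (r : ℂ) (by simpa using hr)).summable.norm
  · simp
  · intro y hy
    rw [← ENNReal.coe_one, Metric.eball_coe, NNReal.coe_one, mem_ball_zero_iff] at hy
    simpa [mul_comm] using! ha y hy

theorem differentiableOn (ha : DiscSum a F) : DifferentiableOn ℂ F (Metric.ball 0 1) := by
  have := ha.hasFPowerSeriesOnBall.differentiableOn
  rwa [← ENNReal.coe_one, Metric.eball_coe] at this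

theorem eq_of_eventuallyEq (ha : DiscSum a F) (hb : DiscSum b G) (h : F =ᶠ[nhds 0] G) :
    a = b := by
  have := (ha.hasFPowerSeriesOnBall.hasFPowerSeriesAt).eq_formalMultilinearSeries
    ((hb.hasFPowerSeriesOnBall.hasFPowerSeriesAt).congr h.symm)
  ext n
  simpa using congr_arg (FormalMultilinearSeries.coeff · n) this

theorem unique (ha : DiscSum a F) (hb : DiscSum b G) (h : ∀ q, ‖q‖ < 1 → q ≠ 0 → F q = G q) :
    a = b := by
  have h1 : F =ᶠ[nhdsWithin 0 {0}ᶜ] G := by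
    filter_upwards [self_mem_nhdsWithin,
      nhdsWithin_le_nhds (Metric.ball_mem_nhds (0 : ℂ) one_pos)] with q h0 hq
    exact h q (by simpa using hq) h0
  refine eq_of_eventuallyEq ha hb ?_
  have hF := ha.hasFPowerSeriesOnBall.hasFPowerSeriesAt.continuousAt
  have hG := hb.hasFPowerSeriesOnBall.hasFPowerSeriesAt.continuousAt
  exact (hF.eventuallyEq_nhds_iff_eventuallyEq_nhdsNE hG).1 h1

theorem taylorSeries (hF : DifferentiableOn ℂ F (Metric.ball 0 1)) :
    DiscSum (PowerSeries.mk fun n ↦ (n.factorial : ℂ)⁻¹ * iteratedDeriv n F 0) F := by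
  intro q hq
  refine (Complex.hasSum_taylorSeries_on_ball hF (z := q)
    (by simpa using hq)).of_forall_eq fun n ↦ ?_
  simp only [coeff_mk, sub_zero, smul_eq_mul]
  ring

theorem exists_of_differentiableOn (hF : DifferentiableOn ℂ F (Metric.ball 0 1)) :
    ∃ a, DiscSum a F :=
  ⟨_, taylorSeries hF⟩

theorem of_X_mul (ha : DiscSum (PowerSeries.X * b) F) :
    DiscSum b (fun q ↦ if q = 0 then coeff 0 b else F q / q) := by
  intro q hq
  rcases eq_or_ne q 0 with rfl | h0
  · convert hasSum_single 0 ?_ using 1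
    · simp
    · intro m hm
      simp [hm]
  · have := (hasSum_nat_add_iff' 1).2 (ha q hq)
    simp only [h0, if_false]
    have h1 : F q - ∑ i ∈ Finset.range 1, coeff i (PowerSeries.X * b) * q ^ i = F q := by simp
    rw [h1] at this
    refine (this.div_const q).of_forall_eq fun n ↦ ?_
    rw [coeff_succ_X_mul, pow_succ]
    field_simp

theorem of_mul_left {c : ℂ⟦X⟧} {H : ℂ → ℂ} (hb : DiscSum b G)
    (hF : DifferentiableOn ℂ F (Metric.ball 0 1))
    (hab : a * b = c) (hc : DiscSum c H) (hb0 : b ≠ 0) (h : ∀ q, ‖q‖ < 1 → F q * G q = H q) :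
    DiscSum a F := by
  obtain ⟨a', ha'⟩ := exists_of_differentiableOn hF
  have : a' * b = a * b := by
    rw [hab]
    exact (ha'.mul hb).unique hc fun q hq _ ↦ h q hq
  rwa [← mul_right_cancel₀ hb0 this]

theorem coeff_eq_zero_of_isBigO {N : ℕ} (ha : DiscSum a F)
    (h : F =O[nhds 0] fun q ↦ q ^ N) {n : ℕ} (hn : n < N) : coeff n a = 0 := by
  induction N generalizing a F n with
  | zero => simp at hn
  | succ N ih =>
    have h0 : coeff 0 a = 0 := by
      rw [← ha.apply_zero]
      obtain ⟨c, hc⟩ := h.bound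
      simpa using hc.self_of_nhds
    obtain ⟨b, rfl⟩ := X_dvd_iff.2 (by simpa using h0)
    have hb := ha.of_X_mul
    cases n with
    | zero => exact h0
    | succ n =>
      rw [coeff_succ_X_mul]
      refine ih hb ?_ (by omega)
      obtain ⟨c, hc⟩ := h.bound
      refine Asymptotics.IsBigO.of_bound c ?_
      have key : ∀ᶠ q in nhdsWithin (0 : ℂ) {0}ᶜ,
          ‖if q = 0 then coeff 0 b else F q / q‖ ≤ c * ‖q ^ N‖ := by
        filter_upwards [self_mem_nhdsWithin, nhdsWithin_le_nhds hc] with q hq0 hq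
        have hq0 : q ≠ 0 := hq0
        rw [if_neg hq0, norm_div, div_le_iff₀ (by simpa using hq0), mul_assoc, ← norm_mul,
          ← pow_succ]
        exact hq
      have hcont : ContinuousAt (fun q : ℂ ↦ c * ‖q ^ N‖) 0 := by fun_prop
      have hle := le_of_tendsto_of_tendsto
        (hb.hasFPowerSeriesOnBall.hasFPowerSeriesAt.continuousAt.norm.mono_left
          nhdsWithin_le_nhds) (hcont.tendsto.mono_left nhdsWithin_le_nhds) key
      rw [eventually_nhdsWithin_iff] at key
      filter_upwards [key] with q hq
      rcases eq_or_ne q 0 with rfl | h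
      · exact hle
      · exact hq h

theorem expand {p : ℕ} (hp : p ≠ 0) (ha : DiscSum a F) :
    DiscSum (a.expand p hp) (fun q ↦ F (q ^ p)) := by
  intro q hq
  have h := ha (q ^ p) (by simpa using pow_lt_one₀ (norm_nonneg q) hq hp)
  have hinj : Function.Injective fun n : ℕ ↦ p * n := fun x y h ↦ by simpa [hp] using h
  rw [← hinj.hasSum_iff]
  · convert h using 2 with n
    simp [pow_mul]
  · intro n hn
    rw [coeff_expand_of_not_dvd, zero_mul]
    rintro ⟨m, rfl⟩
    exact hn ⟨m, rfl⟩

theorem derivative (ha : DiscSum a F) :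
    DiscSum (PowerSeries.X * PowerSeries.derivative ℂ a) (fun q ↦ q * deriv F q) := by
  have hd := taylorSeries (ha.differentiableOn.deriv Metric.isOpen_ball)
  have he := eq_of_eventuallyEq ha (taylorSeries ha.differentiableOn) Filter.EventuallyEq.rfl
  refine X.mul ?_
  convert hd using 1
  ext n
  rw [he, coeff_derivative, coeff_mk, coeff_mk, ← iteratedDeriv_succ', Nat.factorial_succ]
  have : (n.factorial : ℂ) ≠ 0 := mod_cast n.factorial_ne_zero
  have : (n + 1 : ℂ) ≠ 0 := mod_cast n.succ_ne_zero
  push_cast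
  field_simp

theorem _root_.IsPrimitiveRoot.sum_pow_pow {p : ℕ} {ζ : ℂ} (hζ : IsPrimitiveRoot ζ p) (n : ℕ) :
    ∑ i ∈ Finset.range p, (ζ ^ i) ^ n = if p ∣ n then (p : ℂ) else 0 := by
  simp_rw [pow_right_comm]
  split_ifs with h
  · simp [(hζ.pow_eq_one_iff_dvd n).2 h]
  · have h1 : ζ ^ n ≠ 1 := fun h' ↦ h ((hζ.pow_eq_one_iff_dvd n).1 h')
    have h2 := geom_sum_mul (ζ ^ n) p
    rw [pow_right_comm, hζ.pow_eq_one, one_pow, sub_self] at h2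
    exact (mul_eq_zero.1 h2).resolve_right (sub_ne_zero.2 h1)

/-- Averaging over rotations by `p`-th roots of unity extracts every `p`-th coefficient. -/
theorem sum_rotate {p : ℕ} [NeZero p] {ζ : ℂ} (hζ : IsPrimitiveRoot ζ p) (ha : DiscSum a F) :
    ∃ G, DiscSum (PowerSeries.mk fun m ↦ coeff (p * m) a) G ∧
      ∀ w : ℂ, ‖w‖ < 1 → ∑ i ∈ Finset.range p, F (ζ ^ i * w) = p * G (w ^ p) := by
  have hp : p ≠ 0 := NeZero.ne p
  have hinj : Function.Injective fun n : ℕ ↦ p * n := fun x y h ↦ by simpa [hp] using h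
  have hG : DiscSum (PowerSeries.mk fun m ↦ coeff (p * m) a)
      (fun q ↦ ∑' m, coeff (p * m) a * q ^ m) := by
    intro q hq
    obtain ⟨w, rfl⟩ := IsAlgClosed.exists_pow_nat_eq q (Nat.pos_of_ne_zero hp)
    have hw : ‖w‖ < 1 := by
      by_contra! h
      rw [norm_pow] at hq
      exact absurd (one_le_pow₀ h (n := p)) (not_le.2 hq)
    have := ((ha w hw).summable.comp_injective hinj).hasSum
    simpa [Function.comp_def, pow_mul] using this
  refine ⟨_, hG, fun w hw ↦ ?_⟩
  have h1 : HasSum (fun n ↦ ∑ i ∈ Finset.range p, coeff n a * (ζ ^ i * w) ^ n)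
      (∑ i ∈ Finset.range p, F (ζ ^ i * w)) := by
    refine hasSum_sum fun i _ ↦ ha _ ?_
    rwa [norm_mul, norm_pow, hζ.norm'_eq_one hp, one_pow, one_mul]
  have h2 := (hG (w ^ p) (by simpa using pow_lt_one₀ (norm_nonneg w) hw hp)).mul_left (p : ℂ)
  have h3 (n : ℕ) : ∑ i ∈ Finset.range p, coeff n a * (ζ ^ i * w) ^ n =
      if p ∣ n then (p : ℂ) * (coeff n a * w ^ n) else 0 := by
    have := hζ.sum_pow_pow n
    simp_rw [mul_pow, ← Finset.mul_sum, ← Finset.sum_mul, this]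
    split_ifs <;> ring
  simp_rw [h3] at h1
  rw [← hinj.hasSum_iff] at h1
  · refine h1.unique ?_
    refine h2.of_forall_eq fun n ↦ ?_
    simp [pow_mul]
  · intro n hn
    rw [if_neg]
    rintro ⟨m, rfl⟩
    exact hn ⟨m, rfl⟩

end DiscSum

/-- The image of an integral power series in `ℂ⟦X⟧`. -/
abbrev toComplex : ℤ⟦X⟧ →+* ℂ⟦X⟧ := PowerSeries.map (Int.castRingHom ℂ)

/-- The reduction modulo two of an integral power series. -/
abbrev modTwo : ℤ⟦X⟧ →+* (ZMod 2)⟦X⟧ := PowerSeries.map (Int.castRingHom (ZMod 2))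

theorem toComplex_injective : Function.Injective toComplex :=
  PowerSeries.map_injective _ (RingHom.injective_int _)

theorem map_pentagonalSeries {R S : Type*} [CommRing R] [CommRing S] (f : R →+* S) :
    PowerSeries.map f (pentagonalSeries R) = pentagonalSeries S := by
  ext n
  obtain ⟨s, h1, h2⟩ := ((coeff_prod_one_sub_X_pow_eventually_eq R n).and
    (coeff_prod_one_sub_X_pow_eventually_eq S n)).exists
  rw [coeff_map, ← h1, ← h2, ← coeff_map]
  simp

/-- Euler's product `∏ (1 - q ^ n)`. -/
noncomputable def eulerProd (q : ℂ) : ℂ := ∏' n : ℕ, (1 - q ^ (n + 1))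

theorem eulerProd_eq_mul {q : ℂ} (hq : ‖q‖ < 1) (N : ℕ) :
    eulerProd q = (∏ n ∈ Finset.range N, (1 - q ^ (n + 1))) *
      ∏' n : ℕ, (1 - q ^ (n + N + 1)) := by
  refine (Multipliable.prod_mul_tprod_nat_mul' ?_).symm
  simp_rw [sub_eq_add_neg]
  refine multipliable_one_add_of_summable ?_
  simp only [norm_neg, norm_pow]
  exact (summable_nat_add_iff (N + 1)).2 (summable_geometric_of_lt_one (norm_nonneg q) hq)

theorem norm_tprod_one_sub_pow_sub_one_le {q : ℂ} (hq : ‖q‖ ≤ 1 / 2) (N : ℕ) :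
    ‖∏' n : ℕ, (1 - q ^ (n + N + 1)) - 1‖ ≤ 4 * ‖q ^ N‖ := by
  have hq1 : ‖q‖ < 1 := by linarith
  have hgeom : HasSum (fun n : ℕ ↦ ‖q‖ ^ (n + N + 1)) (‖q‖ ^ (N + 1) * (1 - ‖q‖)⁻¹) := by
    refine ((hasSum_geometric_of_lt_one (norm_nonneg q) hq1).mul_left
      (‖q‖ ^ (N + 1))).of_forall_eq fun n ↦ ?_
    ring
  have hm : Multipliable fun n : ℕ ↦ (1 - q ^ (n + N + 1)) := by
    simp_rw [sub_eq_add_neg]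
    refine multipliable_one_add_of_summable ?_
    simpa only [norm_neg, norm_pow] using hgeom.summable
  refine le_of_tendsto (hm.hasProd.sub_const 1).norm (Filter.Eventually.of_forall fun s ↦ ?_)
  have h1 := s.norm_prod_one_add_sub_one_le (fun n ↦ -q ^ (n + N + 1))
  simp only [← sub_eq_add_neg, norm_neg, norm_pow] at h1
  refine h1.trans ?_
  have h2 : ∑ i ∈ s, ‖q‖ ^ (i + N + 1) ≤ ‖q‖ ^ N := by
    refine (hgeom.summable.sum_le_tsum s fun i _ ↦ by positivity).trans ?_
    rw [hgeom.tsum_eq, ← div_eq_mul_inv, div_le_iff₀ (by linarith), pow_succ]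
    exact mul_le_mul_of_nonneg_left (by linarith) (by positivity)
  have h3 : ‖q‖ ^ N ≤ 1 := pow_le_one₀ (norm_nonneg q) hq1.le
  have h4 : 0 ≤ ∑ i ∈ s, ‖q‖ ^ (i + N + 1) := Finset.sum_nonneg fun i _ ↦ by positivity
  have h5 := Real.norm_exp_sub_one_sub_id_le (x := ∑ i ∈ s, ‖q‖ ^ (i + N + 1))
    (by rw [Real.norm_of_nonneg h4]; linarith)
  rw [Real.norm_of_nonneg h4] at h5
  have h6 := (abs_le.1 h5).2
  rw [norm_pow]
  nlinarith

theorem discSum_eulerProd : DiscSum (toComplex (pentagonalSeries ℤ)) eulerProd := by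
  rw [toComplex, map_pentagonalSeries]
  obtain ⟨a, ha⟩ := DiscSum.exists_of_differentiableOn
    (F := eulerProd) ModularForm.differentiableOn_tprod_one_sub_pow
  convert ha
  ext n
  obtain ⟨s, hs⟩ := Filter.eventually_atTop.1 (coeff_prod_one_sub_X_pow_eventually_eq ℂ n)
  obtain ⟨N, hN⟩ := s.exists_nat_subset_range
  have hsub : s ⊆ Finset.range (N + n + 1) :=
    hN.trans (Finset.range_mono (by omega))
  rw [← hs _ hsub]
  have hP : DiscSum (∏ i ∈ Finset.range (N + n + 1), (1 - X ^ (i + 1)))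
      (fun q ↦ ∏ i ∈ Finset.range (N + n + 1), (1 - q ^ (i + 1))) :=
    DiscSum.prod _ fun i _ ↦ DiscSum.one.sub (DiscSum.X.pow _)
  have key := (ha.sub hP).coeff_eq_zero_of_isBigO (N := N + n + 1) ?_ (n := n) (by omega)
  · rw [map_sub, sub_eq_zero] at key
    exact key.symm
  · have h1 : (fun q : ℂ ↦ ∏ i ∈ Finset.range (N + n + 1), (1 - q ^ (i + 1))) =O[nhds 0]
        fun _ ↦ (1 : ℂ) := by
      refine Filter.Tendsto.isBigO_one ℂ (ContinuousAt.tendsto ?_)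
      fun_prop
    have h2 : (fun q : ℂ ↦ ∏' i : ℕ, (1 - q ^ (i + (N + n + 1) + 1)) - 1) =O[nhds 0]
        fun q ↦ q ^ (N + n + 1) := by
      refine Asymptotics.IsBigO.of_bound 4 ?_
      filter_upwards [Metric.closedBall_mem_nhds (0 : ℂ) one_half_pos] with q hq
      exact norm_tprod_one_sub_pow_sub_one_le (by simpa using hq) _
    refine (h1.mul h2).congr' ?_ (by simp)
    filter_upwards [Metric.ball_mem_nhds (0 : ℂ) one_pos] with q hq
    rw [eulerProd_eq_mul (by simpa using hq) (N + n + 1)]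
    ring

theorem eulerProd_ne_zero {q : ℂ} (hq : ‖q‖ < 1) : eulerProd q ≠ 0 := by
  have := tprod_one_add_ne_zero_of_summable (f := fun n : ℕ ↦ -q ^ (n + 1)) (fun i ↦ ?_) ?_
  · simpa only [eulerProd, ← sub_eq_add_neg] using this
  · rw [← sub_eq_add_neg, sub_ne_zero]
    intro h
    have := congrArg norm h
    rw [norm_one, norm_pow] at this
    exact absurd this.symm (pow_lt_one₀ (norm_nonneg q) hq (by omega)).ne
  · simp only [norm_neg, norm_pow]
    exact (summable_nat_add_iff 1).2 (summable_geometric_of_lt_one (norm_nonneg q) hq)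

theorem constantCoeff_pentagonalSeries (R : Type*) [CommRing R] :
    constantCoeff (pentagonalSeries R) = 1 := by
  obtain ⟨s, h1⟩ := (coeff_prod_one_sub_X_pow_eventually_eq R 0).exists
  rw [← coeff_zero_eq_constantCoeff_apply, ← h1]
  simp

theorem DiscSum.toComplex_invOfUnit {a : ℤ⟦X⟧} {F : ℂ → ℂ} (ha : DiscSum (toComplex a) F)
    (h1 : constantCoeff a = 1) (hF : ∀ q, ‖q‖ < 1 → F q ≠ 0) :
    DiscSum (toComplex (invOfUnit a 1)) (fun q ↦ (F q)⁻¹) := by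
  have hmul : invOfUnit a 1 * a = 1 := by
    rw [mul_comm]
    exact mul_invOfUnit _ _ (by simpa using h1)
  refine DiscSum.of_mul_left (c := 1) ha ?_ (by rw [← map_mul, hmul, map_one]) DiscSum.one ?_ ?_
  · exact ha.differentiableOn.fun_inv fun q hq ↦ hF q (by simpa using hq)
  · intro h
    have := congrArg constantCoeff (toComplex_injective (h.trans (map_zero _).symm))
    simp [h1] at this
  · intro q hq
    exact inv_mul_cancel₀ (hF q hq)

open UpperHalfPlane ModularForm Function.Periodic MatrixGroups

/-- `F`, regarded as a function of `q = exp (2 π i τ)`, has the transformation behaviour of a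
modular form of weight `k` under `τ ↦ -1 / τ`. -/
def SInvariant (k : ℤ) (F : ℂ → ℂ) : Prop :=
  ∀ τ : ℍ, F (qParam 1 (-(τ : ℂ))⁻¹) = (τ : ℂ) ^ k * F (qParam 1 τ)

theorem qParam_one_add_one (z : ℂ) : qParam 1 (z + 1) = qParam 1 z := by
  simp only [qParam, Complex.ofReal_one, div_one, mul_add, mul_one, Complex.exp_periodic _]

theorem norm_qParam_coe_lt_one (τ : ℍ) : ‖qParam 1 (τ : ℂ)‖ < 1 :=
  norm_qParam_lt_one one_pos τ.im_pos

theorem exists_eq_qParam {q : ℂ} (hq : ‖q‖ < 1) (h0 : q ≠ 0) : ∃ τ : ℍ, qParam 1 (τ : ℂ) = q :=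
  ⟨⟨_, im_invQParam_pos_of_norm_lt_one one_pos hq h0⟩, qParam_right_inv one_ne_zero h0⟩

namespace DiscSum

theorem unique_of_upperHalfPlane {a b : ℂ⟦X⟧} {F G : ℂ → ℂ} (ha : DiscSum a F) (hb : DiscSum b G)
    (h : ∀ τ : ℍ, F (qParam 1 τ) = G (qParam 1 τ)) : a = b := by
  refine ha.unique hb fun q hq h0 ↦ ?_
  obtain ⟨τ, rfl⟩ := exists_eq_qParam hq h0
  exact h τ

theorem of_hasSum_qParam {a : ℂ⟦X⟧} {f : ℍ → ℂ}
    (h : ∀ τ : ℍ, HasSum (fun n ↦ coeff n a * qParam 1 (τ : ℂ) ^ n) (f τ)) :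
    ∃ F, DiscSum a F ∧ ∀ τ : ℍ, F (qParam 1 τ) = f τ := by
  refine ⟨fun q ↦ ∑' n, coeff n a * q ^ n, fun q hq ↦ ?_, fun τ ↦ (h τ).tsum_eq⟩
  rcases eq_or_ne q 0 with rfl | h0
  · refine (hasSum_single 0 fun m hm ↦ ?_).summable.hasSum
    simp [hm]
  · obtain ⟨τ, rfl⟩ := exists_eq_qParam hq h0
    exact (h τ).summable.hasSum

theorem eq_zero_of_neg_weight {a : ℂ⟦X⟧} {F : ℂ → ℂ} {k : ℤ} (ha : DiscSum a F)
    (hF : SInvariant k F) (hk : k < 0) : a = 0 := by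
  let f : ℍ → ℂ := fun τ ↦ F (qParam 1 τ)
  have hS : f ∣[k] ModularGroup.S = f := by
    ext τ
    rw [SlashInvariantForm.slash_S_apply, zpow_neg]
    have hτ : (τ : ℂ) ^ k ≠ 0 := zpow_ne_zero k (ne_zero τ)
    simp only [f, hF τ]
    field_simp
  have hT : f ∣[k] ModularGroup.T = f := by
    ext τ
    rw [SL_slash_apply, modular_T_smul, ModularGroup.denom_apply]
    simp [f, ModularGroup.T, add_comm (1 : ℂ), qParam_one_add_one]
  have hsum : ∀ τ : ℍ, HasSum (fun n ↦ coeff n a • qParam 1 (τ : ℂ) ^ n) (f τ) :=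
    fun τ ↦ ha _ (norm_qParam_coe_lt_one τ)
  let g : ModularForm 𝒮ℒ k :=
    { toFun := f
      slash_action_eq' := by
        rintro A ⟨A, rfl⟩
        exact SlashInvariantForm.slash_action_generators_SL2Z hS hT A
      holo' := by
        rw [UpperHalfPlane.mdifferentiable_iff]
        have h1 : DifferentiableOn ℂ (fun z ↦ F (qParam 1 z)) {z | 0 < z.im} := by
          refine ha.differentiableOn.comp (differentiable_qParam.differentiableOn) ?_
          intro z hz
          simpa using norm_qParam_lt_one one_pos hz
        refine h1.congr fun z hz ↦ ?_
        simp [f, ofComplex_apply_of_im_pos hz]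
      bdd_at_cusps' := by
        intro c hc
        rw [Subgroup.IsArithmetic.isCusp_iff_isCusp_SL2Z] at hc
        rw [OnePoint.isBoundedAt_iff_forall_SL2Z hc]
        intro γ _
        rw [SlashInvariantForm.slash_action_generators_SL2Z hS hT]
        exact UpperHalfPlane.isBoundedAtImInfty_of_hasSum_qExpansion one_pos hsum }
  have hg := ModularFormClass.levelOne_neg_weight_eq_zero hk g
  have h0 : DiscSum 0 fun _ ↦ 0 := by simpa using! DiscSum.const 0
  exact ha.unique_of_upperHalfPlane h0 fun τ ↦ congrFun hg τ

end DiscSum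

theorem discSum_E {k : ℕ} (hk : 3 ≤ k) (e : ℤ⟦X⟧)
    (he : ∀ n, (qExpansion 1 (ModularForm.E hk)).coeff n = ((coeff n e : ℤ) : ℂ)) :
    ∃ F, DiscSum (toComplex e) F ∧ SInvariant k F ∧
      ∀ τ : ℍ, F (qParam 1 τ) = ModularForm.E hk τ := by
  obtain ⟨F, h1, h2⟩ := DiscSum.of_hasSum_qParam (a := toComplex e) (f := ModularForm.E hk)
    fun τ ↦ (ModularForm.hasSum_qExpansion (ModularForm.E hk) one_pos
      one_mem_strictPeriods_SL τ).of_forall_eq fun n ↦ by simp [he n]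
  refine ⟨F, h1, fun τ ↦ ?_, h2⟩
  have hS := congrFun (SlashInvariantFormClass.slash_action_eq (ModularForm.E hk) _
    ⟨ModularGroup.S, rfl⟩) τ
  have hS' := (SlashInvariantForm.slash_S_apply (ModularForm.E hk) k τ).symm.trans hS
  have hτ : (τ : ℂ) ^ k ≠ 0 := pow_ne_zero k (ne_zero τ)
  rw [h2, ← hS', ← h2]
  simp only [zpow_neg, zpow_natCast]
  field_simp

theorem SInvariant.sub {k : ℤ} {F G : ℂ → ℂ} (hF : SInvariant k F) (hG : SInvariant k G) :
    SInvariant k fun q ↦ F q - G q := fun τ ↦ by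
  simp only [hF τ, hG τ, mul_sub]

theorem SInvariant.const_mul {k : ℤ} {F : ℂ → ℂ} (c : ℂ) (hF : SInvariant k F) :
    SInvariant k fun q ↦ c * F q := fun τ ↦ by
  simp only [hF τ]
  ring

theorem SInvariant.pow {k : ℤ} {F : ℂ → ℂ} (hF : SInvariant k F) (n : ℕ) :
    SInvariant (k * n) fun q ↦ F q ^ n := fun τ ↦ by
  simp only [hF τ, mul_pow, zpow_mul, zpow_natCast]

theorem SInvariant.div {k l : ℤ} {F G : ℂ → ℂ} (hF : SInvariant k F) (hG : SInvariant l G) :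
    SInvariant (k - l) fun q ↦ F q / G q := fun τ ↦ by
  simp only [hF τ, hG τ, zpow_sub₀ (ne_zero τ)]
  ring

theorem SInvariant.congr {k : ℤ} {F G : ℂ → ℂ} (hF : SInvariant k F)
    (h : ∀ τ : ℍ, G (qParam 1 τ) = F (qParam 1 τ)) : SInvariant k G := fun τ ↦ by
  have := hF τ
  rw [h τ, ← this]
  exact h ⟨_, τ.im_inv_neg_coe_pos⟩

/-- The generating function of the divisor power sums `σ k n`. -/
noncomputable def sigmaSeries (k : ℕ) : ℤ⟦X⟧ := .mk fun n ↦ (ArithmeticFunction.sigma k n : ℤ)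

/-- The `q`-expansion of the modular discriminant. -/
noncomputable def deltaSeries : ℤ⟦X⟧ := X * pentagonalSeries ℤ ^ 24

theorem exists_discSum_E₄ : ∃ F, DiscSum (toComplex (1 + 240 * sigmaSeries 3)) F ∧
    SInvariant 4 F ∧ ∀ τ : ℍ, F (qParam 1 τ) = E₄ τ := by
  refine discSum_E (k := 4) (by norm_num) _ fun n ↦ ?_
  rw [EisensteinSeries.E_qExpansion_coeff _ (by decide)]
  have hb : bernoulli 4 = -1 / 30 := by
    rw [bernoulli_eq_bernoulli'_of_ne_one (by decide), bernoulli'_four]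
  have h240 : (240 : ℤ⟦X⟧) = C 240 := by simp
  rw [hb, h240, map_add, coeff_C_mul, coeff_one, sigmaSeries, coeff_mk]
  split_ifs with h
  · simp [h]
  · push_cast
    norm_num

theorem exists_discSum_E₆ : ∃ F, DiscSum (toComplex (1 - 504 * sigmaSeries 5)) F ∧
    SInvariant 6 F ∧ ∀ τ : ℍ, F (qParam 1 τ) = E₆ τ := by
  refine discSum_E (k := 6) (by norm_num) _ fun n ↦ ?_
  rw [EisensteinSeries.E_qExpansion_coeff _ (by decide)]
  have hb5 : bernoulli' 5 = 0 := bernoulli'_eq_zero_of_odd (by decide) (by decide)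
  have hb : bernoulli 6 = 1 / 42 := by
    rw [bernoulli_eq_bernoulli'_of_ne_one (by decide), bernoulli'_def]
    norm_num [Finset.sum_range_succ, Nat.choose, bernoulli'_four, hb5]
  have h504 : (504 : ℤ⟦X⟧) = C 504 := by simp
  rw [hb, h504, map_sub, coeff_C_mul, coeff_one, sigmaSeries, coeff_mk]
  split_ifs with h
  · simp [h]
  · push_cast
    norm_num

theorem discSum_deltaSeries : DiscSum (toComplex deltaSeries) fun q ↦ q * eulerProd q ^ 24 := by
  have := DiscSum.X.mul (discSum_eulerProd.pow 24)
  simpa [deltaSeries] using! this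

theorem eta_eq_qParam_mul (z : ℂ) : eta z = qParam 24 z * eulerProd (qParam 1 z) := by
  rfl

theorem qParam_pow (z : ℂ) : qParam 24 z ^ 24 = qParam 1 z := by
  simp only [qParam, ← Complex.exp_nat_mul]
  congr 1
  push_cast
  ring

theorem discriminant_eq_eulerProd (τ : ℍ) :
    discriminant τ = qParam 1 τ * eulerProd (qParam 1 τ) ^ 24 := by
  rw [discriminant, eta_eq_qParam_mul, mul_pow, qParam_pow]

theorem sInvariant_delta : SInvariant 12 fun q ↦ q * eulerProd q ^ 24 := fun τ ↦ by
  have h := congrFun discriminant_S_invariant τ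
  rw [SlashInvariantForm.slash_S_apply, discriminant_eq_eulerProd, discriminant_eq_eulerProd] at h
  have hτ : (τ : ℂ) ^ (12 : ℤ) ≠ 0 := zpow_ne_zero _ (ne_zero τ)
  dsimp only
  rw [← h, zpow_neg, mul_left_comm, mul_inv_cancel₀ hτ, mul_one]

theorem two_eq_zero_zmod_two_powerSeries : (2 : (ZMod 2)⟦X⟧) = 0 := by
  rw [← map_ofNat (C : ZMod 2 →+* (ZMod 2)⟦X⟧) 2, show (OfNat.ofNat 2 : ZMod 2) = 0 from rfl,
    map_zero]

theorem modTwo_E₄ : modTwo (1 + 240 * sigmaSeries 3) = 1 := by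
  have : (1 + 240 * sigmaSeries 3 : ℤ⟦X⟧) = 1 + 2 * (120 * sigmaSeries 3) := by ring
  rw [this, map_add, map_mul, map_one, map_ofNat modTwo 2, two_eq_zero_zmod_two_powerSeries,
    zero_mul, add_zero]

/-- A level one modular form of weight `4 w` with integral `q`-expansion reduces modulo two to a
polynomial of degree at most `w / 3` in the discriminant. -/
theorem exists_modTwo_eq_aeval_delta (w : ℕ) (a : ℤ⟦X⟧) (F : ℂ → ℂ) (ha : DiscSum (toComplex a) F)
    (hF : SInvariant (4 * w) F) : ∃ R : Polynomial (ZMod 2), 3 * R.natDegree ≤ w ∧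
      modTwo a = Polynomial.aeval (modTwo deltaSeries) R := by
  induction w using Nat.strong_induction_on generalizing a F with
  | _ w ih =>
  obtain ⟨F₄, hF₄, hS₄, -⟩ := exists_discSum_E₄
  set e : ℤ⟦X⟧ := 1 + 240 * sigmaSeries 3 with he
  set a₀ : ℤ := constantCoeff a with ha₀
  have he0 : constantCoeff e = 1 := by
    simp [he, sigmaSeries]
  obtain ⟨b, hb⟩ := X_dvd_iff.2 (show constantCoeff (a - C a₀ * e ^ w) = 0 by simp [he0, ha₀])
  have hG : DiscSum (toComplex (a - C a₀ * e ^ w)) (fun q ↦ F q - a₀ * F₄ q ^ w) := by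
    simpa using! ha.sub ((DiscSum.const (a₀ : ℂ)).mul (hF₄.pow w))
  have hSG : SInvariant (4 * w) (fun q ↦ F q - a₀ * F₄ q ^ w) :=
    hF.sub ((hS₄.pow w).const_mul _)
  rw [hb, map_mul, show toComplex X = X from map_X _] at hG
  have hinv : DiscSum (toComplex (invOfUnit (pentagonalSeries ℤ) 1)) (fun q ↦ (eulerProd q)⁻¹) :=
    discSum_eulerProd.toComplex_invOfUnit (constantCoeff_pentagonalSeries ℤ)
      fun q hq ↦ eulerProd_ne_zero hq
  have hmul : pentagonalSeries ℤ * invOfUnit (pentagonalSeries ℤ) 1 = 1 :=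
    mul_invOfUnit _ _ (by simpa using constantCoeff_pentagonalSeries ℤ)
  have hc := hG.of_X_mul.mul (hinv.pow 24)
  rw [← map_pow, ← map_mul] at hc
  have hSc := (hSG.div sInvariant_delta).congr (G := fun q ↦
      (if q = 0 then coeff 0 (toComplex b) else (F q - a₀ * F₄ q ^ w) / q) *
        (eulerProd q)⁻¹ ^ 24) fun τ ↦ by
    rw [if_neg (qParam_ne_zero _), inv_pow, ← div_eq_mul_inv, div_div]
  have hab : a = C a₀ * e ^ w + deltaSeries * (b * invOfUnit (pentagonalSeries ℤ) 1 ^ 24) := by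
    have : deltaSeries * (b * invOfUnit (pentagonalSeries ℤ) 1 ^ 24) =
        X * b * (pentagonalSeries ℤ * invOfUnit (pentagonalSeries ℤ) 1) ^ 24 := by
      rw [deltaSeries]
      ring
    rw [this, hmul, ← hb]
    ring
  obtain ⟨R, hR, hR'⟩ : ∃ R : Polynomial (ZMod 2), 3 * (Polynomial.X * R).natDegree ≤ w ∧
      modTwo (b * invOfUnit (pentagonalSeries ℤ) 1 ^ 24) =
        Polynomial.aeval (modTwo deltaSeries) R := by
    rcases lt_or_ge w 3 with hw | hw
    · refine ⟨0, by simp, ?_⟩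
      have := hc.eq_zero_of_neg_weight hSc (by omega)
      rw [toComplex_injective (this.trans (map_zero _).symm)]
      simp
    · obtain ⟨R, h1, h2⟩ := ih (w - 3) (by omega) _ _ hc (by convert hSc using 1; omega)
      refine ⟨R, ?_, h2⟩
      have := Polynomial.natDegree_mul_le (p := Polynomial.X) (q := R)
      have := Polynomial.natDegree_X_le (R := ZMod 2)
      omega
  refine ⟨Polynomial.C (a₀ : ZMod 2) + Polynomial.X * R, ?_, ?_⟩
  · rwa [Polynomial.natDegree_C_add]
  · rw [hab, map_add, map_mul, map_pow, modTwo_E₄, map_mul, hR']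
    simp only [map_add, map_mul, Polynomial.aeval_X, Polynomial.aeval_C, one_pow, mul_one, map_C]
    rfl

theorem eta_neg_inv_pow_eight (τ : ℍ) : eta (-(τ : ℂ))⁻¹ ^ 8 = (τ : ℂ) ^ 4 * eta τ ^ 8 := by
  have hs {z : ℂ} (hz : z ≠ 0) : Complex.sqrt z ^ 8 = z ^ 4 := by
    rw [sqrt_eq_exp hz, ← Complex.exp_nat_mul,
      show ((8 : ℕ) : ℂ) * (Complex.log z / 2) = (4 : ℕ) * Complex.log z by push_cast; ring,
      Complex.exp_nat_mul, Complex.exp_log hz]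
  have h := eta_comp_eq_csqrt_I_inv τ.2
  have h' : eta (-(τ : ℂ))⁻¹ = (Complex.sqrt Complex.I)⁻¹ * (Complex.sqrt τ * eta τ) := by
    simpa [neg_div, inv_neg] using h
  rw [h', mul_pow, mul_pow, inv_pow, hs Complex.I_ne_zero, hs τ.ne_zero, Complex.I_pow_four]
  simp

theorem eta_add_one_pow_eight (z : ℂ) :
    eta (z + 1) ^ 8 = Complex.exp (2 * Real.pi * Complex.I / 3) * eta z ^ 8 := by
  rw [eta_eq_qParam_mul, eta_eq_qParam_mul, qParam_one_add_one, mul_pow, mul_pow, ← mul_assoc]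
  congr 1
  simp only [qParam, ← Complex.exp_nat_mul, ← Complex.exp_add]
  congr 1
  push_cast
  ring

/-- The exponent of the cubic character of `SL(2, ℤ)` by which `eta ^ 8` transforms. -/
def etaExponent (γ : SL(2, ℤ)) : ZMod 3 :=
  (γ 0 0 + γ 1 1) * γ 1 0 - γ 0 1 * γ 1 1 * (γ 1 0 ^ 2 - 1)

theorem etaExponent_S_mul (γ : SL(2, ℤ)) :
    etaExponent (ModularGroup.S * γ) = etaExponent γ := by
  have h := congrArg (Int.cast : ℤ → ZMod 3) γ.det_coe
  rw [Matrix.det_fin_two] at h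
  simp [etaExponent, ModularGroup.coe_S, Matrix.SpecialLinearGroup.coe_mul, Matrix.mul_apply,
    Fin.sum_univ_two]
  push_cast at h
  generalize ((γ 0 0 : ℤ) : ZMod 3) = a at *
  generalize ((γ 0 1 : ℤ) : ZMod 3) = b at *
  generalize ((γ 1 0 : ℤ) : ZMod 3) = c at *
  generalize ((γ 1 1 : ℤ) : ZMod 3) = d at *
  revert a b c d
  decide

theorem etaExponent_T_mul (γ : SL(2, ℤ)) :
    etaExponent (ModularGroup.T * γ) = etaExponent γ + 1 := by
  have h := congrArg (Int.cast : ℤ → ZMod 3) γ.det_coe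
  rw [Matrix.det_fin_two] at h
  simp [etaExponent, ModularGroup.coe_T, Matrix.SpecialLinearGroup.coe_mul, Matrix.mul_apply,
    Fin.sum_univ_two]
  push_cast at h
  generalize ((γ 0 0 : ℤ) : ZMod 3) = a at *
  generalize ((γ 0 1 : ℤ) : ZMod 3) = b at *
  generalize ((γ 1 0 : ℤ) : ZMod 3) = c at *
  generalize ((γ 1 1 : ℤ) : ZMod 3) = d at *
  revert a b c d
  decide

theorem exists_eta_smul_pow_eight (γ : SL(2, ℤ)) :
    ∃ n : ℤ, (n : ZMod 3) = etaExponent γ ∧ ∀ τ : ℍ,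
      eta ((γ • τ : ℍ) : ℂ) ^ 8 =
        Complex.exp (2 * Real.pi * Complex.I / 3) ^ n * denom γ τ ^ 4 * eta τ ^ 8 := by
  set ω := Complex.exp (2 * Real.pi * Complex.I / 3) with hω
  have hω0 : ω ≠ 0 := Complex.exp_ne_zero _
  set P : SL(2, ℤ) → Prop := fun γ ↦ ∃ n : ℤ, (n : ZMod 3) = etaExponent γ ∧ ∀ τ : ℍ,
      eta ((γ • τ : ℍ) : ℂ) ^ 8 = ω ^ n * denom γ τ ^ 4 * eta τ ^ 8 with hP
  have hS (γ) : P (ModularGroup.S * γ) ↔ P γ := by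
    refine exists_congr fun n ↦ ?_
    rw [etaExponent_S_mul]
    refine and_congr Iff.rfl (forall_congr' fun τ ↦ ?_)
    have h1 : ((ModularGroup.S * γ) • τ : ℍ) = ModularGroup.S • (γ • τ) := mul_smul _ _ _
    have h2 : denom (ModularGroup.S * γ : SL(2, ℤ)) τ = ((γ • τ : ℍ) : ℂ) * denom γ τ := by
      have hne : (γ 1 0 : ℂ) * τ + γ 1 1 ≠ 0 := by
        simpa only [ModularGroup.denom_apply] using denom_ne_zero γ τ
      rw [ModularGroup.denom_apply, ModularGroup.denom_apply, coe_specialLinearGroup_apply]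
      simp [ModularGroup.coe_S, Matrix.mul_apply, Fin.sum_univ_two]
      rw [div_mul_cancel₀ _ hne]
    rw [h1, h2, modular_S_smul]
    change eta (-((γ • τ : ℍ) : ℂ))⁻¹ ^ 8 = _ ↔ _
    rw [eta_neg_inv_pow_eight, mul_pow, show ω ^ n * (((γ • τ : ℍ) : ℂ) ^ 4 * denom γ τ ^ 4) *
      eta τ ^ 8 = ((γ • τ : ℍ) : ℂ) ^ 4 * (ω ^ n * denom γ τ ^ 4 * eta τ ^ 8) by ring]
    exact mul_right_inj' (pow_ne_zero _ (γ • τ).ne_zero)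
  have hT (γ) : P (ModularGroup.T * γ) ↔ P γ := by
    refine ((Equiv.addRight (1 : ℤ)).exists_congr fun n ↦ ?_).symm
    rw [etaExponent_T_mul]
    refine and_congr (by simp) (forall_congr' fun τ ↦ ?_)
    have h1 : ((ModularGroup.T * γ) • τ : ℍ) = ModularGroup.T • (γ • τ) := mul_smul _ _ _
    have h2 : denom (ModularGroup.T * γ : SL(2, ℤ)) τ = denom γ τ := by
      rw [ModularGroup.denom_apply, ModularGroup.denom_apply]
      simp
    rw [h1, h2, modular_T_smul, coe_vadd, add_comm, Complex.ofReal_one, eta_add_one_pow_eight,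
      Equiv.coe_addRight, zpow_add_one₀ hω0, show ω ^ n * ω * denom γ τ ^ 4 * eta τ ^ 8 =
        ω * (ω ^ n * denom γ τ ^ 4 * eta τ ^ 8) by ring]
    exact (mul_right_inj' hω0).symm
  have hmem : γ ∈ Subgroup.closure {ModularGroup.S, ModularGroup.T} := by
    simp [SpecialLinearGroup.SL2Z_generators]
  change P γ
  induction hmem using Subgroup.closure_induction_left with
  | one => exact ⟨0, by simp [etaExponent], fun τ ↦ by simp⟩
  | mul_left x hx y hy ih =>
    rcases hx with rfl | rfl
    · exact (hS y).2 ih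
    · exact (hT y).2 ih
  | inv_mul_cancel x hx y hy ih =>
    rcases hx with rfl | rfl
    · exact (hS _).1 (by simpa using ih)
    · exact (hT _).1 (by simpa using ih)

/-- The relation between the values of `eta ^ 8` at two translates of `τ / ℓ`. -/
theorem eta_div_pow_eight {ℓ : ℤ} (hℓ : 0 < ℓ) {u v : ℤ} (h : ℓ ∣ 1 + 9 * u * v) (τ : ℍ) :
    eta (((-(τ : ℂ))⁻¹ + 3 * u) / ℓ) ^ 8 = (τ : ℂ) ^ 4 * eta ((τ + 3 * v) / ℓ) ^ 8 := by
  obtain ⟨b, hb⟩ := h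
  have hℓ' : (ℓ : ℂ) ≠ 0 := by exact_mod_cast hℓ.ne'
  have hℝ : (0 : ℝ) < ℓ := by exact_mod_cast hℓ
  let γ : SL(2, ℤ) := ⟨!![3 * u, -b; ℓ, -(3 * v)], by rw [Matrix.det_fin_two_of]; linarith⟩
  let σ : ℍ := ⟨(τ + 3 * v) / ℓ, by
    have h1 : ((τ : ℂ) + 3 * v) / ℓ = ((ℓ : ℝ)⁻¹ : ℝ) * ((τ : ℂ) + ((3 * v : ℝ) : ℂ)) := by
      push_cast; field_simp
    rw [h1, Complex.im_ofReal_mul]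
    simp only [Complex.add_im, Complex.ofReal_im, add_zero]
    exact mul_pos (inv_pos.2 hℝ) τ.im_pos⟩
  obtain ⟨n, hn, H⟩ := exists_eta_smul_pow_eight γ
  have he : etaExponent γ = 0 := by
    simp [etaExponent, γ, show (3 : ZMod 3) = 0 from rfl]
  rw [he, ZMod.intCast_zmod_eq_zero_iff_dvd] at hn
  obtain ⟨m, rfl⟩ := hn
  have hω : Complex.exp (2 * Real.pi * Complex.I / 3) ^ ((3 : ℕ) * m : ℤ) = 1 := by
    rw [zpow_mul, zpow_natCast, ← Complex.exp_nat_mul]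
    rw [show ((3 : ℕ) : ℂ) * (2 * Real.pi * Complex.I / 3) = 2 * Real.pi * Complex.I by
      push_cast; ring, Complex.exp_two_pi_mul_I, one_zpow]
  have hσ : (σ : ℂ) = (τ + 3 * v) / ℓ := rfl
  have hd : denom γ σ = τ := by
    rw [ModularGroup.denom_apply, hσ]
    simp [γ]
    field_simp
    ring
  have hs : ((γ • σ : ℍ) : ℂ) = ((-(τ : ℂ))⁻¹ + 3 * u) / ℓ := by
    have hb' : (1 + 9 * u * v : ℂ) = ℓ * b := by exact_mod_cast hb
    have hτ := τ.ne_zero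
    rw [coe_specialLinearGroup_apply, hσ]
    simp [γ]
    have : (ℓ : ℂ) * ((τ + 3 * v) / ℓ) + -(3 * v) = τ := by field_simp; ring
    rw [this]
    field_simp
    linear_combination hb'
  have := H σ
  rw [hω, one_mul, hd, hs, hσ] at this
  exact this

/-- `eta (ℓ z) ^ (-8)` plus `ℓ ^ 4` times the sum of the values of `eta ^ (-8)` at the translates
`(z + 3 i) / ℓ`. -/
noncomputable def etaTrace (ℓ : ℕ) (z : ℂ) : ℂ :=
  (ModularForm.eta (ℓ * z) ^ 8)⁻¹ +
    ℓ ^ 4 * ∑ i ∈ Finset.range ℓ, (ModularForm.eta ((z + 3 * i) / ℓ) ^ 8)⁻¹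

theorem sum_eta_div_pow_eight_neg_inv {ℓ : ℕ} (hℓ : ℓ.Prime) (h5 : 5 ≤ ℓ) (τ : ℍ) :
    ∑ i ∈ (Finset.range ℓ).erase 0, (eta (((-(τ : ℂ))⁻¹ + 3 * i) / ℓ) ^ 8)⁻¹ =
      ((τ : ℂ) ^ 4)⁻¹ * ∑ i ∈ (Finset.range ℓ).erase 0, (eta ((τ + 3 * i) / ℓ) ^ 8)⁻¹ := by
  have : Fact ℓ.Prime := ⟨hℓ⟩
  have h9 : (9 : ZMod ℓ) ≠ 0 := by
    rw [← Nat.cast_ofNat, Ne, ZMod.natCast_eq_zero_iff]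
    intro h
    have h3 : ℓ ∣ 3 := hℓ.dvd_of_dvd_pow (show ℓ ∣ 3 ^ 2 from h)
    exact absurd (Nat.le_of_dvd (by lia) h3) (by lia)
  have hne {i : ℕ} (hi : i ∈ (Finset.range ℓ).erase 0) : (i : ZMod ℓ) ≠ 0 := by
    rw [Finset.mem_erase, Finset.mem_range] at hi
    rw [Ne, ZMod.natCast_eq_zero_iff]
    exact fun h ↦ hi.1 (Nat.eq_zero_of_dvd_of_lt h hi.2)
  let σ (i : ℕ) : ℕ := (-(9 * (i : ZMod ℓ))⁻¹).val
  have hσ (i : ℕ) : (σ i : ZMod ℓ) = -(9 * (i : ZMod ℓ))⁻¹ := ZMod.natCast_zmod_val _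
  have hmem : ∀ i ∈ (Finset.range ℓ).erase 0, σ i ∈ (Finset.range ℓ).erase 0 := by
    intro i hi
    rw [Finset.mem_erase, Finset.mem_range, Ne, ZMod.val_eq_zero]
    exact ⟨neg_ne_zero.2 (inv_ne_zero (mul_ne_zero h9 (hne hi))), ZMod.val_lt _⟩
  have hinv : ∀ i ∈ (Finset.range ℓ).erase 0, σ (σ i) = i := by
    intro i hi
    have h0 := hne hi
    rw [Finset.mem_erase, Finset.mem_range] at hi
    have h1 : -(9 * (σ i : ZMod ℓ))⁻¹ = i := by
      rw [hσ]
      field_simp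
    change (-(9 * (σ i : ZMod ℓ))⁻¹).val = i
    rw [h1, ZMod.val_cast_of_lt hi.2]
  rw [Finset.mul_sum]
  refine Finset.sum_nbij' σ σ hmem hmem hinv hinv fun i hi ↦ ?_
  have hdvd : (ℓ : ℤ) ∣ 1 + 9 * (i : ℤ) * (σ i : ℤ) := by
    rw [← ZMod.intCast_zmod_eq_zero_iff_dvd]
    have h0 := hne hi
    push_cast
    rw [hσ]
    field_simp
    ring
  have h := eta_div_pow_eight (by exact_mod_cast hℓ.pos) hdvd τ
  push_cast at h
  rw [h, mul_inv]

theorem etaTrace_neg_inv {ℓ : ℕ} (hℓ : ℓ.Prime) (h5 : 5 ≤ ℓ) (τ : ℍ) :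
    etaTrace ℓ (-(τ : ℂ))⁻¹ = ((τ : ℂ) ^ 4)⁻¹ * etaTrace ℓ τ := by
  have h0 : (0 : ℝ) < ℓ := by exact_mod_cast hℓ.pos
  have hℓ0 : (ℓ : ℂ) ≠ 0 := by exact_mod_cast hℓ.ne_zero
  have hτ := τ.ne_zero
  have h1 : eta (ℓ * (-(τ : ℂ))⁻¹) ^ 8 = ((τ : ℂ) / ℓ) ^ 4 * eta (τ / ℓ) ^ 8 := by
    have h := eta_neg_inv_pow_eight ⟨(τ : ℂ) / ℓ, by
      rw [Complex.div_natCast_im]; exact div_pos τ.im_pos h0⟩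
    rwa [show (-(((⟨(τ : ℂ) / ℓ, _⟩ : ℍ)) : ℂ))⁻¹ = ℓ * (-(τ : ℂ))⁻¹ by
      field_simp] at h
  have h2 : eta ((-(τ : ℂ))⁻¹ / ℓ) ^ 8 = (ℓ * (τ : ℂ)) ^ 4 * eta (ℓ * τ) ^ 8 := by
    have h := eta_neg_inv_pow_eight ⟨ℓ * (τ : ℂ), by
      rw [← Complex.ofReal_natCast, Complex.im_ofReal_mul]; exact mul_pos h0 τ.im_pos⟩
    rwa [show (-(((⟨ℓ * (τ : ℂ), _⟩ : ℍ)) : ℂ))⁻¹ = (-(τ : ℂ))⁻¹ / ℓ by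
      field_simp] at h
  have h3 : 0 ∈ Finset.range ℓ := Finset.mem_range.2 hℓ.pos
  unfold etaTrace
  rw [← Finset.add_sum_erase _ _ h3, ← Finset.add_sum_erase _ _ h3,
    sum_eta_div_pow_eight_neg_inv hℓ h5 τ, h1]
  simp only [Nat.cast_zero, mul_zero, add_zero, h2, mul_inv, div_pow, mul_pow, inv_div]
  generalize ∑ i ∈ (Finset.range ℓ).erase 0, (eta ((τ + 3 * i) / ℓ) ^ 8)⁻¹ = s
  generalize (eta (ℓ * (τ : ℂ)) ^ 8)⁻¹ = a
  generalize (eta ((τ : ℂ) / ℓ) ^ 8)⁻¹ = b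
  field_simp
  ring

/-- The integral power series of `eta ^ (8 ℓ)` times `etaTrace ℓ`, where `D = (ℓ ^ 2 - 1) / 3`. -/
noncomputable def traceSeries (ℓ : ℕ) (h0 : ℓ ≠ 0) (D : ℕ) : ℤ⟦X⟧ :=
  pentagonalSeries ℤ ^ (8 * ℓ) *
    ((invOfUnit (pentagonalSeries ℤ) 1 ^ 8).expand ℓ h0 +
      (ℓ : ℤ⟦X⟧) ^ 5 * .mk fun m ↦ coeff (ℓ * m) (X ^ D * invOfUnit (pentagonalSeries ℤ) 1 ^ 8))

theorem eta_pow_mul_inv_eta_pow {ℓ D : ℕ} (h0 : ℓ ≠ 0) (hD : 3 * D + 1 = ℓ ^ 2) (τ : ℂ) (i : ℕ) :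
    eta τ ^ (8 * ℓ) * (eta ((τ + 3 * i) / ℓ) ^ 8)⁻¹ = eulerProd (qParam 1 τ) ^ (8 * ℓ) *
      (qParam 1 ((τ + 3 * i) / ℓ) ^ D * (eulerProd (qParam 1 ((τ + 3 * i) / ℓ)) ^ 8)⁻¹) := by
  have hℓ0 : (ℓ : ℂ) ≠ 0 := by exact_mod_cast h0
  set z := (τ + 3 * i) / ℓ with hz
  have h1 : qParam 24 τ ^ (8 * ℓ) = qParam 24 z ^ (8 * ℓ ^ 2) := by
    simp only [qParam, ← Complex.exp_nat_mul]
    rw [Complex.exp_eq_exp_iff_exists_int]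
    refine ⟨-(ℓ * i), ?_⟩
    rw [hz]
    push_cast
    field_simp
    ring
  have h2 : qParam 24 z ≠ 0 := Complex.exp_ne_zero _
  rw [eta_eq_qParam_mul, eta_eq_qParam_mul, mul_pow, mul_pow, h1, ← hD, ← qParam_pow z, mul_inv]
  field_simp
  ring

theorem eta_pow_mul_etaTrace {ℓ D : ℕ} (h0 : ℓ ≠ 0) (hD : 3 * D + 1 = ℓ ^ 2) (τ : ℂ) :
    eta τ ^ (8 * ℓ) * etaTrace ℓ τ = eulerProd (qParam 1 τ) ^ (8 * ℓ) *
      ((eulerProd (qParam 1 τ ^ ℓ) ^ 8)⁻¹ + ℓ ^ 4 * ∑ i ∈ Finset.range ℓ,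
        (qParam 1 ((τ + 3 * i) / ℓ) ^ D * (eulerProd (qParam 1 ((τ + 3 * i) / ℓ)) ^ 8)⁻¹)) := by
  have h1 : eta τ ^ (8 * ℓ) * (eta (ℓ * τ) ^ 8)⁻¹ =
      eulerProd (qParam 1 τ) ^ (8 * ℓ) * (eulerProd (qParam 1 τ ^ ℓ) ^ 8)⁻¹ := by
    have h2 : qParam 24 (ℓ * τ) = qParam 24 τ ^ ℓ := by
      simp only [qParam, ← Complex.exp_nat_mul]
      ring_nf
    have h3 : qParam 1 (ℓ * τ) = qParam 1 τ ^ ℓ := by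
      simp only [qParam, ← Complex.exp_nat_mul]
      ring_nf
    have h4 : qParam 24 τ ≠ 0 := Complex.exp_ne_zero _
    rw [eta_eq_qParam_mul, eta_eq_qParam_mul, mul_pow, mul_pow, h2, h3, mul_inv, ← pow_mul,
      mul_comm ℓ 8]
    field_simp
  have h2 : eta τ ^ (8 * ℓ) * ∑ i ∈ Finset.range ℓ, (eta ((τ + 3 * i) / ℓ) ^ 8)⁻¹ =
      eulerProd (qParam 1 τ) ^ (8 * ℓ) * ∑ i ∈ Finset.range ℓ,
        (qParam 1 ((τ + 3 * i) / ℓ) ^ D * (eulerProd (qParam 1 ((τ + 3 * i) / ℓ)) ^ 8)⁻¹) := by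
    simp only [Finset.mul_sum]
    exact Finset.sum_congr rfl fun i _ ↦ eta_pow_mul_inv_eta_pow h0 hD τ i
  rw [etaTrace]
  linear_combination h1 + ℓ ^ 4 * h2

theorem qParam_div_pow {ℓ : ℕ} (h0 : ℓ ≠ 0) (τ : ℂ) : qParam 1 (τ / ℓ) ^ ℓ = qParam 1 τ := by
  have hℓ0 : (ℓ : ℂ) ≠ 0 := by exact_mod_cast h0
  simp only [qParam, ← Complex.exp_nat_mul]
  congr 1
  field_simp

theorem exp_pow_mul_qParam_div {ℓ : ℕ} (h0 : ℓ ≠ 0) (τ : ℂ) (i : ℕ) :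
    Complex.exp (2 * Real.pi * Complex.I * ((3 : ℕ) / ℓ)) ^ i * qParam 1 (τ / ℓ) =
      qParam 1 ((τ + 3 * i) / ℓ) := by
  have hℓ0 : (ℓ : ℂ) ≠ 0 := by exact_mod_cast h0
  simp only [qParam, ← Complex.exp_nat_mul, ← Complex.exp_add]
  congr 1
  push_cast
  field_simp
  ring

theorem norm_qParam_div_lt_one {ℓ : ℕ} (h0 : ℓ ≠ 0) {τ : ℂ} (hτ : 0 < τ.im) :
    ‖qParam 1 (τ / ℓ)‖ < 1 := by
  have h : 0 < (τ / ℓ).im := by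
    rw [Complex.div_natCast_im]
    exact div_pos hτ (by exact_mod_cast Nat.pos_of_ne_zero h0)
  exact norm_qParam_lt_one one_pos h

theorem toComplex_traceSeries {ℓ : ℕ} (h0 : ℓ ≠ 0) (D : ℕ) :
    toComplex (traceSeries ℓ h0 D) = toComplex (pentagonalSeries ℤ) ^ (8 * ℓ) *
    ((toComplex (invOfUnit (pentagonalSeries ℤ) 1) ^ 8).expand ℓ h0 + C ((ℓ : ℂ) ^ 5) *
      .mk fun m ↦ coeff (ℓ * m)
        (X ^ D * toComplex (invOfUnit (pentagonalSeries ℤ) 1) ^ 8)) := by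
  have h1 : toComplex (.mk fun m ↦ coeff (ℓ * m)
      (X ^ D * invOfUnit (pentagonalSeries ℤ) 1 ^ 8)) = .mk fun m ↦ coeff (ℓ * m)
        (X ^ D * toComplex (invOfUnit (pentagonalSeries ℤ) 1) ^ 8) := by
    ext n
    rw [coeff_map, coeff_mk, coeff_mk, ← coeff_map, map_mul, map_pow, map_pow, map_X]
  have h2 : toComplex ((invOfUnit (pentagonalSeries ℤ) 1 ^ 8).expand ℓ h0) =
      (toComplex (invOfUnit (pentagonalSeries ℤ) 1) ^ 8).expand ℓ h0 := by
    rw [← map_pow toComplex]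
    exact map_expand _ _ _ _
  have h3 : C ((ℓ : ℂ) ^ 5) = (ℓ : ℂ⟦X⟧) ^ 5 := by rw [map_pow, map_natCast]
  rw [traceSeries, map_mul, map_add, map_mul, h1, h2, map_pow toComplex, map_pow toComplex, h3,
    map_natCast]

theorem exists_discSum_traceSeries {ℓ D w : ℕ} (hℓ : ℓ.Prime) (h5 : 5 ≤ ℓ)
    (hD : 3 * D + 1 = ℓ ^ 2) (hw : w + 1 = ℓ) :
    ∃ F, DiscSum (toComplex (traceSeries ℓ hℓ.ne_zero D)) F ∧ SInvariant (4 * w) F := by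
  have h0 := hℓ.ne_zero
  have hℓ0 : (ℓ : ℂ) ≠ 0 := by exact_mod_cast h0
  have : NeZero ℓ := ⟨h0⟩
  have hinv : DiscSum (toComplex (invOfUnit (pentagonalSeries ℤ) 1))
      fun q ↦ (eulerProd q)⁻¹ :=
    discSum_eulerProd.toComplex_invOfUnit (constantCoeff_pentagonalSeries ℤ)
      fun q hq ↦ eulerProd_ne_zero hq
  have hζ : IsPrimitiveRoot (Complex.exp (2 * Real.pi * Complex.I * ((3 : ℕ) / ℓ))) ℓ := by
    refine Complex.isPrimitiveRoot_exp_of_coprime 3 ℓ h0 ?_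
    refine Nat.Coprime.symm ((Nat.Prime.coprime_iff_not_dvd hℓ).2 fun h ↦ ?_)
    exact absurd (Nat.le_of_dvd (by lia) h) (by lia)
  obtain ⟨G, hG, hsum⟩ := DiscSum.sum_rotate hζ ((DiscSum.X.pow D).mul (hinv.pow 8))
  have hF := (discSum_eulerProd.pow (8 * ℓ)).mul
    (((hinv.pow 8).expand h0).add ((DiscSum.const ((ℓ : ℂ) ^ 5)).mul hG))
  rw [← toComplex_traceSeries] at hF
  refine ⟨_, hF, ?_⟩
  have key {τ : ℂ} (hτ : 0 < τ.im) : eulerProd (qParam 1 τ) ^ (8 * ℓ) *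
      ((eulerProd (qParam 1 τ ^ ℓ))⁻¹ ^ 8 + ℓ ^ 5 * G (qParam 1 τ)) =
        eta τ ^ (8 * ℓ) * etaTrace ℓ τ := by
    have hG' := hsum (qParam 1 (τ / ℓ)) (norm_qParam_div_lt_one h0 hτ)
    simp only [exp_pow_mul_qParam_div h0, qParam_div_pow h0, inv_pow] at hG'
    rw [eta_pow_mul_etaTrace h0 hD, hG']
    ring
  intro τ
  have him : 0 < (-(τ : ℂ))⁻¹.im := τ.im_inv_neg_coe_pos
  have hτ := τ.ne_zero
  simp only [key him, key τ.im_pos]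
  rw [etaTrace_neg_inv hℓ h5, pow_mul, eta_neg_inv_pow_eight, mul_pow, ← pow_mul, ← pow_mul,
    show 4 * ℓ = 4 * w + 4 by lia, pow_add,
    show ((τ : ℂ) ^ (4 * (w : ℤ))) = (τ : ℂ) ^ (4 * w) by exact_mod_cast rfl]
  field_simp

theorem map_derivative {R S : Type*} [CommSemiring R] [CommSemiring S] (f : R →+* S) (a : R⟦X⟧) :
    map f (derivative R a) = derivative S (map f a) := by
  ext n
  simp [coeff_derivative]

theorem exists_discSum_E2 : ∃ F, DiscSum (toComplex (1 - 24 * sigmaSeries 1)) F ∧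
    ∀ τ : ℍ, F (qParam 1 τ) = EisensteinSeries.E2 τ := by
  refine DiscSum.of_hasSum_qParam fun τ ↦
    (EisensteinSeries.hasSum_qExpansion_E2 τ).of_forall_eq fun n ↦ ?_
  have h24 : (24 : ℤ⟦X⟧) = C 24 := by simp
  rw [h24, coeff_map, map_sub, coeff_C_mul, coeff_one, sigmaSeries, coeff_mk, smul_eq_mul]
  split_ifs with h
  · simp [h]
  · simp
    left
    simp [qParam]

theorem qParam_mul_deriv_eulerProd (τ : ℍ) :
    24 * (qParam 1 τ * deriv eulerProd (qParam 1 τ)) =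
      (EisensteinSeries.E2 τ - 1) * eulerProd (qParam 1 τ) := by
  have hτ := norm_qParam_coe_lt_one τ
  have hE : eulerProd (qParam 1 (τ : ℂ)) ≠ 0 := eulerProd_ne_zero hτ
  have hdE : DifferentiableAt ℂ eulerProd (qParam 1 (τ : ℂ)) :=
    discSum_eulerProd.differentiableOn.differentiableAt
      (Metric.isOpen_ball.mem_nhds (by simpa using hτ))
  have hq (h : ℝ) (z : ℂ) : HasDerivAt (qParam h) (2 * Real.pi * Complex.I / h * qParam h z) z := by
    have := ((hasDerivAt_id z).const_mul (2 * Real.pi * Complex.I)).div_const (h : ℂ) |>.cexp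
    convert! this using 1
    simp [qParam]
    ring
  have h := logDeriv_eta_eq_E2 τ
  have heta : eta = fun z ↦ qParam 24 z * (eulerProd ∘ qParam 1) z := rfl
  rw [heta, logDeriv_mul (f := qParam 24) (g := eulerProd ∘ qParam 1) (τ : ℂ)
    (qParam_ne_zero _) hE (hq 24 τ).differentiableAt
    (hdE.comp _ (hq 1 τ).differentiableAt), logDeriv_comp hdE (hq 1 τ).differentiableAt,
    logDeriv_apply, logDeriv_apply, (hq 24 τ).deriv, (hq 1 τ).deriv] at h
  have h24 : qParam 24 (τ : ℂ) ≠ 0 := qParam_ne_zero _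
  push_cast at h
  field_simp at h
  linear_combination h / 24

theorem charZero_int_powerSeries : CharZero ℤ⟦X⟧ :=
  charZero_of_injective_ringHom C_injective

theorem X_mul_derivative_pentagonalSeries :
    X * derivative ℤ (pentagonalSeries ℤ) = -(sigmaSeries 1 * pentagonalSeries ℤ) := by
  obtain ⟨F, hF, hF'⟩ := exists_discSum_E2
  have h1 := (DiscSum.const 24).mul discSum_eulerProd.derivative
  have h2 := (hF.sub (DiscSum.const 1)).mul discSum_eulerProd
  have h := h1.unique_of_upperHalfPlane h2 fun τ ↦ by
    rw [hF', qParam_mul_deriv_eulerProd]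
  have h3 : toComplex (24 * (X * derivative ℤ (pentagonalSeries ℤ))) =
      toComplex ((1 - 24 * sigmaSeries 1 - 1) * pentagonalSeries ℤ) := by
    rw [map_mul, map_mul, map_mul, map_sub _ _ 1, map_one, map_derivative, map_X,
      map_ofNat toComplex 24, ← map_ofNat (C : ℂ →+* ℂ⟦X⟧) 24, h, map_one]
  have h4 := toComplex_injective h3
  have := charZero_int_powerSeries
  refine mul_left_cancel₀ (OfNat.ofNat_ne_zero 24) ?_
  rw [h4]
  ring

theorem E₄_cube_sub_E₆_sq :
    (1 + 240 * sigmaSeries 3) ^ 3 - (1 - 504 * sigmaSeries 5) ^ 2 = 1728 * deltaSeries := by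
  obtain ⟨F₄, hF₄, -, h₄⟩ := exists_discSum_E₄
  obtain ⟨F₆, hF₆, -, h₆⟩ := exists_discSum_E₆
  have h := ((hF₄.pow 3).sub (hF₆.pow 2)).unique_of_upperHalfPlane
    ((DiscSum.const 1728).mul discSum_deltaSeries) fun τ ↦ by
      rw [h₄, h₆, ← discriminant_eq_eulerProd, discriminant_eq_E₄_cube_sub_E₆_sq]
      ring
  refine toComplex_injective ?_
  rw [map_sub, map_pow, map_pow, h, map_mul, map_ofNat toComplex 1728,
    ← map_ofNat (C : ℂ →+* ℂ⟦X⟧) 1728]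

theorem exists_sigmaSeries_eq_add {m : ℤ} {k l : ℕ} (h : ∀ d : ℤ, m ∣ d ^ k - d ^ l) :
    ∃ c : ℤ⟦X⟧, sigmaSeries k = sigmaSeries l + C m * c := by
  have (n : ℕ) : m ∣ (ArithmeticFunction.sigma k n : ℤ) - ArithmeticFunction.sigma l n := by
    simp only [ArithmeticFunction.sigma_apply, Nat.cast_sum, Nat.cast_pow]
    rw [← Finset.sum_sub_distrib]
    exact Finset.dvd_sum fun d _ ↦ h d
  choose c hc using this
  refine ⟨.mk c, ?_⟩
  ext n
  rw [map_add, coeff_C_mul, sigmaSeries, sigmaSeries, coeff_mk, coeff_mk, coeff_mk]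
  linarith [hc n]

theorem modTwo_sigmaSeries_three : modTwo (sigmaSeries 3) = modTwo (sigmaSeries 1) := by
  obtain ⟨c, hc⟩ := exists_sigmaSeries_eq_add (m := 2) (k := 3) (l := 1) fun d ↦ by
    rw [show d ^ 3 - d ^ 1 = (d - 1) * d * (d + 1) by ring]
    exact (even_iff_two_dvd.1 (by simpa using Int.even_mul_succ_self (d - 1))).mul_right _
  rw [hc, map_add, map_mul, map_C, show (Int.castRingHom (ZMod 2)) 2 = 0 from rfl]
  simp

theorem modTwo_sigmaSeries_one_sq_add :
    modTwo (sigmaSeries 1) ^ 2 + modTwo (sigmaSeries 1) = modTwo deltaSeries := by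
  obtain ⟨c, hc⟩ := exists_sigmaSeries_eq_add (m := 24) (k := 5) (l := 3) fun d ↦ by
    have : ∀ x : ZMod 24, x ^ 5 - x ^ 3 = 0 := by decide
    have h := this d
    exact (ZMod.intCast_zmod_eq_zero_iff_dvd _ 24).1 (by exact_mod_cast h)
  have h := E₄_cube_sub_E₆_sq
  set A := sigmaSeries 3
  rw [hc, show (C (24 : ℤ) : ℤ⟦X⟧) = 24 by simp] at h
  have h' : A ^ 2 + A = deltaSeries +
      2 * (-7 * c + 24 * A ^ 2 - 4000 * A ^ 3 + 3528 * A * c + 42336 * c ^ 2) := by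
    have := charZero_int_powerSeries
    refine mul_left_cancel₀ (OfNat.ofNat_ne_zero 1728) ?_
    linear_combination h
  have h2 : modTwo (A ^ 2 + A) = modTwo deltaSeries := by
    rw [h', map_add, map_mul, map_ofNat modTwo 2, two_eq_zero_zmod_two_powerSeries]
    simp
  rw [← h2, ← modTwo_sigmaSeries_three, map_add, map_pow]

open scoped PowerSeries.WithPiTopology in
theorem mk_card_partition_mul_pentagonalSeries :
    (.mk fun n ↦ (Fintype.card n.Partition : ℤ)) * pentagonalSeries ℤ = 1 := by
  let : TopologicalSpace ℤ := ⊥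
  have : DiscreteTopology ℤ := ⟨rfl⟩
  have h := Nat.Partition.hasProd_powerSeriesMk_card_restricted ℤ (fun _ ↦ True)
  have h' := h.mul (WithPiTopology.hasProd_one_sub_X_pow ℤ)
  simp only [Nat.Partition.restricted, Finset.filter_true_of_mem, if_true, implies_true,
    Finset.card_univ] at h'
  refine h'.unique ?_
  convert! hasProd_one using 2 with i
  simp_rw [pow_mul]
  exact WithPiTopology.tsum_pow_mul_one_sub_of_constantCoeff_eq_zero (by simp)

theorem invOfUnit_pentagonalSeries :
    invOfUnit (pentagonalSeries ℤ) 1 = .mk fun n ↦ (Fintype.card n.Partition : ℤ) := by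
  have h : pentagonalSeries ℤ * invOfUnit (pentagonalSeries ℤ) 1 = 1 :=
    mul_invOfUnit _ _ (by simp [constantCoeff_pentagonalSeries])
  calc _ = (.mk fun n ↦ (Fintype.card n.Partition : ℤ)) * pentagonalSeries ℤ *
        invOfUnit (pentagonalSeries ℤ) 1 := by rw [mk_card_partition_mul_pentagonalSeries, one_mul]
    _ = _ := by rw [mul_assoc, h, mul_one]

theorem pow_eight_eq_expand (f : (ZMod 2)⟦X⟧) : f ^ 8 = f.expand 8 (by norm_num) := by
  have h (g : (ZMod 2)⟦X⟧) : g ^ 2 = g.expand 2 two_ne_zero := by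
    have := MvPowerSeries.map_frobenius_expand 2 two_ne_zero
      (f := (g : MvPowerSeries Unit (ZMod 2)))
    rw [ZMod.frobenius_zmod, MvPowerSeries.map_id] at this
    exact this.symm
  rw [show f ^ 8 = ((f ^ 2) ^ 2) ^ 2 by ring, h, h, h, ← expand_mul, ← expand_mul]

theorem coeff_aeval_X_mul {u : (ZMod 2)⟦X⟧} (hu : constantCoeff u = 1) (Q : Polynomial (ZMod 2))
    (i : ℕ) (h : ∀ j < i, Q.coeff j * coeff i ((X * u) ^ j) = 0) :
    coeff i (Polynomial.aeval (X * u) Q) = Q.coeff i := by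
  rw [Polynomial.aeval_eq_sum_range' (n := Q.natDegree + i + 1) (by lia), map_sum,
    Finset.sum_eq_single i]
  · rw [map_smul, mul_pow, coeff_X_pow_mul', if_pos le_rfl]
    simp [hu]
  · intro j _ hj
    rw [map_smul, smul_eq_mul]
    rcases hj.lt_or_gt with hj | hj
    · exact h j hj
    · rw [mul_pow, coeff_X_pow_mul', if_neg (by lia), mul_zero]
  · simp

theorem eq_zero_of_X_pow_dvd_aeval {u : (ZMod 2)⟦X⟧} (hu : constantCoeff u = 1)
    {Q : Polynomial (ZMod 2)} {N : ℕ} (hN : Q.natDegree < N)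
    (h : X ^ N ∣ Polynomial.aeval (X * u) Q) : Q = 0 := by
  ext i
  rw [Polynomial.coeff_zero]
  induction i using Nat.strong_induction_on with
  | _ i ih =>
    by_cases hi : i < N
    · rw [← coeff_aeval_X_mul hu Q i fun j hj ↦ by rw [ih j hj, zero_mul]]
      exact X_pow_dvd_iff.1 h i hi
    · exact Polynomial.coeff_eq_zero_of_natDegree_lt (by lia)

theorem X_pow_dvd_of_X_pow_dvd_pow_eight {f : (ZMod 2)⟦X⟧} {N : ℕ} (h : X ^ (8 * N) ∣ f ^ 8) :
    X ^ N ∣ f := by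
  rw [X_pow_dvd_iff] at h ⊢
  intro m hm
  rw [← coeff_expand_mul 8 (by norm_num) f m, ← pow_eight_eq_expand]
  exact h _ (by lia)

theorem add_pow_eight (f g : (ZMod 2)⟦X⟧) : (f + g) ^ 8 = f ^ 8 + g ^ 8 := by
  simp only [pow_eight_eq_expand, map_add]

theorem exists_eq_expand_eight {e f : (ZMod 2)⟦X⟧} (he : constantCoeff e = 1)
    {R : Polynomial (ZMod 2)} {N : ℕ} (hN : R.natDegree < 8 * N)
    (h : X ^ (8 * N) ∣ Polynomial.aeval (X * e ^ 8) R + f ^ 8) :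
    ∃ S : Polynomial (ZMod 2), R.natDegree = 8 * S.natDegree ∧
      X ^ N ∣ Polynomial.aeval (X * e ^ 8) S + f := by
  have hR (i : ℕ) (hi : ¬ 8 ∣ i) : R.coeff i = 0 := by
    induction i using Nat.strong_induction_on with
    | _ i ih =>
      by_cases hiN : i < 8 * N
      · have h0 := X_pow_dvd_iff.1 h i hiN
        rw [map_add, pow_eight_eq_expand f, coeff_expand_of_not_dvd _ _ _ hi, add_zero,
          coeff_aeval_X_mul (by simp [he])] at h0
        · exact h0
        · intro j hj
          by_cases hj8 : 8 ∣ j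
          · obtain ⟨m, rfl⟩ := hj8
            rw [mul_comm 8 m, pow_mul, pow_eight_eq_expand, coeff_expand_of_not_dvd _ _ _ hi,
              mul_zero]
          · rw [ih j hj hj8, zero_mul]
      · exact Polynomial.coeff_eq_zero_of_natDegree_lt (by lia)
  have hS : Polynomial.expand (ZMod 2) 8 (R.contract 8) = R := by
    ext i
    rw [Polynomial.coeff_expand (by norm_num), Polynomial.coeff_contract (by norm_num)]
    split_ifs with hi
    · rw [Nat.div_mul_cancel hi]
    · exact (hR i hi).symm
  refine ⟨R.contract 8, ?_, ?_⟩
  · nth_rw 1 [← hS]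
    rw [Polynomial.natDegree_expand, mul_comm]
  · have h8 : R.contract 8 ^ 8 = R := by
      nth_rw 2 [← hS]
      rw [show 8 = 2 * (2 * 2) from rfl, ← Polynomial.expand_expand, ← Polynomial.expand_expand]
      simp only [ZMod.expand_card, ← pow_mul]
    refine X_pow_dvd_of_X_pow_dvd_pow_eight ?_
    rwa [add_pow_eight, ← map_pow, h8]

theorem X_pow_dvd_X_mul_derivative {f : (ZMod 2)⟦X⟧} {N : ℕ} (h : X ^ N ∣ f) :
    X ^ N ∣ X * derivative (ZMod 2) f := by
  rw [X_pow_dvd_iff] at h ⊢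
  rintro (_ | m) hm
  · simp
  · rw [coeff_succ_X_mul, coeff_derivative, h _ hm, zero_mul]

theorem eq_zero_of_sq_add_X_mul_derivative_sq {S : Polynomial (ZMod 2)}
    (h : S ^ 2 + Polynomial.X * S.derivative ^ 2 + S * S.derivative = 0) : S = 0 := by
  by_contra hS
  have h' : S ^ 2 = Polynomial.X * S.derivative ^ 2 + S * S.derivative := by
    have h2 : (2 : Polynomial (ZMod 2)) = 0 := CharTwo.two_eq_zero
    linear_combination h - (Polynomial.X * S.derivative ^ 2 + S * S.derivative) * h2
  by_cases h0 : S.natDegree = 0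
  · rw [Polynomial.derivative_of_natDegree_zero h0] at h'
    simp [hS] at h'
  have hlt := Polynomial.natDegree_derivative_lt h0
  have hdeg := congrArg Polynomial.natDegree h'
  have hle := Polynomial.natDegree_add_le (Polynomial.X * S.derivative ^ 2) (S * S.derivative)
  have h1 := Polynomial.natDegree_mul_le (p := Polynomial.X) (q := S.derivative ^ 2)
  have h2 := Polynomial.natDegree_mul_le (p := S) (q := S.derivative)
  rw [Polynomial.natDegree_pow, Polynomial.natDegree_X] at h1
  rw [← hdeg, Polynomial.natDegree_pow] at hle
  rcases le_max_iff.1 hle with h | h <;> lia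

theorem modTwo_deltaSeries :
    modTwo deltaSeries = X * (pentagonalSeries (ZMod 2) ^ 3) ^ 8 := by
  rw [deltaSeries, map_mul, map_pow, map_X, map_pentagonalSeries, ← pow_mul]

theorem X_mul_derivative_modTwo_deltaSeries :
    X * derivative (ZMod 2) (modTwo deltaSeries) = modTwo deltaSeries := by
  have h2 := two_eq_zero_zmod_two_powerSeries
  rw [modTwo_deltaSeries]
  simp only [Derivation.leibniz, Derivation.leibniz_pow, derivative_X, smul_eq_mul, nsmul_eq_mul]
  rw [show ((8 : ℕ) : (ZMod 2)⟦X⟧) = 0 by push_cast; linear_combination 4 * h2]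
  ring

theorem X_mul_derivative_pentagonalSeries_zmod_two :
    X * derivative (ZMod 2) (pentagonalSeries (ZMod 2)) =
      modTwo (sigmaSeries 1) * pentagonalSeries (ZMod 2) := by
  have h := congrArg modTwo X_mul_derivative_pentagonalSeries
  rw [map_mul, map_neg, map_mul, map_derivative, map_X, map_pentagonalSeries] at h
  linear_combination h - modTwo (sigmaSeries 1) * pentagonalSeries (ZMod 2) *
    two_eq_zero_zmod_two_powerSeries

theorem not_X_pow_dvd_aeval_delta_add_pow {S : Polynomial (ZMod 2)} {ℓ N : ℕ} (hℓ : Odd ℓ)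
    (hN : 2 * S.natDegree + 1 < N) :
    ¬ X ^ N ∣ Polynomial.aeval (modTwo deltaSeries) S + pentagonalSeries (ZMod 2) ^ ℓ := by
  intro h
  have h2 := two_eq_zero_zmod_two_powerSeries
  have hE : constantCoeff (pentagonalSeries (ZMod 2)) = 1 := constantCoeff_pentagonalSeries _
  have hL := modTwo_sigmaSeries_one_sq_add
  have hΔ := X_mul_derivative_modTwo_deltaSeries
  have hdE := X_mul_derivative_pentagonalSeries_zmod_two
  have hd := X_pow_dvd_X_mul_derivative h
  have hℓ1 : (ℓ : (ZMod 2)⟦X⟧) = 1 := by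
    obtain ⟨m, rfl⟩ := hℓ
    push_cast
    linear_combination m * h2
  have hdS : X * derivative (ZMod 2) (Polynomial.aeval (modTwo deltaSeries) S +
      pentagonalSeries (ZMod 2) ^ ℓ) =
      Polynomial.aeval (modTwo deltaSeries) S.derivative * modTwo deltaSeries +
        modTwo (sigmaSeries 1) * pentagonalSeries (ZMod 2) ^ ℓ := by
    rw [map_add, Derivation.map_aeval, Derivation.leibniz_pow]
    simp only [smul_eq_mul, nsmul_eq_mul]
    obtain ⟨m, rfl⟩ := hℓ
    rw [hℓ1, Nat.add_sub_cancel]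
    linear_combination Polynomial.aeval (modTwo deltaSeries) S.derivative * hΔ +
      pentagonalSeries (ZMod 2) ^ (2 * m) * hdE
  rw [hdS] at hd
  set Δ := modTwo deltaSeries with hΔdef
  set L := modTwo (sigmaSeries 1)
  set G := Polynomial.aeval Δ S with hG
  set G' := Polynomial.aeval Δ S.derivative with hG'
  set e := pentagonalSeries (ZMod 2)
  have hk : X ^ N ∣ G' * Δ + L * G := by
    have := hd.add (h.mul_left L)
    convert! this using 1
    linear_combination -(L * e ^ ℓ) * h2
  have hQ : X ^ N ∣ Polynomial.aeval Δ
      (Polynomial.X * (S ^ 2 + Polynomial.X * S.derivative ^ 2 + S * S.derivative)) := by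
    simp only [map_mul, map_add, map_pow, Polynomial.aeval_X, ← hG, ← hG']
    convert! hk.mul_left (G' * Δ + L * G + G) using 1
    linear_combination -G ^ 2 * hL - (G' * Δ * L * G) * h2
  have hQ0 := eq_zero_of_X_pow_dvd_aeval (u := (e ^ 3) ^ 8) (by simp [hE]) (Q := Polynomial.X *
    (S ^ 2 + Polynomial.X * S.derivative ^ 2 + S * S.derivative)) (N := N) ?_ (by
      rwa [← modTwo_deltaSeries])
  · have hS : S = 0 := eq_zero_of_sq_add_X_mul_derivative_sq <| by
      simpa [Polynomial.X_ne_zero] using hQ0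
    rw [hG, hS, map_zero, zero_add] at h
    have := X_pow_dvd_iff.1 h 0 (by lia)
    simp [hE] at this
  · have hlt := Polynomial.natDegree_derivative_le S
    refine lt_of_le_of_lt ?_ hN
    by_cases h0 : S.natDegree = 0
    · rw [Polynomial.derivative_of_natDegree_zero h0]
      refine Polynomial.natDegree_mul_le.trans ?_
      simp [Polynomial.natDegree_pow, h0]
    · compute_degree
      lia

theorem modTwo_invOfUnit_pow_eight :
    modTwo (invOfUnit (pentagonalSeries ℤ) 1 ^ 8) =
      expand 8 (by norm_num) (.mk fun n ↦ (Fintype.card n.Partition : ZMod 2)) := by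
  rw [map_pow, invOfUnit_pentagonalSeries, pow_eight_eq_expand]
  congr 1

theorem modTwo_traceSeries {ℓ : ℕ} (h0 : ℓ ≠ 0) (hℓ : Odd ℓ) (D : ℕ) :
    modTwo (traceSeries ℓ h0 D) = (pentagonalSeries (ZMod 2) ^ ℓ) ^ 8 *
      (expand ℓ h0 (modTwo (invOfUnit (pentagonalSeries ℤ) 1 ^ 8)) +
        .mk fun m ↦ coeff (ℓ * m) (X ^ D * modTwo (invOfUnit (pentagonalSeries ℤ) 1 ^ 8))) := by
  have hℓ1 : (ℓ : (ZMod 2)⟦X⟧) = 1 := by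
    obtain ⟨m, rfl⟩ := hℓ
    push_cast
    linear_combination m * two_eq_zero_zmod_two_powerSeries
  rw [traceSeries, map_mul, map_add, map_mul, map_pow, map_pow modTwo (ℓ : ℤ⟦X⟧), map_natCast,
    hℓ1, one_pow, one_mul, map_pentagonalSeries, ← pow_mul, mul_comm 8 ℓ, ← map_expand]
  congr 2
  ext m
  rw [coeff_map, coeff_mk, coeff_mk, ← coeff_map, map_mul, map_pow, map_X]

theorem X_pow_dvd_modTwo_traceSeries_add {ℓ δ d k N : ℕ} (hℓ : ℓ.Prime) (hodd : Odd ℓ)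
    (hδ : δ < ℓ) (hk : ℓ * k = δ + d) (hN : N ≤ ℓ) (hNk : N ≤ d + k)
    (heven : ∀ m < d, Even (Fintype.card (ℓ * m + δ).Partition)) :
    X ^ (8 * N) ∣ modTwo (traceSeries ℓ hℓ.ne_zero (8 * d)) +
      (pentagonalSeries (ZMod 2) ^ ℓ) ^ 8 := by
  rw [modTwo_traceSeries _ hodd, ← mul_add_one, modTwo_invOfUnit_pow_eight]
  refine Dvd.dvd.mul_left (X_pow_dvd_iff.2 fun m hm ↦ ?_) _
  rw [map_add, map_add, coeff_mk, coeff_X_pow_mul']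
  have h2 : (if 8 * d ≤ ℓ * m then coeff (ℓ * m - 8 * d) (expand 8 (by norm_num)
      (.mk fun n ↦ (Fintype.card n.Partition : ZMod 2))) else 0) = 0 := by
    split_ifs with hle
    · rw [coeff_expand]
      split_ifs with h8
      · have h8m : 8 ∣ m := by
          have : 8 ∣ ℓ * m := by
            have := h8.add (dvd_mul_right 8 d)
            rwa [Nat.sub_add_cancel hle] at this
          refine Nat.Coprime.dvd_of_dvd_mul_left ?_ this
          exact Nat.Coprime.pow_left 3 (Nat.coprime_two_left.2 hodd)
        obtain ⟨m, rfl⟩ := h8m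
        have hkm : k ≤ m := by
          by_contra! hlt
          have : ℓ * (m + 1) ≤ ℓ * k := Nat.mul_le_mul_left _ hlt
          lia
        obtain ⟨j, rfl⟩ := Nat.exists_eq_add_of_le hkm
        rw [coeff_mk, show (ℓ * (8 * (k + j)) - 8 * d) / 8 = ℓ * j + δ by lia]
        exact (ZMod.natCast_eq_zero_iff_even).2 (heven j (by lia))
      · rfl
    · rfl
  rw [h2, add_zero, ← expand_mul, coeff_expand, coeff_one]
  by_cases hm0 : m = 0
  · rw [hm0, if_pos (dvd_zero _), if_pos rfl, Nat.zero_div, coeff_mk, Fintype.card_unique,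
      Nat.cast_one]
    rfl
  · rw [if_neg (Nat.not_dvd_of_pos_of_lt (by lia) (by lia)), if_neg hm0, add_zero]

theorem exists_odd_card_partition {ℓ δ d k : ℕ} (hℓ : ℓ.Prime) (h5 : 5 ≤ ℓ) (hδ0 : 0 < δ)
    (hδ : δ < ℓ) (hd : 24 * d + 1 = ℓ ^ 2) (hk : ℓ * k = δ + d) :
    ∃ m < d, Odd (Fintype.card (ℓ * m + δ).Partition) := by
  by_contra! h
  simp only [Nat.not_odd_iff_even] at h
  have hodd : Odd ℓ := hℓ.odd_of_ne_two (by lia)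
  obtain ⟨F, hF, hFS⟩ := exists_discSum_traceSeries (D := 8 * d) (w := ℓ - 1) hℓ h5 (by lia)
    (by lia)
  obtain ⟨R, hR, hRt⟩ := exists_modTwo_eq_aeval_delta _ _ F hF hFS
  have hk0 : 0 < k := Nat.pos_of_mul_pos_left (a := ℓ) (by lia)
  have hdℓ : 6 * (ℓ - 1) ≤ 24 * d := by
    obtain ⟨r, rfl⟩ := Nat.exists_eq_add_of_le h5
    rw [show 5 + r - 1 = r + 4 by lia]
    nlinarith
  have hdvd := X_pow_dvd_modTwo_traceSeries_add hℓ hodd hδ hk (min_le_left ℓ (d + k))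
    (min_le_right ℓ (d + k)) h
  rw [hRt, modTwo_deltaSeries] at hdvd
  obtain ⟨S, hS, hSd⟩ := exists_eq_expand_eight
    (by simp [constantCoeff_pentagonalSeries]) (by lia) hdvd
  rw [← modTwo_deltaSeries] at hSd
  exact not_X_pow_dvd_aeval_delta_add_pow hodd (by lia) hSd

end

/-- For every prime ℓ ≥ 5, there is m with 0 ≤ m < (ℓ² − 1)/24 for which
p(ℓm + δ_ℓ) is odd. -/
theorem odd_partition_value_small (ℓ : ℕ) (hℓ : ℓ.Prime) (h5 : 5 ≤ ℓ)
    (δ : ℕ) (hδ0 : 0 < δ) (hδℓ : δ < ℓ) (hδ : 24 * δ % ℓ = 1) :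
    ∃ m : ℕ, m < (ℓ ^ 2 - 1) / 24 ∧ Odd (partitionFn (ℓ * m + δ)) := by
  have h2 : ¬ 2 ∣ ℓ := fun h ↦ by
    have := (Nat.prime_dvd_prime_iff_eq Nat.prime_two hℓ).1 h
    lia
  have h3 : ¬ 3 ∣ ℓ := fun h ↦ by
    have := (Nat.prime_dvd_prime_iff_eq Nat.prime_three hℓ).1 h
    lia
  have hsq : ℓ ^ 2 % 24 = 1 := by
    have : ∀ r < 24, ¬ 2 ∣ r → ¬ 3 ∣ r → r ^ 2 % 24 = 1 := by decide
    rw [Nat.pow_mod]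
    exact this (ℓ % 24) (Nat.mod_lt _ (by norm_num)) (by lia) (by lia)
  obtain ⟨d, hd⟩ : ∃ d, 24 * d + 1 = ℓ ^ 2 := ⟨ℓ ^ 2 / 24, by lia⟩
  have hcop : ℓ.Coprime 24 := by
    rw [Nat.coprime_comm, show 24 = 2 ^ 3 * 3 by norm_num]
    exact ((Nat.prime_two.coprime_iff_not_dvd.2 h2).pow_left 3).mul_left
      (Nat.prime_three.coprime_iff_not_dvd.2 h3)
  obtain ⟨k, hk⟩ : ℓ ∣ δ + d := by
    refine hcop.dvd_of_dvd_mul_left (m := 24) ⟨24 * δ / ℓ + ℓ, ?_⟩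
    have := Nat.div_add_mod (24 * δ) ℓ
    linarith [pow_two ℓ, mul_add ℓ (24 * δ / ℓ) ℓ]
  rw [show (ℓ ^ 2 - 1) / 24 = d by lia]
  exact exists_odd_card_partition hℓ h5 hδ0 hδℓ hd hk.symm
end

section
/- Let t be a positive integer coprime to 6 and δ_t with 0 < δ_t < t, 24·δ_t ≡ 1 (mod t). If there exists m ≥ 0 with p(tm + δ_t) odd, then the smallest such m satisfies m < (t/24)·∏_{p | t, p prime} p. -/
namespace PartitionParity

open UpperHalfPlane Function.Periodic PowerSeries Finset
open scoped Manifold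

section Evaluation

variable {R : Type*} [CommRing R] [Algebra R ℂ]

/-- `EvalsTo P x v`: the series `P`, with coefficients mapped to `ℂ`, converges at `x` to `v`. -/
def EvalsTo (P : R⟦X⟧) (x v : ℂ) : Prop :=
  HasSum (fun n ↦ algebraMap R ℂ (P.coeff n) * x ^ n) v

namespace EvalsTo

variable {P Q : R⟦X⟧} {x v w : ℂ}

lemma add (hP : EvalsTo P x v) (hQ : EvalsTo Q x w) : EvalsTo (P + Q) x (v + w) := by
  simpa [EvalsTo, add_mul] using HasSum.add hP hQ

lemma sub (hP : EvalsTo P x v) (hQ : EvalsTo Q x w) : EvalsTo (P - Q) x (v - w) := by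
  simpa [EvalsTo, sub_mul] using HasSum.sub hP hQ

lemma mul (hP : EvalsTo P x v) (hQ : EvalsTo Q x w) : EvalsTo (P * Q) x (v * w) := by
  have hP' := summable_norm_iff.2 (HasSum.summable hP)
  have hQ' := summable_norm_iff.2 (HasSum.summable hQ)
  have hs := (summable_norm_sum_mul_antidiagonal_of_summable_norm hP' hQ').of_norm.hasSum
  rw [← tsum_mul_tsum_eq_tsum_sum_antidiagonal_of_summable_norm hP' hQ',
    HasSum.tsum_eq hP, HasSum.tsum_eq hQ] at hs
  unfold EvalsTo
  convert! hs using 2 with n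
  rw [PowerSeries.coeff_mul, map_sum, sum_mul]
  refine sum_congr rfl fun ij hij ↦ ?_
  rw [← mem_antidiagonal.1 hij, map_mul, pow_add]
  ring

lemma monomial (n : ℕ) (a : R) (x : ℂ) :
    EvalsTo (PowerSeries.monomial n a) x (algebraMap R ℂ a * x ^ n) := by
  unfold EvalsTo
  convert! hasSum_ite_eq n (algebraMap R ℂ a * x ^ n) using 2 with k
  rw [PowerSeries.coeff_monomial]
  split_ifs with hk <;> simp [hk]

lemma const (a : R) (x : ℂ) : EvalsTo (PowerSeries.C a) x (algebraMap R ℂ a) := by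
  simpa using monomial 0 a x

lemma one (x : ℂ) : EvalsTo (1 : R⟦X⟧) x 1 := by
  simpa using const (1 : R) x

lemma X_pow (n : ℕ) (x : ℂ) : EvalsTo ((PowerSeries.X : R⟦X⟧) ^ n) x (x ^ n) := by
  simpa [PowerSeries.X_pow_eq] using monomial n (1 : R) x

lemma pow (hP : EvalsTo P x v) (n : ℕ) : EvalsTo (P ^ n) x (v ^ n) := by
  induction n with
  | zero => simpa using one x
  | succ n ih => simpa [pow_succ] using ih.mul hP

lemma sum {ι : Type*} (s : Finset ι) {P : ι → R⟦X⟧} {v : ι → ℂ}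
    (h : ∀ i ∈ s, EvalsTo (P i) x (v i)) : EvalsTo (∑ i ∈ s, P i) x (∑ i ∈ s, v i) := by
  classical
  induction s using Finset.induction_on with
  | empty => simpa using const (0 : R) x
  | insert i s hi ih =>
    rw [sum_insert hi, sum_insert hi]
    exact (h i (mem_insert_self i s)).add (ih fun j hj ↦ h j (mem_insert_of_mem hj))

lemma prod {ι : Type*} (s : Finset ι) {P : ι → R⟦X⟧} {v : ι → ℂ}
    (h : ∀ i ∈ s, EvalsTo (P i) x (v i)) : EvalsTo (∏ i ∈ s, P i) x (∏ i ∈ s, v i) := by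
  classical
  induction s using Finset.induction_on with
  | empty => simpa using one x
  | insert i s hi ih =>
    rw [prod_insert hi, prod_insert hi]
    exact (h i (mem_insert_self i s)).mul (ih fun j hj ↦ h j (mem_insert_of_mem hj))

lemma map {S : Type*} [CommRing S] [Algebra S ℂ] (f : R →+* S)
    (hf : (algebraMap S ℂ).comp f = algebraMap R ℂ) (hP : EvalsTo P x v) :
    EvalsTo (P.map f) x v := by
  simpa [EvalsTo, ← hf] using hP

lemma of_X_pow_mul (hx : x ≠ 0) (n : ℕ) (h : EvalsTo (PowerSeries.X ^ n * P) x (v * x ^ n)) :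
    EvalsTo P x v := by
  have hx' : x ^ n ≠ 0 := pow_ne_zero n hx
  rw [EvalsTo, ← hasSum_mul_right_iff hx']
  have h' := (hasSum_nat_add_iff' n).2 h
  rw [sum_eq_zero, sub_zero] at h'
  · convert! h' using 2 with k
    rw [PowerSeries.coeff_X_pow_mul, pow_add]
    ring
  · intro i hi
    rw [PowerSeries.coeff_X_pow_mul', if_neg (by simpa using hi)]
    simp

end EvalsTo

section Uniqueness

variable [FaithfulSMul R ℂ] {h : ℝ}

lemma EvalsTo.eq_zero (hh : 0 < h) {P : R⟦X⟧} (hP : ∀ z : ℍ, EvalsTo P (qParam h z) 0) : P = 0 := by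
  have hcusp : UpperHalfPlane.cuspFunction h 0 = 0 := by
    simpa [UpperHalfPlane.cuspFunction, Function.Periodic.cuspFunction]
      using! (tendsto_const_nhds.mono_left nhdsWithin_le_nhds).limUnder_eq
  have hball := UpperHalfPlane.hasFPowerSeriesOnBall_cuspFunction (f := 0) hh
    (by rw [hcusp]; exact analyticAt_const) hP
  rw [hcusp] at hball
  ext n
  have hn : algebraMap R ℂ (P.coeff n) = 0 :=
    congrFun ((FormalMultilinearSeries.ofScalars_series_eq_zero ℂ).1
      hball.hasFPowerSeriesAt.eq_zero) n
  simpa using hn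

lemma EvalsTo.unique (hh : 0 < h) {P Q : R⟦X⟧} {f : ℍ → ℂ}
    (hP : ∀ z : ℍ, EvalsTo P (qParam h z) (f z))
    (hQ : ∀ z : ℍ, EvalsTo Q (qParam h z) (f z)) : P = Q :=
  sub_eq_zero.1 <| EvalsTo.eq_zero hh fun z ↦ by simpa using (hP z).sub (hQ z)

end Uniqueness

lemma EvalsTo.mdifferentiable {h : ℝ} (hh : 0 < h) {P : R⟦X⟧} {f : ℍ → ℂ}
    (hP : ∀ z : ℍ, EvalsTo P (qParam h z) (f z)) : MDiff f := by
  set c : ℕ → ℂ := fun n ↦ algebraMap R ℂ (P.coeff n) with hc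
  have hsum : ∀ q : ℂ, ‖q‖ < 1 → Summable fun n ↦ c n * q ^ n := by
    intro q hq
    rcases eq_or_ne q 0 with rfl | hq0
    · exact summable_of_ne_finset_zero (s := {0}) fun n hn ↦ by
        simp [zero_pow (by simpa using hn : n ≠ 0)]
    · have := (hP ⟨invQParam h q, im_invQParam_pos_of_norm_lt_one hh hq hq0⟩).summable
      simpa [qParam_right_inv hh.ne' hq0] using this
  have hball : HasFPowerSeriesOnBall (fun q ↦ ∑' n, c n * q ^ n) (.ofScalars ℂ c) 0 1 := by
    constructor
    · refine le_of_forall_lt_imp_le_of_dense fun r hr ↦ ?_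
      lift r to NNReal using hr.ne_top
      apply FormalMultilinearSeries.le_radius_of_summable
      simpa [smul_eq_mul, norm_mul, mul_comm, mul_left_comm, mul_assoc] using
        (hsum r (by simpa using hr)).norm
    · simp
    · intro y hy
      rw [← ENNReal.coe_one, Metric.eball_coe, NNReal.coe_one, mem_ball_zero_iff] at hy
      simpa [mul_comm] using (hsum y hy).hasSum
  rw [mdifferentiable_iff]
  have hdiff : DifferentiableOn ℂ (fun z ↦ ∑' n, c n * qParam h z ^ n) {z | 0 < z.im} := by
    refine hball.differentiableOn.comp differentiable_qParam.differentiableOn fun z hz ↦ ?_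
    rw [← ENNReal.coe_one, Metric.eball_coe, NNReal.coe_one, mem_ball_zero_iff]
    exact norm_qParam_lt_one hh hz
  refine hdiff.congr fun z hz ↦ ?_
  rw [Function.comp_apply, ofComplex_apply_of_im_pos hz]
  exact ((hP ⟨z, hz⟩).tsum_eq).symm

end Evaluation
end PartitionParity

namespace PartitionParity

open UpperHalfPlane Function.Periodic PowerSeries Finset
open scoped Manifold

section PartitionSeries

lemma EvalsTo.expand {R : Type*} [CommRing R] [Algebra R ℂ] {P : R⟦X⟧} {x v : ℂ} {k : ℕ}
    (hk : k ≠ 0) (h : EvalsTo P (x ^ k) v) : EvalsTo (P.expand k hk) x v := by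
  unfold EvalsTo
  rw [← (mul_right_injective₀ hk).hasSum_iff]
  · simpa [EvalsTo, Function.comp_def, PowerSeries.coeff_expand_mul, pow_mul] using h
  · intro n hn
    rw [PowerSeries.coeff_expand_of_not_dvd]
    · simp
    · rintro ⟨m, rfl⟩
      exact hn ⟨m, rfl⟩

lemma evalsTo_mk_one {x : ℂ} (hx : ‖x‖ < 1) : EvalsTo (PowerSeries.mk 1 : ℤ⟦X⟧) x (1 - x)⁻¹ := by
  simpa [EvalsTo] using hasSum_geometric_of_norm_lt_one hx

open scoped PowerSeries.WithPiTopology in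
lemma mk_card_restricted_le (N : ℕ) :
    (PowerSeries.mk fun n ↦ (#(Nat.Partition.restricted n (· ≤ N)) : ℤ)) =
      ∏ i ∈ range N, (PowerSeries.mk 1 : ℤ⟦X⟧).expand (i + 1) i.succ_ne_zero := by
  refine (Nat.Partition.hasProd_powerSeriesMk_card_restricted ℤ (· ≤ N)).unique ?_
  have := hasProd_prod_of_ne_finset_one (L := .unconditional ℕ) (s := range N)
    (f := fun i ↦ if i + 1 ≤ N then ∑' j : ℕ, (X : ℤ⟦X⟧) ^ ((i + 1) * j) else 1)
    (fun i hi ↦ if_neg (by simpa using hi))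
  convert! this using 1
  refine prod_congr rfl fun i hi ↦ ?_
  rw [if_pos (by simpa using hi)]
  have h1 : (∑' j : ℕ, (X : ℤ⟦X⟧) ^ ((i + 1) * j)) * (1 - X ^ (i + 1)) = 1 := by
    simp_rw [pow_mul]
    exact PowerSeries.WithPiTopology.tsum_pow_mul_one_sub_of_constantCoeff_eq_zero (by simp)
  have h2 : (PowerSeries.mk 1 : ℤ⟦X⟧).expand (i + 1) i.succ_ne_zero * (1 - X ^ (i + 1)) = 1 := by
    rw [← PowerSeries.expand_X (i + 1) i.succ_ne_zero, ← map_one (PowerSeries.expand (i + 1) _),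
      ← map_sub, ← map_mul, mk_one_mul_one_sub_eq_one]
  exact mul_right_cancel₀ (right_ne_zero_of_mul_eq_one h2) (h2.trans h1.symm)

/-- The generating series of the partition function. -/
noncomputable def partitionSeries : ℤ⟦X⟧ := PowerSeries.mk fun n ↦ (partitionFn n : ℤ)

lemma restricted_le_eq_univ {n N : ℕ} (h : n ≤ N) :
    Nat.Partition.restricted n (· ≤ N) = univ := by
  refine filter_true_of_mem fun p _ i hi ↦ ?_
  exact (Multiset.single_le_sum (fun _ _ ↦ Nat.zero_le _) i hi).trans (p.parts_sum.le.trans h)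

lemma evalsTo_mk_card_restricted_le (N : ℕ) {q : ℂ} (hq : ‖q‖ < 1) :
    EvalsTo (PowerSeries.mk fun n ↦ (#(Nat.Partition.restricted n (· ≤ N)) : ℤ)) q
      (∏ i ∈ range N, (1 - q ^ (i + 1)))⁻¹ := by
  rw [mk_card_restricted_le, ← prod_inv_distrib]
  refine EvalsTo.prod _ fun i _ ↦ EvalsTo.expand _ (evalsTo_mk_one ?_)
  rw [norm_pow]
  exact pow_lt_one₀ (norm_nonneg _) hq i.succ_ne_zero

lemma tprod_one_sub_pow_ne_zero {q : ℂ} (hq : ‖q‖ < 1) : ∏' i, (1 - q ^ (i + 1)) ≠ 0 := by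
  refine tprod_one_add_ne_zero_of_summable (f := fun n ↦ -q ^ (n + 1)) (fun i h ↦ ?_) ?_
  · have : ‖q ^ (i + 1)‖ < 1 := by
      rw [norm_pow]
      exact pow_lt_one₀ (norm_nonneg _) hq i.succ_ne_zero
    rw [← sub_eq_add_neg, sub_eq_zero] at h
    simp [← h] at this
  · simpa using (summable_nat_add_iff 1).mpr (summable_geometric_of_lt_one (norm_nonneg _) hq)

lemma tendsto_prod_one_sub_pow_inv {q : ℂ} (hq : ‖q‖ < 1) :
    Filter.Tendsto (fun N ↦ (∏ i ∈ range N, (1 - q ^ (i + 1)))⁻¹) Filter.atTop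
      (nhds (∏' i, (1 - q ^ (i + 1)))⁻¹) :=
  (ModularForm.multipliable_one_sub_pow hq).hasProd.tendsto_prod_nat.inv₀
    (tprod_one_sub_pow_ne_zero hq)

lemma summable_partitionFn_mul_pow {x : ℝ} (hx0 : 0 ≤ x) (hx1 : x < 1) :
    Summable fun n ↦ (partitionFn n : ℝ) * x ^ n := by
  have hq : ‖(x : ℂ)‖ < 1 := by simpa [abs_of_nonneg hx0] using hx1
  have htend := (tendsto_prod_one_sub_pow_inv hq).norm
  obtain ⟨B, hB⟩ := htend.bddAbove_range
  refine summable_of_sum_range_le (c := B) (fun n ↦ by positivity) fun N ↦ ?_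
  refine le_trans ?_ (hB ⟨N, rfl⟩)
  have hN := evalsTo_mk_card_restricted_le N hq
  have hs : Summable fun n ↦ (#(Nat.Partition.restricted n (· ≤ N)) : ℝ) * x ^ n := by
    simpa [EvalsTo, abs_of_nonneg hx0] using (HasSum.summable hN).norm
  have heq : (∏ i ∈ range N, (1 - (x : ℂ) ^ (i + 1)))⁻¹ =
      ((∑' n, (#(Nat.Partition.restricted n (· ≤ N)) : ℝ) * x ^ n : ℝ) : ℂ) := by
    rw [← HasSum.tsum_eq hN, Complex.ofReal_tsum]
    simp
  beta_reduce
  rw [heq, Complex.norm_real, Real.norm_eq_abs]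
  refine le_trans ?_ (le_abs_self _)
  refine le_trans (le_of_eq (sum_congr rfl fun n hn ↦ ?_))
    (hs.sum_le_tsum (range N) fun n _ ↦ by positivity)
  rw [restricted_le_eq_univ (mem_range.1 hn).le, partitionFn, card_univ]

lemma evalsTo_partitionSeries {q : ℂ} (hq : ‖q‖ < 1) :
    EvalsTo partitionSeries q (∏' i, (1 - q ^ (i + 1)))⁻¹ := by
  have hs := summable_partitionFn_mul_pow (norm_nonneg q) hq
  have hlim : Filter.Tendsto (fun N ↦ ∑' n, (#(Nat.Partition.restricted n (· ≤ N)) : ℂ) * q ^ n)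
      Filter.atTop (nhds (∑' n, (partitionFn n : ℂ) * q ^ n)) := by
    refine tendsto_tsum_of_dominated_convergence hs (fun n ↦ ?_) (.of_forall fun N n ↦ ?_)
    · refine tendsto_const_nhds.congr' ?_
      filter_upwards [Filter.eventually_ge_atTop n] with N hN
      rw [restricted_le_eq_univ hN, partitionFn, card_univ]
    · rw [norm_mul, norm_pow, Complex.norm_natCast]
      gcongr
      exact card_le_univ _
  have hsum : Summable fun n ↦ (partitionFn n : ℂ) * q ^ n := by
    refine Summable.of_norm ?_
    simpa using hs
  have heq := tendsto_nhds_unique hlim <| by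
    refine (tendsto_prod_one_sub_pow_inv hq).congr fun N ↦ ?_
    simpa [EvalsTo] using (HasSum.tsum_eq (evalsTo_mk_card_restricted_le N hq)).symm
  rw [← heq]
  simpa [EvalsTo, partitionSeries] using hsum.hasSum

end PartitionSeries
end PartitionParity

namespace PartitionParity

open UpperHalfPlane Function.Periodic PowerSeries Finset
open scoped Manifold MatrixGroups ArithmeticFunction.sigma

section CubeRootOfJ

/-- The `q`-expansion of the normalised Eisenstein series of weight 4. -/
noncomputable def eisensteinSeriesFour : ℤ⟦X⟧ :=
  PowerSeries.mk fun n ↦ if n = 0 then 1 else 240 * (σ 3 n : ℤ)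

lemma evalsTo_eisensteinSeriesFour (z : ℍ) :
    EvalsTo eisensteinSeriesFour (qParam 1 z) (ModularForm.E₄ z) := by
  have h := ModularForm.hasSum_qExpansion (f := ModularForm.E₄) one_pos
    one_mem_strictPeriods_SL z
  unfold EvalsTo
  convert! h using 3 with n
  rw [EisensteinSeries.E_qExpansion_coeff _ (by decide)]
  have hb : bernoulli 4 = -1 / 30 := by
    rw [bernoulli_eq_bernoulli'_of_ne_one (by norm_num), bernoulli'_four]
  split_ifs with hn
  · simp [eisensteinSeriesFour, hn]
  · simp [eisensteinSeriesFour, hn, hb]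
    norm_num

/-- The cube root `E₄ / η ^ 8` of the `j`-invariant. -/
noncomputable def cbrtJ (z : ℍ) : ℂ := ModularForm.E₄ z / ModularForm.eta z ^ 8

/-- The `q`-expansion of `cbrtJ`, up to the factor `q ^ (1 / 3)`. -/
noncomputable def cbrtJSeries : ℤ⟦X⟧ := eisensteinSeriesFour * partitionSeries ^ 8

lemma norm_qParam_one_lt (z : ℍ) : ‖qParam 1 z‖ < 1 :=
  norm_qParam_lt_one one_pos z.im_pos

lemma qParam_pow {h h' : ℝ} {n : ℕ} (hn : h = n * h') (hh : h ≠ 0) (z : ℂ) :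
    qParam h z ^ n = qParam h' z := by
  have hn0 : (n : ℂ) ≠ 0 := by
    rintro h0
    have : (n : ℝ) = 0 := by exact_mod_cast h0
    simp [hn, this] at hh
  rw [qParam, qParam, ← Complex.exp_nat_mul]
  congr 1
  rw [hn]
  push_cast
  rw [← mul_div_assoc, mul_div_mul_left _ _ hn0]

lemma evalsTo_cbrtJSeries (z : ℍ) :
    EvalsTo cbrtJSeries (qParam 1 z) (cbrtJ z * qParam 3 z) := by
  have h := (evalsTo_eisensteinSeriesFour z).mul
    ((evalsTo_partitionSeries (norm_qParam_one_lt z)).pow 8)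
  unfold cbrtJSeries
  convert h using 1
  have h24 : qParam 24 z ^ 8 = qParam 3 z := qParam_pow (by norm_num) (by norm_num) z
  have heta : ModularForm.eta z = qParam 24 z * ∏' i, (1 - qParam 1 z ^ (i + 1)) := by
    simp [ModularForm.eta, ModularForm.eta_q_eq_pow, qParam]
  have hne := tprod_one_sub_pow_ne_zero (norm_qParam_one_lt z)
  have h3 := qParam_ne_zero (h := 3) z
  rw [cbrtJ, heta, mul_pow, h24]
  field_simp

lemma constantCoeff_cbrtJSeries : cbrtJSeries.coeff 0 = 1 := by
  have : partitionFn 0 = 1 := by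
    rw [partitionFn, Fintype.card_eq_one_iff]
    exact ⟨default, fun p ↦ Subsingleton.elim _ _⟩
  simp [cbrtJSeries, eisensteinSeriesFour, partitionSeries, this]

lemma map_castRingHom_sq {k : Type*} [CommRing k] [CharP k 2] (P : ℤ⟦X⟧) :
    P.map (Int.castRingHom k) ^ 2 = (P.expand 2 two_ne_zero).map (Int.castRingHom k) := by
  have : ExpChar k 2 := ExpChar.prime Nat.prime_two
  have h := MvPowerSeries.map_frobenius_expand 2 two_ne_zero (f := P.map (Int.castRingHom k))
  refine h.symm.trans ?_
  change PowerSeries.map (frobenius k 2) (PowerSeries.expand 2 two_ne_zero _) = _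
  rw [← PowerSeries.map_expand]
  ext n
  rw [PowerSeries.coeff_map, PowerSeries.coeff_map, eq_intCast, map_intCast]

lemma map_cbrtJSeries {k : Type*} [CommRing k] [CharP k 2] :
    cbrtJSeries.map (Int.castRingHom k) =
      (partitionSeries.map (Int.castRingHom k)).expand 8 (by norm_num) := by
  have hE : eisensteinSeriesFour.map (Int.castRingHom k) = 1 := by
    ext n
    have : (240 : k) = 0 := by
      have := (CharP.cast_eq_zero_iff k 2 240).2 (by norm_num)
      exact_mod_cast this
    rcases eq_or_ne n 0 with rfl | hn <;> simp [eisensteinSeriesFour, PowerSeries.coeff_one, *]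
  rw [cbrtJSeries, map_mul, map_pow, hE, one_mul, ← PowerSeries.map_expand,
    PowerSeries.expand_mul 2 two_ne_zero 4 four_ne_zero,
    PowerSeries.expand_mul 2 two_ne_zero 2 two_ne_zero, ← map_castRingHom_sq, ← map_castRingHom_sq,
    ← map_castRingHom_sq, ← pow_mul, ← pow_mul]

lemma cbrtJ_S_smul (z : ℍ) : cbrtJ (ModularGroup.S • z) = cbrtJ z := by
  have hE : ModularForm.E₄ (ModularGroup.S • z) = (z : ℂ) ^ 4 * ModularForm.E₄ z := by
    have := SlashInvariantForm.slash_action_eqn'' ModularForm.E₄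
      (MonoidHom.mem_range.2 ⟨ModularGroup.S, rfl⟩) z
    rw [← ModularGroup.denom_S]
    exact_mod_cast this
  have hsqrt {w : ℂ} (hw : w ≠ 0) : Complex.sqrt w ^ 8 = w ^ 4 := by
    rw [sqrt_eq_exp hw, ← Complex.exp_nat_mul]
    nth_rw 2 [← Complex.exp_log hw]
    rw [← Complex.exp_nat_mul]
    congr 1
    push_cast
    ring
  have he : ModularForm.eta (ModularGroup.S • z : ℍ) =
      (Complex.sqrt Complex.I)⁻¹ * (Complex.sqrt z * ModularForm.eta z) := by
    rw [modular_S_smul]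
    simpa [neg_div] using ModularForm.eta_comp_eq_csqrt_I_inv z.2
  rw [cbrtJ, cbrtJ, hE, he, mul_pow, mul_pow, inv_pow, hsqrt Complex.I_ne_zero, hsqrt z.ne_zero,
    Complex.I_pow_four]
  have := z.ne_zero
  have := ModularForm.eta_ne_zero z.2
  field_simp

/-- A primitive cube root of unity: the factor by which `cbrtJ` is multiplied under `z ↦ z + 1`. -/
noncomputable def cubeRoot : ℂ := (qParam 3 1)⁻¹

lemma cubeRoot_pow_three : cubeRoot ^ 3 = 1 := by
  rw [cubeRoot, inv_pow, qParam_pow (h' := 1) (by norm_num) (by norm_num)]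
  simp [qParam]

lemma qParam_add (h : ℝ) (z w : ℂ) : qParam h (z + w) = qParam h z * qParam h w := by
  simp [qParam, ← Complex.exp_add, mul_add, add_div]

lemma cbrtJ_T_smul (z : ℍ) : cbrtJ (ModularGroup.T • z) = cubeRoot * cbrtJ z := by
  have hT : ((ModularGroup.T • z : ℍ) : ℂ) = z + 1 := by
    rw [modular_T_smul]
    simp [add_comm]
  have h := HasSum.unique (evalsTo_cbrtJSeries (ModularGroup.T • z)) (by
    rw [hT, qParam_add 1 z 1, show qParam 1 1 = 1 by simp [qParam], mul_one]
    exact evalsTo_cbrtJSeries z)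
  rw [hT, qParam_add] at h
  have h3 := qParam_ne_zero (h := 3) z
  have h3' := qParam_ne_zero (h := 3) 1
  rw [cubeRoot]
  field_simp
  apply mul_right_cancel₀ h3
  rw [← h]
  ring

/-- The exponent mod 3 of the multiplier of `cbrtJ`. -/
def multiplierExponent (γ : SL(2, ℤ)) : ZMod 3 :=
  γ 0 0 * γ 1 0 + γ 1 1 * γ 1 0 + γ 0 1 * γ 1 1 - γ 0 1 * γ 1 1 * γ 1 0 ^ 2

lemma det_coe_zmod (γ : SL(2, ℤ)) (n : ℕ) :
    (γ 0 0 * γ 1 1 - γ 0 1 * γ 1 0 : ZMod n) = 1 := by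
  have := γ.det_coe
  rw [Matrix.det_fin_two] at this
  exact_mod_cast congrArg (Int.cast : ℤ → ZMod n) this

lemma multiplierExponent_mul_T (γ : SL(2, ℤ)) :
    multiplierExponent (γ * ModularGroup.T) = multiplierExponent γ + 1 := by
  have := det_coe_zmod γ 3
  simp only [multiplierExponent, Matrix.SpecialLinearGroup.coe_mul, ModularGroup.coe_T,
    Matrix.mul_apply, Fin.sum_univ_two]
  simp
  generalize (γ 0 0 : ZMod 3) = a at *
  generalize (γ 0 1 : ZMod 3) = b at *
  generalize (γ 1 0 : ZMod 3) = c at *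
  generalize (γ 1 1 : ZMod 3) = d at *
  revert a b c d
  decide

lemma multiplierExponent_mul_S (γ : SL(2, ℤ)) :
    multiplierExponent (γ * ModularGroup.S) = multiplierExponent γ := by
  have := det_coe_zmod γ 3
  simp only [multiplierExponent, Matrix.SpecialLinearGroup.coe_mul, ModularGroup.coe_S,
    Matrix.mul_apply, Fin.sum_univ_two]
  simp
  generalize (γ 0 0 : ZMod 3) = a at *
  generalize (γ 0 1 : ZMod 3) = b at *
  generalize (γ 1 0 : ZMod 3) = c at *
  generalize (γ 1 1 : ZMod 3) = d at *
  revert a b c d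
  decide

/-- The multiplier of `cbrtJ`, in terms of `multiplierExponent`. -/
noncomputable def multiplier (k : ZMod 3) : ℂ := cubeRoot ^ k.val

lemma multiplier_pow_three (k : ZMod 3) : multiplier k ^ 3 = 1 := by
  rw [multiplier, ← pow_mul, mul_comm, pow_mul, cubeRoot_pow_three, one_pow]

lemma multiplier_add_one (k : ZMod 3) : multiplier (k + 1) = cubeRoot * multiplier k := by
  have h : cubeRoot ^ (k + 1).val = cubeRoot ^ (k.val + 1) := by
    rw [ZMod.val_add, pow_eq_pow_mod (k.val + 1) cubeRoot_pow_three]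
    rfl
  rw [multiplier, h, pow_succ']
  rfl

theorem cbrtJ_smul (γ : SL(2, ℤ)) (z : ℍ) :
    cbrtJ (γ • z) = multiplier (multiplierExponent γ) * cbrtJ z := by
  have hmem : γ ∈ Subgroup.closure {ModularGroup.S, ModularGroup.T} := by
    rw [SpecialLinearGroup.SL2Z_generators]
    trivial
  have hS (γ : SL(2, ℤ)) :
      (∀ z, cbrtJ (γ • z) = multiplier (multiplierExponent γ) * cbrtJ z) ↔
      ∀ z, cbrtJ ((γ * ModularGroup.S) • z) =
        multiplier (multiplierExponent (γ * ModularGroup.S)) * cbrtJ z := by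
    rw [(MulAction.surjective ModularGroup.S).forall]
    simp only [cbrtJ_S_smul, multiplierExponent_mul_S, mul_smul]
  have hT (γ : SL(2, ℤ)) :
      (∀ z, cbrtJ (γ • z) = multiplier (multiplierExponent γ) * cbrtJ z) ↔
      ∀ z, cbrtJ ((γ * ModularGroup.T) • z) =
        multiplier (multiplierExponent (γ * ModularGroup.T)) * cbrtJ z := by
    rw [(MulAction.surjective ModularGroup.T).forall]
    simp only [cbrtJ_T_smul, multiplierExponent_mul_T, mul_smul, multiplier_add_one]
    refine forall_congr' fun z ↦ ?_
    rw [← mul_assoc, mul_comm cubeRoot]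
  suffices ∀ z, cbrtJ (γ • z) = multiplier (multiplierExponent γ) * cbrtJ z from this z
  induction hmem using Subgroup.closure_induction_right with
  | one => simp [multiplier, multiplierExponent]
  | mul_right x _ y hy ih =>
    rcases hy with rfl | rfl
    · exact (hS x).1 ih
    · exact (hT x).1 ih
  | mul_inv_cancel x _ y hy ih =>
    rcases hy with rfl | rfl
    · exact (hS _).2 (by simpa using ih)
    · exact (hT _).2 (by simpa using ih)

end CubeRootOfJ
end PartitionParity

namespace PartitionParity

open UpperHalfPlane Function.Periodic PowerSeries Finset
open scoped Manifold MatrixGroups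

section Triangular

/-- The action `z ↦ (a * z + b) / d` of an upper triangular matrix on the upper half-plane. -/
noncomputable def tri (a : ℕ) (b : ℤ) (d : ℕ) (z : ℍ) : ℍ := ofComplex ((a * z + b) / d)

lemma coe_tri {a d : ℕ} (ha : 0 < a) (hd : 0 < d) (b : ℤ) (z : ℍ) :
    (tri a b d z : ℂ) = (a * z + b) / d := by
  rw [tri, UpperHalfPlane.ofComplex_apply_of_im_pos]
  have h : ((a * z + b) / d : ℂ) = ((a / d : ℝ) : ℂ) * z + ((b / d : ℝ) : ℂ) := by
    push_cast
    ring
  rw [h, Complex.add_im, Complex.im_ofReal_mul, Complex.ofReal_im]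
  have := z.im_pos
  have : (0 : ℝ) < a := by exact_mod_cast ha
  have : (0 : ℝ) < d := by exact_mod_cast hd
  simp only [coe_im, add_zero]
  positivity

lemma smul_tri {γ γ' : SL(2, ℤ)} {a d t : ℕ} {b b' : ℤ} (ha : 0 < a) (hd : 0 < d) (ht : 0 < t)
    (h₁ : γ' 0 0 * a = γ 0 0 + b * γ 1 0) (h₂ : γ' 1 0 * a = t * γ 1 0)
    (h₃ : γ' 0 0 * b' + γ' 0 1 * d = γ 0 1 + b * γ 1 1)
    (h₄ : γ' 1 0 * b' + γ' 1 1 * d = t * γ 1 1) (z : ℍ) :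
    γ' • tri a b' d z = tri 1 b t (γ • z) := by
  ext1
  rw [coe_tri one_pos ht, coe_specialLinearGroup_apply, coe_specialLinearGroup_apply,
    coe_tri ha hd]
  have h₁' := congrArg (Int.cast : ℤ → ℂ) h₁
  have h₂' := congrArg (Int.cast : ℤ → ℂ) h₂
  have h₃' := congrArg (Int.cast : ℤ → ℂ) h₃
  have h₄' := congrArg (Int.cast : ℤ → ℂ) h₄
  push_cast at h₁' h₂' h₃' h₄'
  have hd' : (d : ℂ) ≠ 0 := by exact_mod_cast hd.ne'
  have ht' : (t : ℂ) ≠ 0 := by exact_mod_cast ht.ne'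
  have hden : (γ 1 0 * z + γ 1 1 : ℂ) ≠ 0 := by
    simpa [denom] using denom_ne_zero (γ : GL (Fin 2) ℝ) z
  have hnum : (γ' 1 0 * ((a * z + b') / d) + γ' 1 1 : ℂ) = t * (γ 1 0 * z + γ 1 1) / d := by
    field_simp
    linear_combination z * h₂' + h₄'
  have hnum' : (γ' 0 0 * ((a * z + b') / d) + γ' 0 1 : ℂ) =
      (γ 0 0 * z + γ 0 1 + b * (γ 1 0 * z + γ 1 1)) / d := by
    field_simp
    linear_combination z * h₁' + h₃'
  simp only [algebraMap_int_eq, eq_intCast, Complex.ofReal_intCast, Nat.cast_one]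
  rw [hnum, hnum']
  generalize (γ 1 0 * z + γ 1 1 : ℂ) = w at hden
  field_simp

lemma exists_smul_tri_eq (γ : SL(2, ℤ)) {t a d : ℕ} (ht : 0 < t) (h3 : ¬ 3 ∣ t) (b : ℤ)
    (ha : a = Int.gcd (γ 0 0 + 3 * b * γ 1 0) t) (had : a * d = t) :
    ∃ (γ' : SL(2, ℤ)) (b' : ℤ),
      γ' 0 0 * a = γ 0 0 + 3 * b * γ 1 0 ∧ γ' 1 0 = d * γ 1 0 ∧
      γ' 0 0 * (3 * b') + γ' 0 1 * d = γ 0 1 + 3 * b * γ 1 1 ∧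
      γ' 1 0 * (3 * b') + γ' 1 1 * d = t * γ 1 1 := by
  have hdet := γ.det_coe
  rw [Matrix.det_fin_two] at hdet
  generalize γ 0 0 = α at *
  generalize γ 0 1 = β at *
  generalize γ 1 0 = c at *
  generalize γ 1 1 = δ at *
  obtain ⟨A, hA⟩ : (a : ℤ) ∣ α + 3 * b * c := ha ▸ Int.gcd_dvd_left _ _
  have ha0 : (a : ℤ) ≠ 0 := by
    rintro h
    have : a = 0 := by exact_mod_cast h
    simp [← had, this] at ht
  have hadz : (a * d : ℤ) = t := by exact_mod_cast had
  have hco : IsCoprime A (d * c) := by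
    refine IsCoprime.mul_right ?_ ?_
    · have : Int.gcd (a * A) (a * d) = a := by rw [← hA, hadz, ← ha]
      rw [Int.gcd_mul_left, Int.natAbs_natCast] at this
      refine Int.isCoprime_iff_gcd_eq_one.2 ?_
      exact Nat.eq_of_mul_eq_mul_left (Nat.pos_of_ne_zero (by exact_mod_cast ha0)) (by omega)
    · exact ⟨a * δ, - β - 3 * b * δ, by linear_combination hdet - δ * hA⟩
  obtain ⟨D₀, B₀, hDB⟩ := hco
  have h3d : ¬ (3 : ℤ) ∣ d := by
    intro h
    apply h3
    rw [← had]
    exact dvd_mul_of_dvd_right (by exact_mod_cast h) _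
  have h3d2 : (3 : ℤ) ∣ 1 - d ^ 2 := by
    obtain h | h : (d : ℤ) % 3 = 1 ∨ (d : ℤ) % 3 = 2 := by omega
    all_goals
      rw [Int.dvd_iff_emod_eq_zero, Int.sub_emod, pow_two, Int.mul_emod, h]
      rfl
  obtain ⟨e, he⟩ := h3d2
  set b₀ := D₀ * (β + 3 * b * δ) + B₀ * t * δ with hb₀
  refine ⟨⟨!![A, -B₀ + b₀ * d * A; d * c, D₀ + b₀ * d * (d * c)], ?_⟩, b₀ * e, ?_, ?_, ?_, ?_⟩
  · rw [Matrix.det_fin_two_of]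
    linear_combination hDB
  · simp
    linear_combination -hA
  · simp
  · simp
    linear_combination (A * b₀) * (-he) + A * hb₀ + (β + 3 * b * δ) * hDB +
      B₀ * d * hdet - B₀ * d * δ * hA - A * δ * B₀ * hadz
  · simp
    linear_combination (d * c * b₀) * (-he) + d * c * hb₀ + δ * t * hDB -
      D₀ * d * hdet + D₀ * d * δ * hA + D₀ * δ * A * hadz

lemma multiplierExponent_eq_of_triangular {γ γ' : SL(2, ℤ)} {t a d : ℕ} (h3 : ¬ 3 ∣ t) {b b' : ℤ}
    (had : a * d = t) (h₁ : γ' 0 0 * a = γ 0 0 + 3 * b * γ 1 0) (h₂ : γ' 1 0 = d * γ 1 0)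
    (h₃ : γ' 0 0 * (3 * b') + γ' 0 1 * d = γ 0 1 + 3 * b * γ 1 1)
    (h₄ : γ' 1 0 * (3 * b') + γ' 1 1 * d = t * γ 1 1) :
    multiplierExponent γ' = t * multiplierExponent γ := by
  have hdet := det_coe_zmod γ' 3
  have h30 : (3 : ZMod 3) = 0 := rfl
  have h₁' := congrArg (Int.cast : ℤ → ZMod 3) h₁
  have h₂' := congrArg (Int.cast : ℤ → ZMod 3) h₂
  have h₃' := congrArg (Int.cast : ℤ → ZMod 3) h₃
  have h₄' := congrArg (Int.cast : ℤ → ZMod 3) h₄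
  have had' := congrArg (Nat.cast : ℕ → ZMod 3) had
  have ht : (t : ZMod 3) ≠ 0 := by rwa [Ne, ZMod.natCast_eq_zero_iff]
  push_cast at h₁' h₂' h₃' h₄' had'
  simp only [h30, zero_mul, mul_zero, zero_add, add_zero] at h₁' h₂' h₃' h₄'
  rw [← had'] at ht h₄'
  rw [multiplierExponent, multiplierExponent, ← h₁', ← h₃', h₂', ← had']
  rw [h₂'] at hdet
  have hδ : (γ' 1 1 : ZMod 3) = a * γ 1 1 := by
    apply mul_right_cancel₀ (right_ne_zero_of_mul ht)
    rw [h₄']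
    ring
  rw [hδ] at hdet ⊢
  generalize (γ' 0 0 : ZMod 3) = A at hdet ⊢
  generalize (γ' 0 1 : ZMod 3) = B at hdet ⊢
  generalize (γ 1 0 : ZMod 3) = c at hdet ⊢
  generalize (γ 1 1 : ZMod 3) = δ at hdet ⊢
  generalize (a : ZMod 3) = a' at hdet ht ⊢
  generalize (d : ZMod 3) = d' at hdet ht ⊢
  clear * - hdet ht
  revert A B c δ a' d'
  decide

/-- The cusp data of `γ`: the translates of `cbrtJ` by `(z + 3 * b) / t` composed with `γ`, written
in terms of upper triangular matrices `(a, 3 * b'; 0, d)`. -/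
lemma exists_cbrtJ_tri_smul (γ : SL(2, ℤ)) {t a d : ℕ} (ht : 0 < t) (h3 : ¬ 3 ∣ t) (b : ℤ)
    (ha : a = Int.gcd (γ 0 0 + 3 * b * γ 1 0) t) (had : a * d = t) :
    ∃ b' : ℤ, (∃ A B : ℤ, A * a = γ 0 0 + 3 * b * γ 1 0 ∧
        A * (3 * b') + B * d = γ 0 1 + 3 * b * γ 1 1) ∧
      ∀ z, cbrtJ (tri 1 (3 * b) t (γ • z)) =
        multiplier (t * multiplierExponent γ) * cbrtJ (tri a (3 * b') d z) := by
  obtain ⟨γ', b', h₁, h₂, h₃, h₄⟩ := exists_smul_tri_eq γ ht h3 b ha had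
  refine ⟨b', ⟨γ' 0 0, γ' 0 1, h₁, h₃⟩, fun z ↦ ?_⟩
  subst had
  rw [← smul_tri (Nat.pos_of_mul_pos_right ht) (Nat.pos_of_mul_pos_left ht) ht h₁ (by
    rw [h₂]
    push_cast
    ring) h₃ h₄ z,
    cbrtJ_smul, multiplierExponent_eq_of_triangular h3 rfl h₁ h₂ h₃ h₄]

end Triangular
end PartitionParity

namespace PartitionParity

open UpperHalfPlane Function.Periodic PowerSeries Finset
open scoped Manifold MatrixGroups

section Expansion

/-- The ring of algebraic integers in `ℂ`. -/
abbrev AlgInt : Type := integralClosure ℤ ℂ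

lemma EvalsTo.rescale {R : Type*} [CommRing R] [Algebra R ℂ] {P : R⟦X⟧} {c : R} {x v : ℂ}
    (h : EvalsTo P (algebraMap R ℂ c * x) v) : EvalsTo (P.rescale c) x v := by
  unfold EvalsTo at *
  convert h using 2 with n
  rw [coeff_rescale, map_mul, map_pow]
  ring

lemma qParam_natCast_pow_eq_one (d : ℕ) (k : ℤ) : qParam d k ^ d = 1 := by
  rcases eq_or_ne d 0 with rfl | hd
  · simp
  have hd : (d : ℂ) ≠ 0 := by exact_mod_cast hd
  rw [qParam, ← Complex.exp_nat_mul, Complex.exp_eq_one_iff]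
  refine ⟨k, ?_⟩
  simp only [Complex.ofReal_natCast]
  field_simp

/-- The root of unity `exp (2 * π * I * k / d)`, as an algebraic integer. -/
noncomputable def rootOfUnity (d : ℕ) (k : ℤ) : AlgInt :=
  ⟨qParam d k, by
    rcases eq_or_ne d 0 with rfl | hd
    · simp [qParam]
    · exact IsIntegral.of_pow (Nat.pos_of_ne_zero hd)
        (qParam_natCast_pow_eq_one d k ▸ isIntegral_one)⟩

lemma algebraMap_rootOfUnity (d : ℕ) (k : ℤ) :
    algebraMap AlgInt ℂ (rootOfUnity d k) = qParam d k := rfl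

lemma qParam_mul_natCast (h : ℝ) (z : ℂ) (n : ℕ) : qParam h (n * z) = qParam h z ^ n := by
  rw [qParam, qParam, ← Complex.exp_nat_mul]
  ring_nf

/-- The `q`-expansion of `cbrtJ ((a * z + 3 * b) / d)`. -/
lemma exists_evalsTo_cbrtJ_tri {t a d : ℕ} (ht : 0 < t) (had : a * d = t) (b : ℤ) :
    ∃ P : AlgInt⟦X⟧,
      (∀ z : ℍ, EvalsTo P (qParam (3 * t) z)
        (cbrtJ (tri a (3 * b) d z) * qParam (3 * t) z ^ t ^ 2)) ∧
      (∀ n, P.coeff n ≠ 0 → ∃ m, n + a ^ 2 = t ^ 2 + 3 * a ^ 2 * m) ∧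
      ∀ m n, n + a ^ 2 = t ^ 2 + 3 * a ^ 2 * m →
        P.coeff n = rootOfUnity d (b * (3 * m - 1)) * (cbrtJSeries.coeff m : ℤ) := by
  have ha : 0 < a := Nat.pos_of_mul_pos_right (had ▸ ht)
  have hd : 0 < d := Nat.pos_of_mul_pos_left (had ▸ ht)
  have ha' : (a : ℂ) ≠ 0 := by exact_mod_cast ha.ne'
  have hd' : (d : ℂ) ≠ 0 := by exact_mod_cast hd.ne'
  have hat : a ^ 2 ≤ t ^ 2 := Nat.pow_le_pow_left (Nat.le_of_dvd ht ⟨d, had.symm⟩) 2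
  have ha3 : 3 * a ^ 2 ≠ 0 := by positivity
  have hcoeff (m n : ℕ) (h : n + a ^ 2 = t ^ 2 + 3 * a ^ 2 * m) :
      (X ^ (t ^ 2 - a ^ 2) * expand (3 * a ^ 2) ha3 (rescale (rootOfUnity d (3 * b))
        (cbrtJSeries.map (Int.castRingHom AlgInt)))).coeff n =
      rootOfUnity d (3 * b) ^ m * (cbrtJSeries.coeff m : ℤ) := by
    rw [coeff_X_pow_mul', if_pos (by omega), show n - (t ^ 2 - a ^ 2) = 3 * a ^ 2 * m by omega,
      coeff_expand_mul, coeff_rescale, coeff_map, eq_intCast]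
  refine ⟨C (rootOfUnity d (-b)) * (X ^ (t ^ 2 - a ^ 2) * expand (3 * a ^ 2) ha3
    (rescale (rootOfUnity d (3 * b)) (cbrtJSeries.map (Int.castRingHom AlgInt)))), fun z ↦ ?_,
    fun n hn ↦ ?_, fun m n h ↦ ?_⟩
  · set x := qParam (3 * t) z with hx
    have hx1 : qParam 1 (tri a (3 * b) d z) = qParam d (3 * b : ℤ) * x ^ (3 * a ^ 2) := by
      rw [hx, ← qParam_mul_natCast, qParam, qParam, qParam, ← Complex.exp_add, coe_tri ha hd]
      congr 1
      rw [← had]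
      push_cast
      field_simp
      ring
    have hx3 : qParam 3 (tri a (3 * b) d z) = qParam d b * x ^ a ^ 2 := by
      rw [hx, ← qParam_mul_natCast, qParam, qParam, qParam, ← Complex.exp_add, coe_tri ha hd]
      congr 1
      rw [← had]
      push_cast
      field_simp
      ring
    have h := (evalsTo_cbrtJSeries (tri a (3 * b) d z)).map (Int.castRingHom AlgInt)
      (RingHom.ext_int _ _)
    rw [hx1, ← algebraMap_rootOfUnity] at h
    have hev := (EvalsTo.const (rootOfUnity d (-b)) x).mul
      ((EvalsTo.X_pow (t ^ 2 - a ^ 2) x).mul (h.rescale.expand ha3))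
    convert hev using 1
    rw [hx3, algebraMap_rootOfUnity]
    have : x ^ t ^ 2 = x ^ a ^ 2 * x ^ (t ^ 2 - a ^ 2) := by
      rw [← pow_add, Nat.add_sub_cancel' hat]
    have hinv : qParam d (-b : ℤ) * qParam d b = 1 := by
      rw [← qParam_add]
      simp [qParam]
    linear_combination cbrtJ (tri a (3 * b) d z) * this -
      cbrtJ (tri a (3 * b) d z) * x ^ a ^ 2 * x ^ (t ^ 2 - a ^ 2) * hinv
  · rw [coeff_C_mul, coeff_X_pow_mul'] at hn
    split_ifs at hn with h
    · obtain ⟨m, hm⟩ : 3 * a ^ 2 ∣ n - (t ^ 2 - a ^ 2) := by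
        by_contra h'
        exact hn (by rw [coeff_expand_of_not_dvd _ _ _ h', mul_zero])
      exact ⟨m, by omega⟩
    · simp at hn
  · rw [coeff_C_mul, hcoeff m n h, ← mul_assoc]
    congr 1
    apply Subtype.ext
    change qParam d (-b : ℤ) * qParam d (3 * b : ℤ) ^ m = qParam d _
    rw [← qParam_mul_natCast, ← qParam_add]
    congr 1
    push_cast
    ring

end Expansion
end PartitionParity

namespace PartitionParity

open UpperHalfPlane Function.Periodic PowerSeries Finset
open scoped Manifold MatrixGroups

section TraceSum

lemma multiplierExponent_T_zpow (n : ℤ) : multiplierExponent (ModularGroup.T ^ n) = n := by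
  simp [multiplierExponent, ModularGroup.coe_T_zpow]

lemma cbrtJ_tri_congr {t : ℕ} (ht : 0 < t) {b b' : ℤ} (h : b ≡ b' [ZMOD t]) (z : ℍ) :
    cbrtJ (tri 1 (3 * b) t z) = cbrtJ (tri 1 (3 * b') t z) := by
  obtain ⟨k, hk⟩ := h.dvd
  obtain rfl : b' = b + t * k := by linarith
  have ht' : (t : ℂ) ≠ 0 := by exact_mod_cast ht.ne'
  have : tri 1 (3 * (b + t * k)) t z = ModularGroup.T ^ (3 * k) • tri 1 (3 * b) t z := by
    ext1
    rw [ModularGroup.coe_T_zpow_smul_eq, coe_tri one_pos ht, coe_tri one_pos ht]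
    push_cast
    field_simp
    ring
  rw [this, cbrtJ_smul, multiplierExponent_T_zpow, Int.cast_mul,
    show ((3 : ℤ) : ZMod 3) = 0 from rfl, zero_mul]
  simp [multiplier]

/-- The sum of `cbrtJ ((z + 3 * b) / t)` over `b` modulo `t`. -/
noncomputable def traceSum (t : ℕ) (z : ℍ) : ℂ := ∑ b ∈ range t, cbrtJ (tri 1 (3 * b) t z)

lemma rootOfUnity_natCast_mul (t b : ℕ) (k : ℤ) :
    rootOfUnity t (b * k) = rootOfUnity t k ^ b := by
  apply Subtype.ext
  change qParam t (b * k : ℤ) = qParam t k ^ b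
  rw [← qParam_mul_natCast]
  push_cast
  rfl

lemma rootOfUnity_eq_one_iff {t : ℕ} (ht : 0 < t) {k : ℤ} :
    rootOfUnity t k = 1 ↔ (t : ℤ) ∣ k := by
  have ht' : (t : ℂ) ≠ 0 := by exact_mod_cast ht.ne'
  have hpi := Complex.two_pi_I_ne_zero
  rw [Subtype.ext_iff]
  change qParam t k = 1 ↔ _
  rw [qParam, Complex.exp_eq_one_iff]
  refine exists_congr fun m ↦ ?_
  rw [← Int.cast_inj (α := ℂ)]
  simp only [Complex.ofReal_natCast]
  push_cast
  constructor <;> intro h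
  · field_simp at h
    linear_combination h
  · field_simp
    linear_combination h

lemma sum_rootOfUnity {t : ℕ} (ht : 0 < t) (k : ℤ) :
    ∑ b ∈ range t, rootOfUnity t (b * k) = if (t : ℤ) ∣ k then (t : AlgInt) else 0 := by
  simp only [rootOfUnity_natCast_mul]
  split_ifs with h
  · simp [(rootOfUnity_eq_one_iff ht).2 h]
  · have h1 : rootOfUnity t k ≠ 1 := by rwa [Ne, rootOfUnity_eq_one_iff ht]
    have h2 : rootOfUnity t k ^ t = 1 := Subtype.ext (qParam_natCast_pow_eq_one t k)
    have := mul_geom_sum (rootOfUnity t k) t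
    rw [h2, sub_self] at this
    exact (mul_eq_zero.1 this).resolve_left (sub_ne_zero.2 h1)

/-- The `q`-expansion of `traceSum` picks out the coefficients in a residue class. -/
lemma exists_evalsTo_traceSum {t : ℕ} (ht : 0 < t) :
    ∃ P : AlgInt⟦X⟧,
      (∀ z : ℍ, EvalsTo P (qParam (3 * t) z) (traceSum t z * qParam (3 * t) z ^ t ^ 2)) ∧
      (∀ n, P.coeff n ≠ 0 → ∃ m, n + 1 = t ^ 2 + 3 * m) ∧
      ∀ m n, n + 1 = t ^ 2 + 3 * m → P.coeff n =
        (if (t : ℤ) ∣ 3 * m - 1 then (t : AlgInt) else 0) * (cbrtJSeries.coeff m : ℤ) := by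
  choose P hP hP0 hPc using fun b : ℕ ↦ exists_evalsTo_cbrtJ_tri ht (one_mul t) b
  refine ⟨∑ b ∈ range t, P b, fun z ↦ ?_, fun n hn ↦ ?_, fun m n h ↦ ?_⟩
  · rw [traceSum, sum_mul]
    exact EvalsTo.sum _ fun b _ ↦ hP b z
  · rw [map_sum] at hn
    obtain ⟨b, -, hb⟩ := exists_ne_zero_of_sum_ne_zero hn
    simpa using hP0 b n hb
  · rw [map_sum, ← sum_rootOfUnity ht, sum_mul]
    exact sum_congr rfl fun b _ ↦ hPc b m n (by simpa using h)

/-- The `q`-expansion of `traceSum` at an arbitrary cusp. -/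
lemma exists_evalsTo_traceSum_smul {t : ℕ} (ht : 0 < t) (h3 : ¬ 3 ∣ t) (γ : SL(2, ℤ)) :
    ∃ (K : ℍ → ℂ) (u : ℂ) (P : AlgInt⟦X⟧), u ^ 3 = 1 ∧ (∀ z, traceSum t (γ • z) = u * K z) ∧
      (∀ z : ℍ, EvalsTo P (qParam (3 * t) z) (K z * qParam (3 * t) z ^ t ^ 2)) ∧
      ∀ n < t ^ 2, P.coeff n ≠ 0 →
        ∃ b : ℤ, n + (Int.gcd (γ 0 0 + 3 * b * γ 1 0) t) ^ 2 = t ^ 2 := by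
  have hdvd (b : ℕ) : ∃ d, t = Int.gcd (γ 0 0 + 3 * b * γ 1 0) t * d :=
    Int.natCast_dvd_natCast.1 (Int.gcd_dvd_right _ _)
  choose d hd using hdvd
  choose b' _ hb' using fun b : ℕ ↦ exists_cbrtJ_tri_smul γ ht h3 b rfl (hd b).symm
  choose P hP hP0 _ using fun b : ℕ ↦ exists_evalsTo_cbrtJ_tri ht (hd b).symm (b' b)
  refine ⟨fun z ↦ ∑ b ∈ range t,
    cbrtJ (tri (Int.gcd (γ 0 0 + 3 * b * γ 1 0) t) (3 * b' b) (d b) z), _, ∑ b ∈ range t, P b,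
    multiplier_pow_three (t * multiplierExponent γ), fun z ↦ ?_, fun z ↦ ?_, fun n hnt hn ↦ ?_⟩
  · rw [traceSum, mul_sum]
    exact sum_congr rfl fun b _ ↦ hb' b z
  · rw [sum_mul]
    exact EvalsTo.sum _ fun b _ ↦ hP b z
  · rw [map_sum] at hn
    obtain ⟨b, -, hb⟩ := exists_ne_zero_of_sum_ne_zero hn
    obtain ⟨m, hm⟩ := hP0 b n hb
    refine ⟨b, ?_⟩
    rcases Nat.eq_zero_or_pos m with rfl | hm0
    · simpa using hm
    · nlinarith

lemma isCoprime_of_forall_prime {t : ℕ} {x : ℤ}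
    (h : ∀ p : ℕ, p.Prime → p ∣ t → ¬ (p : ℤ) ∣ x) : IsCoprime (t : ℤ) x := by
  rw [Int.isCoprime_iff_gcd_eq_one]
  exact Nat.coprime_of_dvd fun p hp hpt hpx ↦ h p hp hpt (Int.natCast_dvd.2 hpx)

/-- `traceSum t` is invariant up to cube roots of unity under `Γ₀(rad t)`. -/
lemma exists_traceSum_smul_eq {t : ℕ} (ht : 0 < t) (h3 : ¬ 3 ∣ t) {γ : SL(2, ℤ)}
    (hγ : ∀ p : ℕ, p.Prime → p ∣ t → (p : ℤ) ∣ γ 1 0) :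
    ∃ u : ℂ, u ^ 3 = 1 ∧ ∀ z, traceSum t (γ • z) = u * traceSum t z := by
  have hdet := γ.det_coe
  rw [Matrix.det_fin_two] at hdet
  have hco (b : ℕ) : 1 = Int.gcd (γ 0 0 + 3 * b * γ 1 0) t := by
    refine (Int.isCoprime_iff_gcd_eq_one.1
      (isCoprime_of_forall_prime fun p hp hpt h ↦ ?_).symm).symm
    have hc := hγ p hp hpt
    have h1 : (p : ℤ) ∣ γ 0 0 * γ 1 1 - γ 0 1 * γ 1 0 := by
      refine dvd_sub (dvd_mul_of_dvd_left ?_ _) (dvd_mul_of_dvd_right hc _)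
      exact (dvd_add_left (dvd_mul_of_dvd_right hc _)).1 h
    rw [hdet] at h1
    exact (Nat.prime_iff_prime_int.1 hp).not_dvd_one h1
  choose b' hA hb' using fun b : ℕ ↦ exists_cbrtJ_tri_smul γ ht h3 b (hco b) (one_mul t)
  refine ⟨_, multiplier_pow_three (t * multiplierExponent γ), fun z ↦ ?_⟩
  rw [traceSum, traceSum, mul_sum]
  have ht0 : (t : ℤ) ≠ 0 := by exact_mod_cast ht.ne'
  have hval (b : ℕ) : (((b' b % t).toNat : ℕ) : ℤ) = b' b % t :=
    Int.toNat_of_nonneg (Int.emod_nonneg _ ht0)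
  have hmaps : Set.MapsTo (fun b ↦ (b' b % t).toNat) (range t) (range t) := fun b _ ↦ by
    have := Int.emod_lt_of_pos (b' b) (by exact_mod_cast ht : (0 : ℤ) < t)
    simp only [coe_range, Set.mem_Iio]
    have := hval b
    omega
  have hinj : Set.InjOn (fun b ↦ (b' b % t).toNat) (range t) := by
    intro b₁ h₁ b₂ h₂ h
    obtain ⟨A₁, B₁, hA₁, hB₁⟩ := hA b₁
    obtain ⟨A₂, B₂, hA₂, hB₂⟩ := hA b₂
    obtain ⟨k, hk⟩ : (t : ℤ) ∣ b' b₁ - b' b₂ := by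
      refine Int.ModEq.dvd ?_
      rw [Int.ModEq, ← hval b₂, ← hval b₁]
      exact congrArg (Nat.cast : ℕ → ℤ) h.symm
    simp only [Nat.cast_one, mul_one] at hA₁ hA₂
    subst hA₁ hA₂
    have hcop : IsCoprime (t : ℤ) (3 * γ 1 0 * b' b₁ - γ 1 1) := by
      refine isCoprime_of_forall_prime fun p hp hpt h ↦ ?_
      have hc := hγ p hp hpt
      have hδ : (p : ℤ) ∣ γ 1 1 := by
        have := dvd_sub (dvd_mul_of_dvd_left (dvd_mul_of_dvd_right hc 3) (b' b₁)) h
        simpa using this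
      have h1 : (p : ℤ) ∣ γ 0 0 * γ 1 1 - γ 0 1 * γ 1 0 :=
        dvd_sub (dvd_mul_of_dvd_right hδ _) (dvd_mul_of_dvd_right hc _)
      rw [hdet] at h1
      exact (Nat.prime_iff_prime_int.1 hp).not_dvd_one h1
    have hcop3 : IsCoprime (t : ℤ) 3 := by
      refine Int.isCoprime_iff_gcd_eq_one.2 ?_
      exact ((Nat.Prime.coprime_iff_not_dvd Nat.prime_three).2 h3).symm
    have hdvd : (t : ℤ) ∣ (3 * γ 1 0 * b' b₁ - γ 1 1) * (3 * (b₁ - b₂)) := by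
      refine ⟨B₂ - B₁ - (γ 0 0 + 3 * b₂ * γ 1 0) * (3 * k), ?_⟩
      linear_combination hB₁ - hB₂ - (γ 0 0 + 3 * b₂ * γ 1 0) * 3 * hk
    have := hcop3.dvd_of_dvd_mul_left (hcop.dvd_of_dvd_mul_left hdvd)
    obtain ⟨l, hl⟩ := this
    simp only [coe_range, Set.mem_Iio] at h₁ h₂
    exact ((Int.natCast_modEq_iff.1 (Int.modEq_iff_dvd.2 ⟨l, hl⟩)).eq_of_lt_of_lt h₂ h₁).symm
  refine sum_nbij (fun b ↦ (b' b % t).toNat) hmaps hinj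
    (surjOn_of_injOn_of_card_le _ hmaps hinj le_rfl) fun b _ ↦ ?_
  rw [hb' b, hval]
  congr 1
  exact cbrtJ_tri_congr ht (Int.mod_modEq _ _).symm z

lemma three_mul_pos {t : ℕ} (ht : 0 < t) : (0 : ℝ) < 3 * t := by positivity

lemma X_pow_dvd_of_dvd_lower_left {t : ℕ} (ht : 0 < t) (h3 : ¬ 3 ∣ t) {γ : SL(2, ℤ)} {p : ℕ}
    (hp : p.Prime) (hpt : p ∣ t) (hpγ : (p : ℤ) ∣ γ 1 0) {K : ℍ → ℂ} {u : ℂ} {P : AlgInt⟦X⟧}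
    (hu : u ^ 3 = 1) (hK : ∀ z, traceSum t (γ • z) = u * K z)
    (hP : ∀ z : ℍ, EvalsTo P (qParam (3 * t) z) (K z * qParam (3 * t) z ^ t ^ 2))
    (hP0 : ∀ n < t ^ 2, P.coeff n ≠ 0 →
        ∃ b : ℤ, n + (Int.gcd (γ 0 0 + 3 * b * γ 1 0) t) ^ 2 = t ^ 2) : X ^ t ^ 2 ∣ P := by
  have hdet := γ.det_coe
  rw [Matrix.det_fin_two] at hdet
  have hu0 : u ≠ 0 := by
    rintro rfl
    simp at hu
  obtain ⟨w, hw⟩ : p ∣ ∏ q ∈ t.primeFactors, q :=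
    dvd_prod_of_mem _ (Nat.mem_primeFactors.2 ⟨hp, hpt, ht.ne'⟩)
  obtain ⟨u', hu', hu'K⟩ := exists_traceSum_smul_eq ht h3
    (γ := γ * ModularGroup.T ^ (w : ℤ) * γ⁻¹) fun q hq hqt ↦ by
      have hqr : (q : ℤ) ∣ p * w := by
        exact_mod_cast hw ▸ dvd_prod_of_mem _ (Nat.mem_primeFactors.2 ⟨hq, hqt, ht.ne'⟩)
      have : (q : ℤ) ∣ γ 1 0 * w := hqr.trans (mul_dvd_mul_right hpγ _)
      obtain ⟨l, hl⟩ := this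
      refine ⟨-l * γ 1 0, ?_⟩
      simp only [Matrix.SpecialLinearGroup.coe_mul, ModularGroup.coe_T_zpow,
        Matrix.SpecialLinearGroup.coe_inv, Matrix.adjugate_fin_two, Matrix.mul_apply,
        Fin.sum_univ_two]
      simp
      linear_combination (-γ 1 0) * hl
  have hKT (z : ℍ) : K (ModularGroup.T ^ (w : ℤ) • z) = u' * K z := by
    have := hu'K (γ • z)
    rw [← mul_smul, inv_mul_cancel_right, mul_smul, hK, hK] at this
    apply mul_left_cancel₀ hu0
    linear_combination this
  have hscale : P = P.rescale (rootOfUnity t w) := by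
    refine EvalsTo.unique (three_mul_pos ht) hP fun z ↦ EvalsTo.rescale ?_
    have h := hP
      (ModularGroup.T ^ (w : ℤ) • ModularGroup.T ^ (w : ℤ) • ModularGroup.T ^ (w : ℤ) • z)
    have hx : qParam (3 * t) (ModularGroup.T ^ (w : ℤ) • ModularGroup.T ^ (w : ℤ) •
        ModularGroup.T ^ (w : ℤ) • z : ℍ) = qParam t w * qParam (3 * t) z := by
      simp only [ModularGroup.coe_T_zpow_smul_eq]
      rw [qParam, qParam, qParam, ← Complex.exp_add]
      congr 1
      have ht' : (t : ℂ) ≠ 0 := by exact_mod_cast ht.ne'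
      push_cast
      field_simp
      ring
    rw [hx, hKT, hKT, hKT] at h
    rw [algebraMap_rootOfUnity, Int.cast_natCast]
    convert h using 1
    have h1 : qParam t (w : ℤ) ^ t ^ 2 = 1 := by
      rw [pow_two, pow_mul, qParam_natCast_pow_eq_one, one_pow]
    rw [Int.cast_natCast] at h1
    rw [mul_pow, h1]
    linear_combination (- K z * qParam (3 * t) z ^ t ^ 2) * hu'
  rw [X_pow_dvd_iff]
  intro n hn
  by_contra h0
  obtain ⟨b, hb⟩ := hP0 n hn h0
  have hn1 : rootOfUnity t (n * w) = 1 := by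
    rw [rootOfUnity_natCast_mul]
    apply mul_right_cancel₀ h0
    rw [one_mul, ← coeff_rescale, ← hscale]
  rw [rootOfUnity_eq_one_iff ht] at hn1
  have hpn : p ∣ n := by
    have hw0 : 0 < w := by
      refine Nat.pos_of_ne_zero ?_
      rintro rfl
      rw [mul_zero] at hw
      exact (Finset.prod_pos fun q hq ↦ (Nat.prime_of_mem_primeFactors hq).pos).ne' hw
    refine Nat.dvd_of_mul_dvd_mul_right hw0 ?_
    rw [← hw]
    exact (Nat.prod_primeFactors_dvd t).trans (by exact_mod_cast hn1)
  have hpg : p ∣ Int.gcd (γ 0 0 + 3 * b * γ 1 0) t := by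
    refine hp.dvd_of_dvd_pow (n := 2) ((Nat.dvd_add_right hpn).1 ?_)
    rw [hb]
    exact dvd_pow hpt two_ne_zero
  have h1 : (p : ℤ) ∣ γ 0 0 :=
    (dvd_add_left (dvd_mul_of_dvd_right hpγ _)).1
      ((Int.natCast_dvd_natCast.2 hpg).trans (Int.gcd_dvd_left _ _))
  have h2 : (p : ℤ) ∣ 1 := hdet ▸
    dvd_sub (dvd_mul_of_dvd_left h1 _) (dvd_mul_of_dvd_right hpγ _)
  exact (Nat.prime_iff_prime_int.1 hp).not_dvd_one h2

end TraceSum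
end PartitionParity

namespace PartitionParity

open UpperHalfPlane Function.Periodic PowerSeries Finset
open scoped Manifold MatrixGroups ModularForm

section LevelOne

lemma cbrtJ_smul_pow_three (γ : SL(2, ℤ)) (z : ℍ) : cbrtJ (γ • z) ^ 3 = cbrtJ z ^ 3 := by
  rw [cbrtJ_smul, mul_pow, multiplier_pow_three, one_mul]

/-- An `SL(2, ℤ)`-invariant function with a convergent `q`-expansion is constant. -/
lemma exists_eq_const_of_invariant {R : Type*} [CommRing R] [Algebra R ℂ] {h : ℝ} (hh : 0 < h)
    {e : ℍ → ℂ} (he : ∀ (γ : SL(2, ℤ)) z, e (γ • z) = e z) {P : R⟦X⟧}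
    (hP : ∀ z : ℍ, EvalsTo P (qParam h z) (e z)) : ∃ c, ∀ z, e z = c := by
  have hslash (γ : SL(2, ℤ)) : e ∣[(0 : ℤ)] γ = e := by
    ext z
    rw [ModularForm.SL_slash_apply, he]
    simp
  let f : ModularForm 𝒮ℒ 0 :=
    { toFun := e
      slash_action_eq' := fun _ ⟨γ, hγ⟩ ↦ hγ ▸ hslash γ
      holo' := EvalsTo.mdifferentiable hh hP
      bdd_at_cusps' {c} hc := by
        rw [Subgroup.IsArithmetic.isCusp_iff_isCusp_SL2Z] at hc
        rw [OnePoint.isBoundedAt_iff_forall_SL2Z hc]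
        intro γ _
        rw [hslash γ]
        exact isBoundedAtImInfty_of_hasSum_qExpansion hh hP }
  obtain ⟨c, hc⟩ := ModularFormClass.levelOne_weight_zero_const f
  exact ⟨c, congrFun hc⟩

lemma qParam_T_smul {n : ℕ} (z : ℍ) :
    qParam n (ModularGroup.T • z : ℍ) = algebraMap AlgInt ℂ (rootOfUnity n 1) * qParam n z := by
  rw [algebraMap_rootOfUnity, ← qParam_add, modular_T_smul]
  simp

/-- The `q`-expansion of the `j`-function, in a power of the local parameter. -/
lemma exists_evalsTo_cbrtJ_pow_three {t : ℕ} (ht : 0 < t) : ∃ J : AlgInt⟦X⟧, J.coeff 0 = 1 ∧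
    ∀ z : ℍ, EvalsTo J (qParam t z) (cbrtJ z ^ 3 * qParam t z ^ t) := by
  refine ⟨((cbrtJSeries.map (Int.castRingHom AlgInt)) ^ 3).expand t ht.ne', ?_, fun z ↦ ?_⟩
  · have h : constantCoeff (cbrtJSeries.map (Int.castRingHom AlgInt)) = 1 := by
      rw [← coeff_zero_eq_constantCoeff_apply, coeff_map, constantCoeff_cbrtJSeries, map_one]
    simp [h]
  · have hq : qParam t z ^ t = qParam 1 z :=
      qParam_pow (by simp) (by exact_mod_cast ht.ne') z
    have h3 : qParam 3 z ^ 3 = qParam 1 z := qParam_pow (by norm_num) (by norm_num) z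
    refine EvalsTo.expand _ ?_
    rw [hq, ← h3, ← mul_pow, h3]
    exact ((evalsTo_cbrtJSeries z).map _ (RingHom.ext_int _ _)).pow 3

/-- If the polar part of the `q`-expansion of an `SL(2, ℤ)`-invariant function has coefficients
in an ideal, then so does the whole `q`-expansion. -/
theorem coeff_mem_of_invariant {t : ℕ} (ht : 0 < t) (I : Ideal AlgInt) {e : ℍ → ℂ}
    (he : ∀ (γ : SL(2, ℤ)) z, e (γ • z) = e z) {P : AlgInt⟦X⟧} {M : ℕ}
    (hP : ∀ z : ℍ, EvalsTo P (qParam t z) (e z * qParam t z ^ M))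
    (hI : ∀ m ≤ M, P.coeff m ∈ I) (n : ℕ) : P.coeff n ∈ I := by
  have ht' : (0 : ℝ) < t := by exact_mod_cast ht
  suffices ∀ j m, m + j = M → ∀ (e : ℍ → ℂ) (P : AlgInt⟦X⟧),
      (∀ (γ : SL(2, ℤ)) z, e (γ • z) = e z) →
      (∀ z : ℍ, EvalsTo P (qParam t z) (e z * qParam t z ^ M)) →
      (∀ m ≤ M, P.coeff m ∈ I) → (∀ i < m, P.coeff i = 0) → ∀ n, P.coeff n ∈ I from
    this M 0 (zero_add M) e P he hP hI (by simp) n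
  intro j
  induction j with
  | zero =>
    rintro m rfl e P he hP hI h0 n
    obtain ⟨P', rfl⟩ := X_pow_dvd_iff.2 h0
    have hP' (z : ℍ) : EvalsTo P' (qParam t z) (e z) := (hP z).of_X_pow_mul (qParam_ne_zero _) _
    obtain ⟨c, hc⟩ := exists_eq_const_of_invariant ht' he hP'
    have hmap : P'.map (algebraMap AlgInt ℂ) = C c :=
      by
      refine EvalsTo.unique ht' (f := fun _ ↦ c) (fun z ↦ ?_) fun z ↦ EvalsTo.const c _
      exact hc z ▸ (hP' z).map _ (RingHom.id_comp _)
    rw [coeff_X_pow_mul']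
    split_ifs with hn
    · rcases hn.eq_or_lt with rfl | hlt
      · simpa [coeff_X_pow_mul'] using hI m le_rfl
      · have := congrArg (coeff (n - m)) hmap
        rw [coeff_map, coeff_C, if_neg (by omega)] at this
        rw [(FaithfulSMul.algebraMap_eq_zero_iff AlgInt ℂ).1 this]
        exact I.zero_mem
    · exact I.zero_mem
  | succ j ih =>
    rintro m hm e P he hP hI h0
    have hnext (hcoeff : P.coeff m = 0) : ∀ i < m + 1, P.coeff i = 0 := fun i hi ↦ by
      rcases Nat.lt_succ_iff_lt_or_eq.1 hi with h | rfl
      exacts [h0 i h, hcoeff]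
    by_cases ha : P.coeff m = 0
    · exact ih (m + 1) (by omega) e P he hP hI (hnext ha)
    have hscale : P.rescale (rootOfUnity t 1) = C (rootOfUnity t 1 ^ M) * P := by
      refine EvalsTo.unique ht' (f := fun z ↦ qParam t z ^ M * e z * qParam t 1 ^ M)
        (fun z ↦ EvalsTo.rescale ?_) fun z ↦ ?_
      · have := hP (ModularGroup.T • z)
        rw [he, qParam_T_smul] at this
        convert this using 1
        rw [algebraMap_rootOfUnity, Int.cast_one]
        ring
      · convert (EvalsTo.const (rootOfUnity t 1 ^ M) _).mul (hP z) using 1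
        rw [map_pow, algebraMap_rootOfUnity, Int.cast_one]
        ring
    have hu : rootOfUnity t (j + 1 : ℕ) = 1 := by
      have h1 := congrArg (coeff m) hscale
      rw [coeff_rescale, coeff_C_mul, ← hm, pow_add] at h1
      have hζ : rootOfUnity t 1 ≠ 0 := fun h ↦ by
        have := qParam_natCast_pow_eq_one t 1
        rw [← algebraMap_rootOfUnity, h, map_zero, zero_pow ht.ne'] at this
        exact zero_ne_one this
      rw [← mul_one ((j + 1 : ℕ) : ℤ), rootOfUnity_natCast_mul]
      apply mul_left_cancel₀ (mul_ne_zero (pow_ne_zero m hζ) ha)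
      linear_combination -h1
    obtain ⟨s, hs⟩ : t ∣ j + 1 := Int.natCast_dvd_natCast.1 ((rootOfUnity_eq_one_iff ht).1 hu)
    obtain ⟨J, hJ0, hJ⟩ := exists_evalsTo_cbrtJ_pow_three ht
    set a := P.coeff m with hadef
    have haI (n : ℕ) : (C a * (X ^ m * J ^ s)).coeff n ∈ I := by
      rw [coeff_C_mul]
      exact I.mul_mem_right _ (hI m (by omega))
    have key := ih (m + 1) (by omega) (fun z ↦ e z - algebraMap AlgInt ℂ a * (cbrtJ z ^ 3) ^ s)
      (P - C a * (X ^ m * J ^ s)) ?_ ?_ ?_ ?_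
    · intro n
      have := I.add_mem (key n) (haI n)
      simpa using this
    · intro γ z
      rw [he, cbrtJ_smul_pow_three]
    · intro z
      convert (hP z).sub ((EvalsTo.const a _).mul ((EvalsTo.X_pow m _).mul ((hJ z).pow s))) using 1
      rw [← hm, hs, pow_add, pow_mul, mul_pow]
      ring
    · intro i hi
      rw [map_sub]
      exact I.sub_mem (hI i hi) (haI i)
    · intro i hi
      rw [map_sub, coeff_C_mul, coeff_X_pow_mul']
      rcases Nat.lt_succ_iff_lt_or_eq.1 hi with h | rfl
      · rw [h0 i h, if_neg (by omega)]
        simp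
      · simp only [coeff_zero_eq_constantCoeff] at hJ0
        simp [hJ0, hadef]

end LevelOne
end PartitionParity

namespace PartitionParity

open UpperHalfPlane Function.Periodic PowerSeries Finset
open scoped Manifold MatrixGroups

section Reduction

lemma exists_ringHom_charP_two :
    ∃ (k : Type) (_ : Field k) (_ : CharP k 2), Nonempty (AlgInt →+* k) := by
  have : (Ideal.span {(2 : ℤ)}).IsMaximal :=
    PrincipalIdealRing.isMaximal_of_irreducible Int.prime_two.irreducible
  obtain ⟨I, hI, hI2⟩ := Ideal.exists_ideal_over_maximal_of_isIntegral (S := AlgInt)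
    (Ideal.span {(2 : ℤ)}) (by
      rw [(RingHom.injective_iff_ker_eq_bot _).1 (FaithfulSMul.algebraMap_injective ℤ AlgInt)]
      exact bot_le)
  let _ : Field (AlgInt ⧸ I) := Ideal.Quotient.field I
  have h2 : (2 : AlgInt ⧸ I) = 0 := by
    have : algebraMap ℤ AlgInt 2 ∈ I := by
      rw [← Ideal.mem_comap, hI2]
      exact Ideal.mem_span_singleton_self 2
    rw [map_ofNat] at this
    exact Ideal.Quotient.eq_zero_iff_mem.2 this
  exact ⟨AlgInt ⧸ I, inferInstance, CharTwo.of_one_ne_zero_of_two_eq_zero one_ne_zero h2,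
    ⟨Ideal.Quotient.mk I⟩⟩

variable {k : Type*} [Field k]

lemma coeff_map_cbrtJSeries_ne_zero_iff [CharP k 2] (m : ℕ) :
    ((cbrtJSeries.coeff m : ℤ) : k) ≠ 0 ↔ ∃ n, m = 8 * n ∧ Odd (partitionFn n) := by
  have hm := congrArg (coeff m) (map_cbrtJSeries (k := k))
  rw [coeff_map, eq_intCast] at hm
  have hodd (n : ℕ) : (partitionFn n : k) ≠ 0 ↔ Odd (partitionFn n) := by
    rw [Ne, CharP.cast_eq_zero_iff k 2, ← even_iff_two_dvd, Nat.not_even_iff_odd]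
  rw [hm]
  constructor
  · intro h
    by_cases h8 : 8 ∣ m
    · obtain ⟨n, rfl⟩ := h8
      refine ⟨n, rfl, (hodd n).1 ?_⟩
      simpa [coeff_expand_mul, partitionSeries] using h
    · simp [coeff_expand_of_not_dvd, h8] at h
  · rintro ⟨n, rfl, hn⟩
    simpa [coeff_expand_mul, partitionSeries] using (hodd n).2 hn

lemma dvd_three_mul_sub_one_iff {t δ n : ℕ} (hco : Nat.Coprime t 6) (hδt : δ < t)
    (hδ : 24 * δ % t = 1 % t) : (t : ℤ) ∣ 3 * (8 * n : ℕ) - 1 ↔ ∃ m, n = t * m + δ := by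
  obtain ⟨l, hl⟩ : (t : ℤ) ∣ 24 * δ - 1 := by
    have := (Int.natCast_modEq_iff.2 (show 24 * δ ≡ 1 [MOD t] from hδ)).symm.dvd
    exact_mod_cast this
  have hcop : IsCoprime (t : ℤ) 24 := by
    rw [Int.isCoprime_iff_gcd_eq_one]
    have := (hco.pow_right 3)
    exact this.coprime_dvd_right (by norm_num)
  constructor
  · rintro ⟨w, hw⟩
    have h1 : (t : ℤ) ∣ 24 * (n - δ) := ⟨w - l, by push_cast at hw; linear_combination hw - hl⟩
    have h2 : δ ≡ n [MOD t] :=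
      Int.natCast_modEq_iff.1 (Int.modEq_iff_dvd.2 (hcop.dvd_of_dvd_mul_left h1))
    refine ⟨n / t, ?_⟩
    rw [Nat.ModEq, Nat.mod_eq_of_lt hδt] at h2
    rw [h2, Nat.div_add_mod]
  · rintro ⟨m, rfl⟩
    refine ⟨l + 24 * m, ?_⟩
    push_cast
    linear_combination hl

/-- The reduction modulo two of the `q`-expansion of `traceSum` has coefficients `p (t * m + δ)`. -/
lemma coeff_map_traceSum_ne_zero_iff [CharP k 2] (φ : AlgInt →+* k) {t δ : ℕ}
    (hco : Nat.Coprime t 6) (hδt : δ < t) (hδ : 24 * δ % t = 1 % t) {P : AlgInt⟦X⟧}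
    (hP0 : ∀ n, P.coeff n ≠ 0 → ∃ m, n + 1 = t ^ 2 + 3 * m)
    (hPc : ∀ m n, n + 1 = t ^ 2 + 3 * m → P.coeff n =
        (if (t : ℤ) ∣ 3 * m - 1 then (t : AlgInt) else 0) * (cbrtJSeries.coeff m : ℤ)) (n : ℕ) :
    (P.map φ).coeff n ≠ 0 ↔
      ∃ m, n + 1 = t ^ 2 + 24 * (t * m + δ) ∧ Odd (partitionFn (t * m + δ)) := by
  have htk : (t : k) ≠ 0 := by
    rw [Ne, CharP.cast_eq_zero_iff k 2]
    intro h2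
    have := Nat.dvd_gcd h2 (by norm_num : 2 ∣ 6)
    rw [hco.gcd_eq_one] at this
    norm_num at this
  rw [coeff_map]
  constructor
  · intro h
    obtain ⟨m, hm⟩ := hP0 n fun h0 ↦ h (by rw [h0, map_zero])
    rw [hPc m n hm, map_mul, map_intCast] at h
    obtain ⟨l, rfl, hl⟩ := (coeff_map_cbrtJSeries_ne_zero_iff m).1 (right_ne_zero_of_mul h)
    split_ifs at h with hdvd
    · obtain ⟨m, rfl⟩ := (dvd_three_mul_sub_one_iff hco hδt hδ).1 hdvd
      exact ⟨m, by omega, hl⟩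
    · simp at h
  · rintro ⟨m, hm, hodd⟩
    rw [hPc (8 * (t * m + δ)) n (by omega),
      if_pos ((dvd_three_mul_sub_one_iff hco hδt hδ).2 ⟨m, rfl⟩), map_mul, map_natCast, map_intCast]
    exact mul_ne_zero htk ((coeff_map_cbrtJSeries_ne_zero_iff _).2 ⟨_, rfl, hodd⟩)

/-- An `SL(2, ℤ)`-stable finite set of functions: the orders of vanishing of the reductions of
their `q`-expansions are bounded on average by the order of the pole. -/
theorem sum_order_le {t : ℕ} (ht : 0 < t) (φ : AlgInt →+* k) {O : Finset (ℍ → ℂ)}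
    (hO : ∀ f ∈ O, ∀ γ : SL(2, ℤ), (fun z ↦ f (γ • z)) ∈ O) {P : (ℍ → ℂ) → AlgInt⟦X⟧} {N : ℕ}
    (hP : ∀ f ∈ O, ∀ z : ℍ, EvalsTo (P f) (qParam t z) (f z * qParam t z ^ N))
    {n : (ℍ → ℂ) → ℕ} {B : Finset (ℍ → ℂ)} (hB : ∀ f, f ∈ B ↔ f ∈ O ∧ (P f).map φ ≠ 0)
    (hn : ∀ f ∈ B, X ^ n f ∣ (P f).map φ) : ∑ f ∈ B, n f ≤ #B * N := by
  classical
  by_contra! hlt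
  set Q := ∑ S ∈ O.powersetCard #B, ∏ f ∈ S, P f with hQ
  have hQB : Q.map φ = ∏ f ∈ B, (P f).map φ := by
    rw [hQ, map_sum, sum_eq_single B]
    · rw [map_prod]
    · intro S hS hSB
      obtain ⟨hSO, hcard⟩ := mem_powersetCard.1 hS
      have : ¬ S ⊆ B := fun h ↦ hSB (eq_of_subset_of_card_le h hcard.ge)
      obtain ⟨f, hfS, hfB⟩ := not_subset.1 this
      rw [map_prod]
      refine prod_eq_zero hfS ?_
      by_contra h0
      exact hfB ((hB f).2 ⟨hSO hfS, h0⟩)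
    · intro h
      exact absurd (mem_powersetCard.2 ⟨fun f hf ↦ ((hB f).1 hf).1, rfl⟩) h
  have hdvd : X ^ (∑ f ∈ B, n f) ∣ Q.map φ := by
    rw [hQB, ← prod_pow_eq_pow_sum]
    exact prod_dvd_prod_of_dvd _ _ hn
  have hQ0 : Q.map φ ≠ 0 := by
    rw [hQB]
    exact prod_ne_zero_iff.2 fun f hf ↦ ((hB f).1 hf).2
  refine hQ0 (PowerSeries.ext fun m ↦ ?_)
  rw [coeff_map, map_zero]
  refine coeff_mem_of_invariant ht (RingHom.ker φ) (P := Q) (M := #B * N)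
    (e := fun z ↦ ∑ S ∈ O.powersetCard #B, ∏ f ∈ S, f z) (fun γ z ↦ ?_) (fun z ↦ ?_)
    (fun i hi ↦ ?_) m
  · have himage : O.image (fun f z ↦ f (γ • z)) = O := by
      refine eq_of_subset_of_card_le (image_subset_iff.2 fun f hf ↦ hO f hf γ) ?_
      rw [card_image_of_injective]
      intro f g h
      ext z
      simpa using congrFun h (γ⁻¹ • z)
    simp only [← esymm_map_val]
    conv_rhs => rw [← himage, image_val_of_injOn (by
      intro f _ g _ h
      ext z
      simpa using congrFun h (γ⁻¹ • z)), Multiset.map_map]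
    rfl
  · rw [sum_mul]
    refine EvalsTo.sum _ fun S hS ↦ ?_
    obtain ⟨hSO, hcard⟩ := mem_powersetCard.1 hS
    convert EvalsTo.prod S fun f hf ↦ hP f (hSO hf) z using 1
    rw [prod_mul_distrib, prod_const, hcard, ← pow_mul, mul_comm N]
  · rw [RingHom.mem_ker, ← coeff_map]
    exact X_pow_dvd_iff.1 hdvd i (hi.trans_lt hlt)

end Reduction
end PartitionParity

namespace PartitionParity

open UpperHalfPlane Function.Periodic PowerSeries Finset
open scoped Manifold MatrixGroups

section Orbit

/-- The cube of `traceSum`, composed with the action of `γ`. -/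
noncomputable def traceSumCube (t : ℕ) (γ : SL(2, ℤ)) (z : ℍ) : ℂ := traceSum t (γ • z) ^ 3

lemma traceSumCube_mul {t : ℕ} (ht : 0 < t) (h3 : ¬ 3 ∣ t) {γ γ' : SL(2, ℤ)}
    (hγ : ∀ p : ℕ, p.Prime → p ∣ t → (p : ℤ) ∣ γ 1 0) :
    traceSumCube t (γ * γ') = traceSumCube t γ' := by
  obtain ⟨u, hu, h⟩ := exists_traceSum_smul_eq ht h3 hγ
  ext z
  rw [traceSumCube, traceSumCube, mul_smul, h, mul_pow, hu, one_mul]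

/-- The products `S * T ^ j` represent all the cusps whose denominators are coprime to `t`. -/
lemma exists_traceSumCube_eq {t : ℕ} (ht : 0 < t) (h3 : ¬ 3 ∣ t) {γ : SL(2, ℤ)}
    (hγ : ∀ p : ℕ, p.Prime → p ∣ t → ¬ (p : ℤ) ∣ γ 1 0) :
    ∃ j ∈ range (∏ p ∈ t.primeFactors, p),
      traceSumCube t γ = traceSumCube t (ModularGroup.S * ModularGroup.T ^ (j : ℤ)) := by
  set r := ∏ p ∈ t.primeFactors, p with hr
  have hr0 : 0 < r := prod_pos fun p hp ↦ (Nat.prime_of_mem_primeFactors hp).pos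
  have hcop : IsCoprime (r : ℤ) (γ 1 0) := isCoprime_of_forall_prime fun p hp hpr ↦
    hγ p hp (hpr.trans (Nat.prod_primeFactors_dvd t))
  obtain ⟨u, v, huv⟩ := hcop
  have hval : (((v * γ 1 1 % r).toNat : ℕ) : ℤ) = v * γ 1 1 % r :=
    Int.toNat_of_nonneg (Int.emod_nonneg _ (by exact_mod_cast hr0.ne'))
  refine ⟨(v * γ 1 1 % r).toNat, ?_, ?_⟩
  · have := Int.emod_lt_of_pos (v * γ 1 1) (by exact_mod_cast hr0 : (0 : ℤ) < r)
    rw [mem_range]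
    omega
  · rw [hval]
    set j := v * γ 1 1 % r with hj
    have hmod : v * γ 1 1 = r * (v * γ 1 1 / r) + j := (Int.mul_ediv_add_emod _ _).symm
    have hγ' : γ * ModularGroup.T ^ (-j) * ModularGroup.S⁻¹ *
        (ModularGroup.S * ModularGroup.T ^ j) = γ := by group
    conv_lhs => rw [← hγ']
    refine traceSumCube_mul ht h3 fun p hp hpt ↦ ?_
    have hpr : (p : ℤ) ∣ r := Int.natCast_dvd_natCast.2
      (dvd_prod_of_mem _ (Nat.mem_primeFactors.2 ⟨hp, hpt, ht.ne'⟩))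
    refine hpr.trans ⟨-u * γ 1 1 - v * γ 1 1 / r * γ 1 0, ?_⟩
    simp only [Matrix.SpecialLinearGroup.coe_mul, ModularGroup.coe_T_zpow,
      Matrix.SpecialLinearGroup.coe_inv, ModularGroup.coe_S, Matrix.adjugate_fin_two,
      Matrix.mul_apply, Fin.sum_univ_two]
    simp
    linear_combination -γ 1 0 * hmod + γ 1 1 * huv

lemma exists_evalsTo_traceSumCube {t : ℕ} (ht : 0 < t) (h3 : ¬ 3 ∣ t) (γ : SL(2, ℤ)) :
    ∃ P : AlgInt⟦X⟧,
      (∀ z : ℍ, EvalsTo P (qParam (3 * t) z)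
        (traceSumCube t γ z * qParam (3 * t) z ^ (3 * t ^ 2))) ∧
      ((∃ p : ℕ, p.Prime ∧ p ∣ t ∧ (p : ℤ) ∣ γ 1 0) → X ^ (3 * t ^ 2) ∣ P) := by
  obtain ⟨K, u, P, hu, hK, hP, hP0⟩ := exists_evalsTo_traceSum_smul ht h3 γ
  refine ⟨P ^ 3, fun z ↦ ?_, fun ⟨p, hp, hpt, hpγ⟩ ↦ ?_⟩
  · convert (hP z).pow 3 using 1
    rw [traceSumCube, hK, mul_pow, hu]
    ring
  · rw [mul_comm 3, pow_mul]
    exact pow_dvd_pow_of_dvd (X_pow_dvd_of_dvd_lower_left ht h3 hp hpt hpγ hu hK hP hP0) 3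

lemma finite_range_traceSumCube {t : ℕ} (ht : 0 < t) (h3 : ¬ 3 ∣ t) :
    (Set.range (traceSumCube t)).Finite := by
  have : NeZero t := ⟨ht.ne'⟩
  let g : SL(2, ℤ) ⧸ CongruenceSubgroup.Gamma0 t → ℍ → ℂ :=
    Quotient.lift (fun γ ↦ traceSumCube t γ⁻¹) fun γ γ' h ↦ by
      have h0 : γ⁻¹ * γ' ∈ CongruenceSubgroup.Gamma0 t := QuotientGroup.leftRel_apply.1 h
      have h1 : (t : ℤ) ∣ (γ⁻¹ * γ') 1 0 :=
        (ZMod.intCast_zmod_eq_zero_iff_dvd _ t).1 (CongruenceSubgroup.Gamma0_mem.1 h0)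
      rw [← traceSumCube_mul ht h3 (γ' := γ'⁻¹) fun p _ hpt ↦
        (Int.natCast_dvd_natCast.2 hpt).trans h1,
        mul_inv_cancel_right]
  refine (Set.finite_range g).subset ?_
  rintro _ ⟨γ, rfl⟩
  exact ⟨QuotientGroup.mk γ⁻¹, by
    change traceSumCube t γ⁻¹⁻¹ = _
    rw [inv_inv]⟩

end Orbit

/-- The first odd value of the partition function in the progression `t * m + δ` occurs early. -/
theorem twenty_four_mul_le {t δ m : ℕ} (ht : 0 < t) (hco : Nat.Coprime t 6) (hδt : δ < t)
    (hδ : 24 * δ % t = 1 % t) (hm : Odd (partitionFn (t * m + δ)))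
    (hmin : ∀ m', Odd (partitionFn (t * m' + δ)) → m ≤ m') :
    24 * (t * m + δ) ≤ t ^ 2 * ∏ p ∈ t.primeFactors, p + 1 := by
  classical
  have h3 : ¬ 3 ∣ t := fun h ↦ by
    have := Nat.dvd_gcd h (by norm_num : 3 ∣ 6)
    rw [hco.gcd_eq_one] at this
    norm_num at this
  obtain ⟨k, _, _, ⟨φ⟩⟩ := exists_ringHom_charP_two
  obtain ⟨G, hG, hG0, hGc⟩ := exists_evalsTo_traceSum ht
  have hcoeff := coeff_map_traceSum_ne_zero_iff φ hco hδt hδ hG0 hGc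
  set r := ∏ p ∈ t.primeFactors, p with hr
  set F := traceSumCube t 1 with hF
  set S := (range r).image
    fun j : ℕ ↦ traceSumCube t (ModularGroup.S * ModularGroup.T ^ (j : ℤ)) with hS
  set O := (finite_range_traceSumCube ht h3).toFinset with hOdef
  have hO (f : ℍ → ℂ) : f ∈ O ↔ ∃ γ, traceSumCube t γ = f := by simp [hOdef]
  have hclass (f : ℍ → ℂ) (hf : f ∈ O) : ∃ P : AlgInt⟦X⟧,
      (∀ z : ℍ, EvalsTo P (qParam (3 * t) z) (f z * qParam (3 * t) z ^ (3 * t ^ 2))) ∧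
      (f ∉ insert F S → X ^ (3 * t ^ 2) ∣ P) := by
    obtain ⟨γ, rfl⟩ := (hO f).1 hf
    obtain ⟨P, hP, hPγ⟩ := exists_evalsTo_traceSumCube ht h3 γ
    refine ⟨P, hP, fun hγ ↦ hPγ ?_⟩
    by_contra! hne
    obtain ⟨j, hj, hjγ⟩ := exists_traceSumCube_eq ht h3 hne
    exact hγ (mem_insert_of_mem (mem_image.2 ⟨j, hj, hjγ.symm⟩))
  choose! P hP hPdvd using hclass
  have hFO : F ∈ O := (hO F).2 ⟨1, rfl⟩
  have ht3 : (0 : ℝ) < 3 * t := three_mul_pos ht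
  have hPF : P F = G ^ 3 := by
    refine EvalsTo.unique ht3 (f := fun z ↦ F z * qParam (3 * t) z ^ (3 * t ^ 2)) (hP F hFO)
      fun z ↦ ?_
    convert (hG z).pow 3 using 1
    rw [hF, traceSumCube, one_smul]
    ring
  set B := {f ∈ O | (P f).map φ ≠ 0} with hB
  have hn0 : (G.map φ).coeff (t ^ 2 + 24 * (t * m + δ) - 1) ≠ 0 :=
    (hcoeff _).2 ⟨m, Nat.sub_add_cancel (by nlinarith [pow_pos ht 2]), hm⟩
  have hFB : F ∈ B := by
    refine mem_filter.2 ⟨hFO, ?_⟩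
    rw [hPF, map_pow]
    refine pow_ne_zero 3 fun h ↦ hn0 ?_
    rw [h, map_zero]
  set n : (ℍ → ℂ) → ℕ := fun f ↦ if f = F then 3 * (t ^ 2 + 24 * (t * m + δ) - 1) else
    if f ∈ S then 0 else 3 * t ^ 2 with hn
  have hle := sum_order_le (t := 3 * t) (by positivity) φ (O := O) (P := P) (N := 3 * t ^ 2)
    (n := n) (B := B) (fun f hf γ ↦ ?_) (fun f hf z ↦ ?_) (fun f ↦ mem_filter) fun f hf ↦ ?_
  · have hlow : n F + ∑ f ∈ B \ insert F S, 3 * t ^ 2 ≤ ∑ f ∈ B, n f := by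
      rw [← add_sum_erase B n hFB]
      refine Nat.add_le_add_left ?_ _
      calc ∑ f ∈ B \ insert F S, 3 * t ^ 2 = ∑ f ∈ B \ insert F S, n f := by
            refine sum_congr rfl fun f hf ↦ ?_
            obtain ⟨-, hf⟩ := mem_sdiff.1 hf
            rw [mem_insert, not_or] at hf
            simp [hn, hf.1, hf.2]
        _ ≤ ∑ f ∈ B.erase F, n f := by
            refine sum_le_sum_of_subset fun f hf ↦ ?_
            obtain ⟨hfB, hf⟩ := mem_sdiff.1 hf
            exact mem_erase.2 ⟨fun h ↦ hf (h ▸ mem_insert_self F S), hfB⟩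
    have hcard : #B ≤ #(B \ insert F S) + (r + 1) := by
      have h1 : #B ≤ #(B \ insert F S) + #(insert F S) := by
        rw [card_sdiff_add_card]
        exact card_le_card subset_union_left
      have h2 : #(insert F S) ≤ r + 1 :=
        (card_insert_le _ _).trans (by simpa using (card_image_le (s := range r)))
      omega
    rw [sum_const, smul_eq_mul] at hlow
    have hnF : n F = 3 * (t ^ 2 + 24 * (t * m + δ) - 1) := if_pos rfl
    have h1 := (hlow.trans hle).trans (Nat.mul_le_mul_right _ hcard)
    rw [add_mul, add_comm, add_le_add_iff_left, hnF] at h1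
    have h2 : t ^ 2 + 24 * (t * m + δ) - 1 ≤ (r + 1) * t ^ 2 := by linarith
    rw [add_mul] at h2
    rw [mul_comm (t ^ 2)]
    omega
  · obtain ⟨γ', rfl⟩ := (hO f).1 hf
    refine (hO _).2 ⟨γ' * γ, ?_⟩
    ext z
    rw [traceSumCube, traceSumCube, mul_smul]
  · rw [Nat.cast_mul, Nat.cast_ofNat]
    exact hP f hf z
  · have hfO := (mem_filter.1 hf).1
    simp only [hn]
    split_ifs with hfF hfS
    · rw [hfF, hPF, map_pow, mul_comm 3, pow_mul]
      refine pow_dvd_pow_of_dvd (X_pow_dvd_iff.2 fun i hi ↦ ?_) 3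
      by_contra h0
      obtain ⟨m', hm', hodd⟩ := (hcoeff i).1 h0
      have := Nat.mul_le_mul_left t (hmin m' hodd)
      omega
    · simp
    · have := map_dvd (PowerSeries.map φ) (hPdvd f hfO (by simp [hfF, hfS]))
      simpa using this

end PartitionParity

/-- For t coprime to 6 and 0 < δ_t < t with 24δ_t ≡ 1 (mod t): if some
p(tm + δ_t) is odd then the smallest such m satisfies
m < (t/24)·∏_{p ∣ t prime} p, i.e. 24m < t·∏_{p ∣ t prime} p. -/
theorem smallest_odd_bound_general (t δ : ℕ) (ht : 0 < t)
    (hco : Nat.Coprime t 6) (hδ0 : 0 < δ) (hδt : δ < t)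
    (hδ : 24 * δ % t = 1 % t)
    (h : ∃ m : ℕ, Odd (partitionFn (t * m + δ))) :
    ∃ m : ℕ, Odd (partitionFn (t * m + δ)) ∧
      (∀ m' : ℕ, Odd (partitionFn (t * m' + δ)) → m ≤ m') ∧
      24 * m < t * ∏ p ∈ t.primeFactors, p := by
  classical
  refine ⟨Nat.find h, Nat.find_spec h, fun m' ↦ Nat.find_min' h, ?_⟩
  have hle := PartitionParity.twenty_four_mul_le ht hco hδt hδ (Nat.find_spec h)
    fun m' ↦ Nat.find_min' h
  refine Nat.lt_of_mul_lt_mul_left (a := t) ?_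
  nlinarith
end
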